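/- arXiv:1806.06389 — 2 statements merged into one kernel-verified Lean document; each statement's English description precedes it below -/
import Mathlib

section
/- Let d ≥ 1 and let γ be the standard Gaussian measure on ℝ^d. Let μ be a centered probability measure on ℝ^d and ν a probability measure on ℝ^d, both with finite second moment and finite relative entropy with respect to γ. If equality holds in the symmetrized Talagrand inequality, i.e. W₂(μ, ν)² = 2 Ent_γ(μ) + 2 Ent_γ(ν), then there exists a symmetric positive definite d×d matrix A and a point m ∈ ℝ^d such that μ is the centered Gaussian measure with covariance matrix A and ν is the Gaussian measure with mean m and covariance matrix A⁻¹. -/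
open MeasureTheory ENNReal
open scoped RealInnerProductSpace

/-- The standard Gaussian measure on `ℝ^d`, with density
`(2π)^{-d/2} exp(-|x|²/2)` with respect to Lebesgue measure. -/
noncomputable def stdGaussian (d : ℕ) : Measure (EuclideanSpace ℝ (Fin d)) :=
  volume.withDensity fun x =>
    ENNReal.ofReal ((2 * Real.pi) ^ (-(d : ℝ) / 2) * Real.exp (-‖x‖ ^ 2 / 2))

/-- `π` is a coupling of `μ` and `ν`: a measure on the product with the given marginals. -/
def IsCoupling {E : Type*} [MeasurableSpace E] (π : Measure (E × E)) (μ ν : Measure E) : Prop :=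
  π.map Prod.fst = μ ∧ π.map Prod.snd = ν

/-- The squared `L²` Kantorovich-Wasserstein distance `W₂(μ,ν)²`: the infimum of
`∫ |x-y|² dπ` over all couplings `π` of `μ` and `ν`. -/
noncomputable def W2sq {E : Type*} [MeasurableSpace E] [NormedAddCommGroup E]
    (μ ν : Measure E) : ℝ≥0∞ :=
  ⨅ (π : Measure (E × E)) (_ : IsCoupling π μ ν), ∫⁻ p, (‖p.1 - p.2‖₊ : ℝ≥0∞) ^ 2 ∂π

open Classical in
/-- The relative entropy (KL divergence) `Ent_γ(μ) = ∫ log(dμ/dγ) dμ` if `μ ≪ γ` (and the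
integral makes sense), and `+∞` otherwise. -/
noncomputable def relEnt {E : Type*} [MeasurableSpace E] (μ γ : Measure E) : ℝ≥0∞ :=
  if μ ≪ γ ∧ Integrable (fun x => Real.log (μ.rnDeriv γ x).toReal) μ
  then ENNReal.ofReal (∫ x, Real.log (μ.rnDeriv γ x).toReal ∂μ)
  else ∞

/-- The Gaussian measure `N(m, A)` on `ℝ^d` with mean `m` and (invertible) covariance
matrix `A`, given by its density with respect to Lebesgue measure. -/
noncomputable def gaussianMeasure {d : ℕ} (m : EuclideanSpace ℝ (Fin d))
    (A : Matrix (Fin d) (Fin d) ℝ) : Measure (EuclideanSpace ℝ (Fin d)) :=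
  volume.withDensity fun x =>
    ENNReal.ofReal (((2 * Real.pi) ^ d * A.det) ^ (-(1 : ℝ) / 2) *
      Real.exp (-⟪x - m, Matrix.toEuclideanLin A⁻¹ (x - m)⟫ / 2))

namespace SymmTalagrand

section GaussianBridge
open Set ProbabilityTheory

/-- The standard Gaussian measure on the real line. -/
noncomputable abbrev gauss : Measure ℝ := gaussianReal 0 1

lemma gauss_eq_withDensity : gauss = volume.withDensity (gaussianPDF 0 1) :=
  gaussianReal_of_var_ne_zero 0 one_ne_zero

lemma gaussianPDFReal_zero_one (x : ℝ) :
    gaussianPDFReal 0 1 x = (√(2 * Real.pi))⁻¹ * Real.exp (-x ^ 2 / 2) := by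
  simp [gaussianPDFReal]

lemma hasDerivAt_gaussianPDFReal (x : ℝ) :
    HasDerivAt (fun y => -gaussianPDFReal 0 1 y) (gaussianPDFReal 0 1 x * x) x := by
  simp only [gaussianPDFReal_zero_one]
  have h : HasDerivAt (fun y : ℝ => -y ^ 2 / 2) (-x) x := by
    have := ((hasDerivAt_pow 2 x).neg.div_const 2)
    exact this.congr_deriv (by norm_num; ring)
  exact ((h.exp).const_mul (√(2 * Real.pi))⁻¹).neg.congr_deriv (by ring)

lemma tendsto_gaussianPDFReal_atTop :
    Filter.Tendsto (fun y => -gaussianPDFReal 0 1 y) Filter.atTop (nhds 0) := by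
  simp only [gaussianPDFReal_zero_one]
  have h : Filter.Tendsto (fun y : ℝ => -y ^ 2 / 2) Filter.atTop Filter.atBot := by
    have := (Filter.tendsto_pow_atTop (α := ℝ) (n := 2) (by norm_num)).atTop_div_const
      (show (0 : ℝ) < 2 by norm_num)
    have h2 := Filter.tendsto_neg_atTop_atBot.comp this
    refine h2.congr fun y => ?_
    simp; ring
  have := ((Real.tendsto_exp_atBot.comp h).const_mul (√(2 * Real.pi))⁻¹).neg
  simpa using this

lemma tendsto_gaussianPDFReal_atBot :
    Filter.Tendsto (fun y => -gaussianPDFReal 0 1 y) Filter.atBot (nhds 0) := by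
  have := tendsto_gaussianPDFReal_atTop.comp Filter.tendsto_neg_atBot_atTop
  refine this.congr fun y => ?_
  simp [gaussianPDFReal_zero_one]

lemma integrable_id_gauss : Integrable (fun x : ℝ => x) gauss :=
  (memLp_id_gaussianReal (μ := 0) (v := 1) 1).integrable le_rfl

lemma integrable_gaussianPDFReal_mul_id :
    Integrable (fun x : ℝ => gaussianPDFReal 0 1 x * x) := by
  have h := integrable_id_gauss
  rw [gauss_eq_withDensity, integrable_withDensity_iff (measurable_gaussianPDF 0 1)
    (Filter.Eventually.of_forall fun x => gaussianPDF_lt_top)] at h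
  simpa [mul_comm] using h

lemma setIntegral_gauss {s : Set ℝ} (hs : MeasurableSet s) :
    ∫ x in s, x ∂gauss = ∫ x in s, gaussianPDFReal 0 1 x * x := by
  rw [gauss_eq_withDensity, setIntegral_withDensity_eq_setIntegral_toReal_smul
    (measurable_gaussianPDF 0 1) (Filter.Eventually.of_forall fun x => gaussianPDF_lt_top) _ hs]
  simp

lemma setIntegral_Ioi_gauss (s : ℝ) : ∫ x in Ioi s, x ∂gauss = gaussianPDFReal 0 1 s := by
  rw [setIntegral_gauss measurableSet_Ioi,
    integral_Ioi_of_hasDerivAt_of_tendsto' (fun x _ => hasDerivAt_gaussianPDFReal x)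
      integrable_gaussianPDFReal_mul_id.integrableOn tendsto_gaussianPDFReal_atTop]
  ring

lemma setIntegral_Iio_gauss (s : ℝ) : ∫ x in Iio s, x ∂gauss = -gaussianPDFReal 0 1 s := by
  rw [setIntegral_gauss measurableSet_Iio, ← integral_Iic_eq_integral_Iio,
    integral_Iic_of_hasDerivAt_of_tendsto' (fun x _ => hasDerivAt_gaussianPDFReal x)
      integrable_gaussianPDFReal_mul_id.integrableOn tendsto_gaussianPDFReal_atBot]
  ring

/-- The covariance kernel of the Gaussian distribution function. -/
noncomputable def bridgeKernel (p : ℝ × ℝ) : ℝ≥0∞ :=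
  gauss (Iio (min p.1 p.2)) * gauss (Ioi (max p.1 p.2))

lemma bridgeKernel_eq (p : ℝ × ℝ) :
    bridgeKernel p = (gauss.prod gauss) {q | p.1 ∈ Ioo q.1 q.2 ∧ p.2 ∈ Ioo q.1 q.2} := by
  rw [bridgeKernel, ← Measure.prod_prod]
  congr 1
  ext q
  simp
  tauto

lemma measurableSet_bridge :
    MeasurableSet {z : (ℝ × ℝ) × ℝ × ℝ | z.1.1 ∈ Ioo z.2.1 z.2.2 ∧ z.1.2 ∈ Ioo z.2.1 z.2.2} := by
  simp only [mem_Ioo]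
  have h1 : Measurable fun z : (ℝ × ℝ) × ℝ × ℝ => z.1.1 := by fun_prop
  have h2 : Measurable fun z : (ℝ × ℝ) × ℝ × ℝ => z.1.2 := by fun_prop
  have h3 : Measurable fun z : (ℝ × ℝ) × ℝ × ℝ => z.2.1 := by fun_prop
  have h4 : Measurable fun z : (ℝ × ℝ) × ℝ × ℝ => z.2.2 := by fun_prop
  exact ((measurableSet_lt h3 h1).inter (measurableSet_lt h1 h4)).inter
    ((measurableSet_lt h3 h2).inter (measurableSet_lt h2 h4))

lemma measurable_bridgeKernel : Measurable bridgeKernel := by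
  have : bridgeKernel = fun p => (gauss.prod gauss) (Prod.mk p ⁻¹'
      {z : (ℝ × ℝ) × ℝ × ℝ | z.1.1 ∈ Ioo z.2.1 z.2.2 ∧ z.1.2 ∈ Ioo z.2.1 z.2.2}) := by
    ext p
    rw [bridgeKernel_eq]
    rfl
  rw [this]
  exact measurable_measure_prodMk_left measurableSet_bridge

lemma gauss_pos_of_isOpen {s : Set ℝ} (hs : IsOpen s) (hne : s.Nonempty) : 0 < gauss s := by
  have h : volume s ≠ 0 := (hs.measure_pos volume hne).ne'
  exact pos_iff_ne_zero.2 fun h0 =>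
    h (gaussianReal_absolutelyContinuous' 0 (v := 1) one_ne_zero h0)

lemma bridgeKernel_pos (p : ℝ × ℝ) : bridgeKernel p ≠ 0 :=
  mul_ne_zero (gauss_pos_of_isOpen isOpen_Iio nonempty_Iio).ne'
    (gauss_pos_of_isOpen isOpen_Ioi nonempty_Ioi).ne'

lemma bridgeKernel_swap (p : ℝ × ℝ) : bridgeKernel p.swap = bridgeKernel p := by
  simp [bridgeKernel, min_comm, max_comm]

lemma gauss_Iio_add_Ioi (s : ℝ) : gauss.real (Iio s) + gauss.real (Ioi s) = 1 := by
  have := nullSingletonClass_gaussianReal (μ := 0) (v := 1) one_ne_zero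
  have h1 : gauss.real (Iio s) = gauss.real (Iic s) := measureReal_congr Iio_ae_eq_Iic
  rw [h1, ← compl_Iic, probReal_compl_eq_one_sub measurableSet_Iic]
  ring

lemma lintegral_bridgeKernel (s : ℝ) :
    ∫⁻ t, bridgeKernel (s, t) = gaussianPDF 0 1 s := by
  have hset : MeasurableSet {z : ℝ × ℝ × ℝ | s ∈ Ioo z.2.1 z.2.2 ∧ z.1 ∈ Ioo z.2.1 z.2.2} :=
    measurableSet_bridge.preimage
      (f := fun z : ℝ × ℝ × ℝ => (((s, z.1), z.2) : (ℝ × ℝ) × ℝ × ℝ)) (by fun_prop)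
  calc ∫⁻ t, bridgeKernel (s, t)
      = (volume.prod (gauss.prod gauss))
          {z : ℝ × ℝ × ℝ | s ∈ Ioo z.2.1 z.2.2 ∧ z.1 ∈ Ioo z.2.1 z.2.2} := by
        rw [Measure.prod_apply hset]
        simp_rw [bridgeKernel_eq]
        rfl
    _ = ∫⁻ q in Iio s ×ˢ Ioi s, ENNReal.ofReal (q.2 - q.1) ∂(gauss.prod gauss) := by
        rw [Measure.prod_apply_symm hset,
          ← lintegral_indicator (measurableSet_Iio.prod measurableSet_Ioi)]
        refine lintegral_congr fun q => ?_
        by_cases hq : q ∈ Iio s ×ˢ Ioi s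
        · rw [indicator_of_mem hq, ← Real.volume_Ioo]
          congr 1
          ext t
          simp only [mem_prod, mem_Iio, mem_Ioi] at hq
          simp [hq.1, hq.2]
        · rw [indicator_of_notMem hq]
          convert measure_empty (μ := (volume : Measure ℝ))
          ext t
          simp only [mem_prod, mem_Iio, mem_Ioi] at hq
          simp only [mem_preimage, mem_ofPred_eq, mem_Ioo, mem_empty_iff_false, iff_false]
          tauto
    _ = ENNReal.ofReal (∫ q in Iio s ×ˢ Ioi s, (q.2 - q.1) ∂(gauss.prod gauss)) := by
        rw [ofReal_integral_eq_lintegral_ofReal]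
        · exact ((integrable_id_gauss.comp_snd gauss).sub
            (integrable_id_gauss.comp_fst gauss)).integrableOn
        · refine (ae_restrict_iff' (measurableSet_Iio.prod measurableSet_Ioi)).2
            (Filter.Eventually.of_forall fun q hq => ?_)
          simp only [mem_prod, mem_Iio, mem_Ioi] at hq
          simp only [Pi.zero_apply]
          linarith
    _ = gaussianPDF 0 1 s := by
        rw [← Measure.prod_restrict, gaussianPDF]
        congr 1
        have hi : ∀ u : Set ℝ, Integrable (fun x : ℝ => x) (gauss.restrict u) :=
          fun u => integrable_id_gauss.integrableOn
        rw [integral_sub ((hi _).comp_snd _) ((hi _).comp_fst _)]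
        rw [integral_fun_snd (fun x : ℝ => x), integral_fun_fst (fun x : ℝ => x),
          setIntegral_Ioi_gauss, setIntegral_Iio_gauss]
        simp only [measureReal_restrict_apply_univ, smul_eq_mul]
        linear_combination (gaussianPDFReal 0 1 s) * gauss_Iio_add_Ioi s

/-- A coupling of the standard Gaussian with itself, with density `bridgeKernel`; it represents
covariances under the Gaussian measure in terms of derivatives. -/
noncomputable def bridge : Measure (ℝ × ℝ) := volume.withDensity bridgeKernel

lemma map_fst_bridge : bridge.map Prod.fst = gauss := by
  refine Measure.ext_of_lintegral _ fun h hh => ?_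
  rw [lintegral_map hh measurable_fst, bridge,
    lintegral_withDensity_eq_lintegral_mul _ measurable_bridgeKernel (by fun_prop),
    gauss_eq_withDensity, lintegral_withDensity_eq_lintegral_mul _ (measurable_gaussianPDF 0 1) hh,
    Measure.volume_eq_prod, lintegral_prod _ (by have := measurable_bridgeKernel; fun_prop)]
  refine lintegral_congr fun s => ?_
  simp only [Pi.mul_apply]
  rw [lintegral_mul_const _ (by have := measurable_bridgeKernel; fun_prop), lintegral_bridgeKernel]

lemma map_swap_bridge : bridge.map Prod.swap = bridge := by
  refine Measure.ext_of_lintegral _ fun h hh => ?_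
  rw [lintegral_map hh measurable_swap, bridge,
    lintegral_withDensity_eq_lintegral_mul _ measurable_bridgeKernel (by fun_prop),
    lintegral_withDensity_eq_lintegral_mul _ measurable_bridgeKernel hh,
    Measure.volume_eq_prod, ← lintegral_prod_swap]
  refine lintegral_congr fun s => ?_
  simp [bridgeKernel_swap]

lemma map_snd_bridge : bridge.map Prod.snd = gauss := by
  rw [← map_swap_bridge, Measure.map_map measurable_snd measurable_swap]
  exact map_fst_bridge

instance : IsProbabilityMeasure bridge := by
  constructor
  have h := congrArg (fun m => m univ) map_fst_bridge
  simpa [Measure.map_apply measurable_fst MeasurableSet.univ] using h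

lemma volume_absolutelyContinuous_bridge : (volume : Measure (ℝ × ℝ)) ≪ bridge :=
  withDensity_absolutelyContinuous' measurable_bridgeKernel.aemeasurable
    (Filter.Eventually.of_forall bridgeKernel_pos)

lemma lintegral_bridge_mul {τ σ : ℝ → ℝ≥0∞} (hτ : Measurable τ) (hσ : Measurable σ) :
    ∫⁻ p, τ p.1 * σ p.2 ∂bridge =
      ∫⁻ q, (∫⁻ s in Ioo q.1 q.2, τ s) * (∫⁻ s in Ioo q.1 q.2, σ s) ∂(gauss.prod gauss) := by
  have hind : Measurable (fun z : (ℝ × ℝ) × ℝ × ℝ => indicator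
      {z : (ℝ × ℝ) × ℝ × ℝ | z.1.1 ∈ Ioo z.2.1 z.2.2 ∧ z.1.2 ∈ Ioo z.2.1 z.2.2}
      (fun z => τ z.1.1 * σ z.1.2) z) :=
    Measurable.indicator (by fun_prop) measurableSet_bridge
  rw [bridge, lintegral_withDensity_eq_lintegral_mul _ measurable_bridgeKernel (by fun_prop)]
  calc ∫⁻ p, (bridgeKernel * fun p : ℝ × ℝ => τ p.1 * σ p.2) p
      = ∫⁻ p : ℝ × ℝ, ∫⁻ q, indicator
          {z : (ℝ × ℝ) × ℝ × ℝ | z.1.1 ∈ Ioo z.2.1 z.2.2 ∧ z.1.2 ∈ Ioo z.2.1 z.2.2}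
          (fun z => τ z.1.1 * σ z.1.2) (p, q) ∂(gauss.prod gauss) := by
        refine lintegral_congr fun p => ?_
        rw [Pi.mul_apply, bridgeKernel_eq, mul_comm, ← lintegral_indicator_const]
        · rfl
        · exact measurableSet_bridge.preimage (measurable_prodMk_left (x := p))
    _ = ∫⁻ q, (∫⁻ p : ℝ × ℝ, indicator
          {z : (ℝ × ℝ) × ℝ × ℝ | z.1.1 ∈ Ioo z.2.1 z.2.2 ∧ z.1.2 ∈ Ioo z.2.1 z.2.2}
          (fun z => τ z.1.1 * σ z.1.2) (p, q)) ∂(gauss.prod gauss) :=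
        lintegral_lintegral_swap hind.aemeasurable
    _ = _ := by
        refine lintegral_congr fun q => ?_
        rw [← lintegral_prod_mul hτ.aemeasurable.restrict hσ.aemeasurable.restrict,
          Measure.prod_restrict, ← lintegral_indicator (measurableSet_Ioo.prod measurableSet_Ioo)]
        rfl

end GaussianBridge

section Covariance
open Set ProbabilityTheory

lemma integrable_sub_mul_sub {α : Type*} [MeasurableSpace α] {m : Measure α}
    [IsProbabilityMeasure m] {T S : α → ℝ} (hT : MemLp T 2 m) (hS : MemLp S 2 m) :
    Integrable (fun q : α × α => (T q.1 - T q.2) * (S q.1 - S q.2)) (m.prod m) :=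
  ((hT.comp_fst m).sub (hT.comp_snd m)).integrable_mul ((hS.comp_fst m).sub (hS.comp_snd m))

lemma integral_sub_mul_sub {α : Type*} [MeasurableSpace α] {m : Measure α}
    [IsProbabilityMeasure m] {T S : α → ℝ} (hT : MemLp T 2 m) (hS : MemLp S 2 m) :
    ∫ q : α × α, (T q.1 - T q.2) * (S q.1 - S q.2) ∂(m.prod m) =
      2 * (∫ x, T x * S x ∂m - (∫ x, T x ∂m) * ∫ x, S x ∂m) := by
  have hT1 := hT.integrable one_le_two
  have hS1 := hS.integrable one_le_two
  have hTS : Integrable (fun x => T x * S x) m := hT.integrable_mul hS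
  have e : (fun q : α × α => (T q.1 - T q.2) * (S q.1 - S q.2)) = fun q =>
      (T q.1 * S q.1 + T q.2 * S q.2) - (T q.1 * S q.2 + S q.1 * T q.2) := by
    ext q; ring
  have i1 : Integrable (fun q : α × α => T q.1 * S q.1) (m.prod m) := hTS.comp_fst m
  have i2 : Integrable (fun q : α × α => T q.2 * S q.2) (m.prod m) := hTS.comp_snd m
  have i3 : Integrable (fun q : α × α => T q.1 * S q.1 + T q.2 * S q.2) (m.prod m) := i1.add i2
  have i4 : Integrable (fun q : α × α => T q.1 * S q.2 + S q.1 * T q.2) (m.prod m) :=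
    (hT1.mul_prod hS1).add (hS1.mul_prod hT1)
  rw [e, integral_sub i3 i4,
    integral_add i1 i2,
    integral_add (hT1.mul_prod hS1) (hS1.mul_prod hT1), integral_prod_mul, integral_prod_mul,
    integral_fun_fst (fun x => T x * S x), integral_fun_snd (fun x => T x * S x)]
  simp only [probReal_univ, one_smul]
  ring

/-- `T` is monotone and increases at least as much as the integral of `τ`. -/
def IsLowerDeriv (T : ℝ → ℝ) (τ : ℝ → ℝ≥0∞) : Prop :=
  Monotone T ∧ ∀ a b, a < b → ∫⁻ s in Ioo a b, τ s ≤ ENNReal.ofReal (T b - T a)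

lemma IsLowerDeriv.lintegral_mul_le {T S : ℝ → ℝ} {τ σ : ℝ → ℝ≥0∞} (hT : IsLowerDeriv T τ)
    (hS : IsLowerDeriv S σ) (q : ℝ × ℝ) :
    (∫⁻ s in Ioo q.1 q.2, τ s) * (∫⁻ s in Ioo q.1 q.2, σ s) +
      (∫⁻ s in Ioo q.2 q.1, τ s) * (∫⁻ s in Ioo q.2 q.1, σ s) ≤
      ENNReal.ofReal ((T q.1 - T q.2) * (S q.1 - S q.2)) := by
  have key : ∀ a b : ℝ, a < b → (∫⁻ s in Ioo a b, τ s) * (∫⁻ s in Ioo a b, σ s) ≤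
      ENNReal.ofReal ((T b - T a) * (S b - S a)) := by
    intro a b hab
    rw [ENNReal.ofReal_mul (sub_nonneg.2 (hT.1 hab.le))]
    exact mul_le_mul' (hT.2 a b hab) (hS.2 a b hab)
  rcases lt_trichotomy q.1 q.2 with h | h | h
  · rw [Ioo_eq_empty_of_le h.le]
    simp only [Measure.restrict_empty, lintegral_zero_measure, mul_zero, add_zero]
    convert key _ _ h using 2
    ring
  · simp [h]
  · rw [Ioo_eq_empty_of_le h.le]
    simp only [Measure.restrict_empty, lintegral_zero_measure, mul_zero, zero_add]
    exact key _ _ h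

lemma IsLowerDeriv.covariance_nonneg {T S : ℝ → ℝ} {τ σ : ℝ → ℝ≥0∞} (hT : IsLowerDeriv T τ)
    (hS : IsLowerDeriv S σ) (hT2 : MemLp T 2 gauss) (hS2 : MemLp S 2 gauss) :
    0 ≤ ∫ x, T x * S x ∂gauss - (∫ x, T x ∂gauss) * ∫ x, S x ∂gauss := by
  have h : 0 ≤ ∫ q : ℝ × ℝ, (T q.1 - T q.2) * (S q.1 - S q.2) ∂(gauss.prod gauss) := by
    refine integral_nonneg fun q => ?_
    rcases le_total q.1 q.2 with h | h
    · exact mul_nonneg_of_nonpos_of_nonpos (sub_nonpos.2 (hT.1 h)) (sub_nonpos.2 (hS.1 h))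
    · exact mul_nonneg (sub_nonneg.2 (hT.1 h)) (sub_nonneg.2 (hS.1 h))
  rw [integral_sub_mul_sub hT2 hS2] at h
  linarith

/-- The covariance of two monotone functions under the Gaussian measure dominates the average of
the product of their derivatives under `bridge`. -/
lemma IsLowerDeriv.lintegral_bridge_le {T S : ℝ → ℝ} {τ σ : ℝ → ℝ≥0∞} (hT : IsLowerDeriv T τ)
    (hS : IsLowerDeriv S σ) (hτ : Measurable τ) (hσ : Measurable σ)
    (hT2 : MemLp T 2 gauss) (hS2 : MemLp S 2 gauss) :
    ∫⁻ p, τ p.1 * σ p.2 ∂bridge ≤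
      ENNReal.ofReal (∫ x, T x * S x ∂gauss - (∫ x, T x ∂gauss) * ∫ x, S x ∂gauss) := by
  have hswap : ∫⁻ p, τ p.1 * σ p.2 ∂bridge = ∫⁻ q : ℝ × ℝ,
      (∫⁻ s in Ioo q.2 q.1, τ s) * (∫⁻ s in Ioo q.2 q.1, σ s) ∂(gauss.prod gauss) := by
    rw [lintegral_bridge_mul hτ hσ, ← lintegral_prod_swap]
    rfl
  have hnn : ∀ q : ℝ × ℝ, 0 ≤ (T q.1 - T q.2) * (S q.1 - S q.2) := by
    intro q
    rcases le_total q.1 q.2 with h | h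
    · exact mul_nonneg_of_nonpos_of_nonpos (sub_nonpos.2 (hT.1 h)) (sub_nonpos.2 (hS.1 h))
    · exact mul_nonneg (sub_nonneg.2 (hT.1 h)) (sub_nonneg.2 (hS.1 h))
  have h2 : 2 * ∫⁻ p, τ p.1 * σ p.2 ∂bridge ≤ 2 *
      ENNReal.ofReal (∫ x, T x * S x ∂gauss - (∫ x, T x ∂gauss) * ∫ x, S x ∂gauss) := by
    calc 2 * ∫⁻ p, τ p.1 * σ p.2 ∂bridge
        = ∫⁻ p, τ p.1 * σ p.2 ∂bridge + ∫⁻ p, τ p.1 * σ p.2 ∂bridge := two_mul _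
      _ ≤ ∫⁻ q : ℝ × ℝ, (∫⁻ s in Ioo q.1 q.2, τ s) * (∫⁻ s in Ioo q.1 q.2, σ s) +
          (∫⁻ s in Ioo q.2 q.1, τ s) * (∫⁻ s in Ioo q.2 q.1, σ s) ∂(gauss.prod gauss) := by
          conv_lhs => rw [hswap]
          conv_lhs => enter [1]; rw [← hswap, lintegral_bridge_mul hτ hσ]
          exact le_lintegral_add _ _
      _ ≤ ∫⁻ q : ℝ × ℝ, ENNReal.ofReal ((T q.1 - T q.2) * (S q.1 - S q.2)) ∂(gauss.prod gauss) :=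
          lintegral_mono fun q => hT.lintegral_mul_le hS q
      _ = _ := by
          rw [← ofReal_integral_eq_lintegral_ofReal (integrable_sub_mul_sub hT2 hS2)
            (Filter.Eventually.of_forall hnn), integral_sub_mul_sub hT2 hS2,
            ENNReal.ofReal_mul zero_le_two]
          simp
  exact (ENNReal.mul_le_mul_iff_right two_ne_zero ofNat_ne_top).1 h2

lemma integral_sq_gauss : ∫ x, x ^ 2 ∂gauss = 1 := by
  have h := variance_fun_id_gaussianReal (μ := 0) (v := 1)
  rw [variance_eq_integral measurable_id'.aemeasurable, integral_id_gaussianReal] at h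
  simpa using h

lemma IsLowerDeriv.mul_sub_le {T : ℝ → ℝ} {τ : ℝ → ℝ≥0∞} (hT : IsLowerDeriv T τ) {c : ℝ}
    (hc : 0 ≤ c) (h : ∀ᵐ s, τ s = ENNReal.ofReal c) {a b : ℝ} (hab : a < b) :
    c * (b - a) ≤ T b - T a := by
  have h1 := hT.2 a b hab
  rw [lintegral_congr_ae (ae_restrict_of_ae h), setLIntegral_const, Real.volume_Ioo,
    ← ENNReal.ofReal_mul hc,
    ENNReal.ofReal_le_ofReal_iff (sub_nonneg.2 (hT.1 hab.le))] at h1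
  exact h1

/-- The equality case of the covariance estimate: if the derivatives multiply to one and the
covariance is at most one, then the first function is affine with positive slope. -/
lemma IsLowerDeriv.ae_eq_affine {T S : ℝ → ℝ} {τ σ : ℝ → ℝ≥0∞} (hT : IsLowerDeriv T τ)
    (hS : IsLowerDeriv S σ) (hT2 : MemLp T 2 gauss) (hS2 : MemLp S 2 gauss)
    (hmul : ∀ᵐ p : ℝ × ℝ, τ p.1 * σ p.2 = 1)
    (hcov : ∫ x, T x * S x ∂gauss - (∫ x, T x ∂gauss) * ∫ x, S x ∂gauss ≤ 1) :
    ∃ c b : ℝ, 0 < c ∧ ∀ᵐ x ∂gauss, T x = c * x + b := by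
  rw [Measure.volume_eq_prod] at hmul
  have h1 : ∀ᵐ s : ℝ, ∀ᵐ t : ℝ, τ s * σ t = 1 := Measure.ae_ae_of_ae_prod hmul
  obtain ⟨s₀, hs₀⟩ := h1.exists
  have hσ : ∀ᵐ t, σ t = (τ s₀)⁻¹ := by
    filter_upwards [hs₀] with t ht
    exact ENNReal.eq_inv_of_mul_eq_one_left (by rwa [mul_comm])
  have hτ0 : τ s₀ ≠ 0 := by
    obtain ⟨t, ht⟩ := hs₀.exists
    rintro h
    simp [h] at ht
  have hτt : τ s₀ ≠ ∞ := by
    obtain ⟨t, ht⟩ := hs₀.exists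
    rintro h
    rw [h, ENNReal.top_mul'] at ht
    split_ifs at ht <;> simp at ht
  have hτ : ∀ᵐ s, τ s = τ s₀ := by
    filter_upwards [h1] with s hs
    obtain ⟨t, ht, ht'⟩ := (hs.and hσ).exists
    rw [ht', ← div_eq_mul_inv, ENNReal.div_eq_one_iff hτ0 hτt] at ht
    exact ht
  set c : ℝ := (τ s₀).toReal with hc
  have hcpos : 0 < c := ENNReal.toReal_pos hτ0 hτt
  have hτc : ∀ᵐ s, τ s = ENNReal.ofReal c := by
    rw [hc, ENNReal.ofReal_toReal hτt]; exact hτ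
  have hσc : ∀ᵐ s, σ s = ENNReal.ofReal c⁻¹ := by
    rw [ENNReal.ofReal_inv_of_pos hcpos, hc, ENNReal.ofReal_toReal hτt]; exact hσ
  have hTi := fun {a b : ℝ} (hab : a < b) => hT.mul_sub_le hcpos.le hτc hab
  have hSi := fun {a b : ℝ} (hab : a < b) => hS.mul_sub_le (inv_pos.2 hcpos).le hσc hab
  have hid2 : MemLp (fun x : ℝ => x) 2 gauss := memLp_id_gaussianReal 2
  have hprod : ∀ a b : ℝ, a < b → (b - a) * (b - a) ≤ (T b - T a) * (S b - S a) ∧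
      ((T b - T a) * (S b - S a) = (b - a) * (b - a) → T b - T a = c * (b - a)) := by
    intro a b hab
    have hx := hTi hab
    have hy := hSi hab
    have hba : 0 < b - a := sub_pos.2 hab
    have e : (b - a) * (b - a) = (c * (b - a)) * (c⁻¹ * (b - a)) := by
      field_simp
    have hp : 0 < c⁻¹ * (b - a) := by positivity
    refine ⟨?_, fun h => le_antisymm ?_ hx⟩
    · rw [e]
      exact mul_le_mul hx hy hp.le ((mul_pos hcpos hba).le.trans hx)
    · by_contra! hlt
      rw [e] at h
      nlinarith [mul_lt_mul_of_pos_right hlt hp]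
  have hnn : ∀ q : ℝ × ℝ,
      0 ≤ (T q.1 - T q.2) * (S q.1 - S q.2) - (q.1 - q.2) * (q.1 - q.2) := by
    intro q
    rcases lt_trichotomy q.1 q.2 with h | h | h
    · nlinarith [(hprod _ _ h).1]
    · simp [h]
    · nlinarith [(hprod _ _ h).1]
  have hInt := (integrable_sub_mul_sub hT2 hS2).sub (integrable_sub_mul_sub hid2 hid2)
  have hzero : ∫ q : ℝ × ℝ, ((T q.1 - T q.2) * (S q.1 - S q.2) - (q.1 - q.2) * (q.1 - q.2))
      ∂(gauss.prod gauss) = 0 := by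
    refine le_antisymm ?_ (integral_nonneg hnn)
    rw [integral_sub (integrable_sub_mul_sub hT2 hS2) (integrable_sub_mul_sub hid2 hid2),
      integral_sub_mul_sub hT2 hS2, integral_sub_mul_sub hid2 hid2, integral_id_gaussianReal]
    have := integral_sq_gauss
    simp only [pow_two] at this
    rw [this]
    linarith
  have hae := (integral_eq_zero_iff_of_nonneg hnn hInt).1 hzero
  obtain ⟨a, ha⟩ := (Measure.ae_ae_of_ae_prod hae).exists
  refine ⟨c, T a - c * a, hcpos, ?_⟩
  filter_upwards [ha] with b hb
  simp only [Pi.zero_apply] at hb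
  rcases lt_trichotomy a b with h | h | h
  · linarith [(hprod _ _ h).2 (by linarith)]
  · subst h; ring
  · linarith [(hprod _ _ h).2 (by linarith)]

end Covariance

section Quantile
open Set ProbabilityTheory

lemma continuous_cdf_gauss : Continuous (cdf gauss) := by
  have := nullSingletonClass_gaussianReal (μ := 0) (v := 1) one_ne_zero
  have h : Continuous fun s : ℝ => ∫ _ in (0 : ℝ)..s, (1 : ℝ) ∂gauss :=
    (integrable_const (1 : ℝ)).continuous_primitive 0
  have e : ∀ s : ℝ, cdf gauss s = cdf gauss 0 + ∫ _ in (0 : ℝ)..s, (1 : ℝ) ∂gauss := by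
    intro s
    rw [← intervalIntegral.integral_Iic_sub_Iic (integrable_const (1 : ℝ)).integrableOn
      (integrable_const (1 : ℝ)).integrableOn]
    simp [cdf_eq_real]
  rw [show (cdf gauss : ℝ → ℝ) = fun s => cdf gauss 0 + ∫ _ in (0 : ℝ)..s, (1 : ℝ) ∂gauss from
    funext e]
  fun_prop

lemma strictMono_cdf_gauss : StrictMono (cdf gauss) := by
  intro a b hab
  rw [cdf_eq_real, cdf_eq_real]
  have h1 : gauss.real (Iic b) = gauss.real (Iic a) + gauss.real (Ioc a b) := by
    rw [← measureReal_union (Iic_disjoint_Ioc le_rfl) measurableSet_Ioc,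
      Iic_union_Ioc_eq_Iic hab.le]
  have h2 : 0 < gauss.real (Ioc a b) := by
    refine ENNReal.toReal_pos (ne_of_gt ?_) (measure_ne_top _ _)
    exact (gauss_pos_of_isOpen isOpen_Ioo (nonempty_Ioo.2 hab)).trans_le
      (measure_mono Ioo_subset_Ioc_self)
  linarith

lemma cdf_gauss_pos (s : ℝ) : 0 < cdf gauss s :=
  (cdf_nonneg gauss (s - 1)).trans_lt (strictMono_cdf_gauss (by linarith))

lemma cdf_gauss_lt_one (s : ℝ) : cdf gauss s < 1 :=
  (strictMono_cdf_gauss (show s < s + 1 by linarith)).trans_le (cdf_le_one gauss _)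

lemma gauss_cdf_le {u : ℝ} (h0 : 0 ≤ u) (h1 : u ≤ 1) :
    gauss {s | cdf gauss s ≤ u} = ENNReal.ofReal u := by
  rcases h0.eq_or_lt with rfl | h0
  · have : {s | cdf gauss s ≤ 0} = ∅ := by
      ext s
      simp [cdf_gauss_pos s]
    simp [this]
  rcases h1.eq_or_lt with rfl | h1
  · have : {s | cdf gauss s ≤ 1} = univ := by
      ext s
      simp [cdf_le_one gauss s]
    simp [this]
  obtain ⟨a, ha⟩ := ((tendsto_cdf_atBot gauss).eventually (gt_mem_nhds h0)).exists
  obtain ⟨b, hb⟩ := ((tendsto_cdf_atTop gauss).eventually (lt_mem_nhds h1)).exists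
  obtain ⟨s, hs⟩ := mem_range_of_exists_le_of_exists_ge continuous_cdf_gauss
    ⟨a, ha.le⟩ ⟨b, hb.le⟩
  have : {x | cdf gauss x ≤ u} = Iic s := by
    ext x
    simp [← hs, strictMono_cdf_gauss.le_iff_le]
  rw [this, ← hs, ofReal_cdf]

/-- The monotone rearrangement sending the standard Gaussian measure to `m`. -/
noncomputable def rearrangement (m : Measure ℝ) (s : ℝ) : ℝ :=
  sInf {t | cdf gauss s ≤ cdf m t}

lemma rearrangement_le_iff (m : Measure ℝ) {s t : ℝ} :
    rearrangement m s ≤ t ↔ cdf gauss s ≤ cdf m t := by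
  have hne : {t | cdf gauss s ≤ cdf m t}.Nonempty := by
    obtain ⟨t, ht⟩ := ((tendsto_cdf_atTop m).eventually (lt_mem_nhds (cdf_gauss_lt_one s))).exists
    exact ⟨t, ht.le⟩
  have hbdd : BddBelow {t | cdf gauss s ≤ cdf m t} := by
    obtain ⟨t, ht⟩ := ((tendsto_cdf_atBot m).eventually (gt_mem_nhds (cdf_gauss_pos s))).exists
    refine ⟨t, fun x hx => ?_⟩
    by_contra! hlt
    exact absurd (hx.trans (monotone_cdf m hlt.le)) (not_le.2 ht)
  refine ⟨fun h => ?_, fun h => csInf_le hbdd h⟩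
  refine ge_of_tendsto (((cdf m).right_continuous t).mono Ioi_subset_Ici_self).tendsto ?_
  filter_upwards [self_mem_nhdsWithin] with x hx
  obtain ⟨y, hy, hyx⟩ := exists_lt_of_csInf_lt hne (lt_of_le_of_lt h hx)
  exact le_trans hy (monotone_cdf m hyx.le)

lemma monotone_rearrangement (m : Measure ℝ) : Monotone (rearrangement m) := fun _ _ hab =>
  (rearrangement_le_iff m).2
    ((monotone_cdf gauss hab).trans ((rearrangement_le_iff m).1 le_rfl))

lemma map_rearrangement (m : Measure ℝ) [IsProbabilityMeasure m] :
    gauss.map (rearrangement m) = m := by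
  have hmeas := (monotone_rearrangement m).measurable
  refine Measure.ext_of_Iic _ _ fun t => ?_
  rw [Measure.map_apply hmeas measurableSet_Iic, ← ofReal_cdf m,
    ← gauss_cdf_le (cdf_nonneg m t) (cdf_le_one m t)]
  congr 1
  ext s
  exact rearrangement_le_iff m

/-- The derivative of the monotone rearrangement of the Gaussian measure with relative
density `r`, along a map `T`. -/
noncomputable def rearrangementDeriv (T : ℝ → ℝ) (r : ℝ → ℝ≥0∞) (s : ℝ) : ℝ≥0∞ :=
  gaussianPDF 0 1 s * (gaussianPDF 0 1 (T s) * r (T s))⁻¹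

lemma isLowerDeriv_of_map_eq {T : ℝ → ℝ} {r : ℝ → ℝ≥0∞} (hT : Monotone T) (hr : Measurable r)
    (hmap : gauss.map T = gauss.withDensity r) : IsLowerDeriv T (rearrangementDeriv T r) := by
  refine ⟨hT, fun a b hab => ?_⟩
  have hφ := measurable_gaussianPDF 0 1
  set ρ : ℝ → ℝ≥0∞ := fun y => gaussianPDF 0 1 y * r y with hρ
  have hρm : Measurable ρ := hφ.mul hr
  have hρi : Measurable fun y => (ρ y)⁻¹ := hρm.inv
  have hTm : Measurable T := hT.measurable
  calc ∫⁻ s in Ioo a b, rearrangementDeriv T r s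
      = ∫⁻ s in Ioo a b, (ρ (T s))⁻¹ ∂gauss := by
        rw [gauss_eq_withDensity, setLIntegral_withDensity_eq_setLIntegral_mul _ hφ
          (by fun_prop) measurableSet_Ioo]
        rfl
    _ ≤ ∫⁻ s, (Icc (T a) (T b)).indicator (fun y => (ρ y)⁻¹) (T s) ∂gauss := by
        rw [← lintegral_indicator measurableSet_Ioo]
        refine lintegral_mono fun s => ?_
        by_cases hs : s ∈ Ioo a b
        · rw [indicator_of_mem hs, indicator_of_mem
            (show T s ∈ Icc (T a) (T b) from ⟨hT hs.1.le, hT hs.2.le⟩)]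
        · simp [indicator_of_notMem hs]
    _ = ∫⁻ y, (Icc (T a) (T b)).indicator (fun y => (ρ y)⁻¹) y ∂(volume.withDensity ρ) := by
        rw [← lintegral_map (hρi.indicator measurableSet_Icc) hTm, hmap, gauss_eq_withDensity,
          hρ, ← withDensity_mul _ hφ hr]
        rfl
    _ = ∫⁻ y in Icc (T a) (T b), ρ y * (ρ y)⁻¹ := by
        rw [lintegral_indicator measurableSet_Icc,
          setLIntegral_withDensity_eq_setLIntegral_mul _ hρm
          hρi measurableSet_Icc]
        rfl
    _ ≤ ∫⁻ y in Icc (T a) (T b), 1 := lintegral_mono fun y => ENNReal.mul_inv_le_one _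
    _ = ENNReal.ofReal (T b - T a) := by simp

lemma rearrangementDeriv_mul {T : ℝ → ℝ} {r : ℝ → ℝ≥0∞} (hT : Measurable T) (hr : Measurable r)
    (hr1 : ∫⁻ s, r s ∂gauss ≠ ∞) (hmap : gauss.map T = gauss.withDensity r) :
    ∀ᵐ s ∂gauss, rearrangementDeriv T r s * (gaussianPDF 0 1 (T s) * r (T s)) =
      gaussianPDF 0 1 s := by
  have h : ∀ᵐ y ∂(gauss.map T), r y ≠ 0 ∧ r y ≠ ∞ := by
    rw [hmap, ae_withDensity_iff hr]
    filter_upwards [ae_lt_top hr hr1] with y hy h0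
    exact ⟨h0, hy.ne⟩
  filter_upwards [ae_of_ae_map hT.aemeasurable h] with s hs
  rw [rearrangementDeriv, mul_assoc, ENNReal.inv_mul_cancel, mul_one]
  · exact mul_ne_zero (gaussianPDF_pos 0 one_ne_zero _).ne' hs.1
  · exact ENNReal.mul_ne_top gaussianPDF_ne_top hs.2

/-- Monotone rearrangement depending measurably on a parameter. -/
lemma exists_rearrangement_family {Ω : Type*} [MeasurableSpace Ω] {r : Ω → ℝ → ℝ≥0∞}
    (hr : Measurable (Function.uncurry r)) :
    ∃ (t : Ω → ℝ → ℝ) (σ : Ω → ℝ → ℝ≥0∞), Measurable (Function.uncurry t) ∧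
      Measurable (Function.uncurry σ) ∧ (∀ ω, IsLowerDeriv (t ω) (σ ω)) ∧
      ∀ ω, ∫⁻ s, r ω s ∂gauss = 1 → gauss.map (t ω) = gauss.withDensity (r ω) ∧
        ∀ᵐ s ∂gauss, σ ω s * (gaussianPDF 0 1 (t ω s) * r ω (t ω s)) = gaussianPDF 0 1 s := by
  classical
  have hφ := measurable_gaussianPDF 0 1
  have hrω : ∀ ω, Measurable (r ω) := fun ω => hr.of_uncurry_left
  let G : Set Ω := {ω | ∫⁻ s, r ω s ∂gauss = 1}
  have hG : MeasurableSet G := hr.lintegral_prod_right' (measurableSet_singleton 1)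
  have hprob : ∀ ω ∈ G, IsProbabilityMeasure (gauss.withDensity (r ω)) := fun ω hω =>
    ⟨by rw [withDensity_apply _ MeasurableSet.univ, setLIntegral_univ]; exact hω⟩
  let t : Ω → ℝ → ℝ := fun ω s => if ω ∈ G then rearrangement (gauss.withDensity (r ω)) s else 0
  let σ : Ω → ℝ → ℝ≥0∞ := fun ω s => if ω ∈ G then rearrangementDeriv (t ω) (r ω) s else 0
  have htG : ∀ ω ∈ G, t ω = rearrangement (gauss.withDensity (r ω)) := fun ω hω => by
    ext s; simp [t, hω]
  have hmap : ∀ ω ∈ G, gauss.map (t ω) = gauss.withDensity (r ω) := fun ω hω => by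
    have := hprob ω hω
    rw [htG ω hω, map_rearrangement]
  have ht : Measurable (Function.uncurry t) := by
    refine measurable_of_Iic fun c => ?_
    have hF : Measurable fun ω => ∫⁻ s in Iic c, r ω s ∂gauss := hr.lintegral_prod_right'
    have e : Function.uncurry t ⁻¹' Iic c =
        (G ×ˢ univ ∩ {p : Ω × ℝ | gauss (Iic p.2) ≤ ∫⁻ s in Iic c, r p.1 s ∂gauss}) ∪
          (Gᶜ ×ˢ {_s : ℝ | (0 : ℝ) ≤ c}) := by
      ext ⟨ω, s⟩
      by_cases hω : ω ∈ G
      · have := hprob ω hω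
        have h1 : Function.uncurry t (ω, s) = rearrangement (gauss.withDensity (r ω)) s := by
          simp [htG ω hω]
        simp only [mem_preimage, h1, mem_Iic, rearrangement_le_iff, mem_union, mem_inter_iff,
          mem_prod, hω, mem_univ, and_self, true_and, mem_compl_iff, not_true_eq_false, false_and,
          or_false, mem_ofPred_eq]
        rw [← withDensity_apply _ measurableSet_Iic, ← ofReal_cdf, ← ofReal_cdf,
          ENNReal.ofReal_le_ofReal_iff (cdf_nonneg _ _)]
      · have h1 : Function.uncurry t (ω, s) = 0 := by simp [t, hω]
        simp [h1, hω]
    rw [e]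
    have hg : Measurable fun p : Ω × ℝ => gauss (Iic p.2) :=
      (Monotone.measurable fun a b hab => measure_mono (Iic_subset_Iic.2 hab)).comp measurable_snd
    exact ((hG.prod MeasurableSet.univ).inter
      (measurableSet_le hg (hF.comp measurable_fst))).union (hG.compl.prod (by simp))
  refine ⟨t, σ, ht, ?_, fun ω => ?_, fun ω hω => ⟨hmap ω hω, ?_⟩⟩
  · have e : Function.uncurry σ = fun p => (Prod.fst ⁻¹' G).indicator (fun p : Ω × ℝ =>
        gaussianPDF 0 1 p.2 * (gaussianPDF 0 1 (Function.uncurry t p) *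
          Function.uncurry r (p.1, Function.uncurry t p))⁻¹) p := by
      ext ⟨ω, s⟩
      by_cases hω : ω ∈ G
      · rw [indicator_of_mem (by exact hω)]
        simp [σ, hω, rearrangementDeriv]
      · rw [indicator_of_notMem (by exact hω)]
        simp [σ, hω]
    rw [e]
    refine Measurable.indicator ?_ (measurable_fst hG)
    fun_prop
  · by_cases hω : ω ∈ G
    · have e : σ ω = rearrangementDeriv (t ω) (r ω) := by ext s; simp [σ, hω]
      rw [e]
      refine isLowerDeriv_of_map_eq ?_ (hrω ω) (hmap ω hω)
      rw [htG ω hω]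
      exact monotone_rearrangement _
    · have e1 : t ω = 0 := by ext s; simp [t, hω]
      have e2 : σ ω = 0 := by ext s; simp [σ, hω]
      rw [e1, e2]
      exact ⟨monotone_const, fun a b _ => by simp⟩
  · have e : σ ω = rearrangementDeriv (t ω) (r ω) := by
      ext s; simp only [σ]; rw [if_pos]; exact hω
    rw [e]
    exact rearrangementDeriv_mul ht.of_uncurry_left (hrω ω) (by rw [hω]; simp) (hmap ω hω)

end Quantile

section Knothe
open Set ProbabilityTheory

/-- The standard Gaussian measure on `Fin n → ℝ`. -/
noncomputable abbrev gaussPi (n : ℕ) : Measure (Fin n → ℝ) := Measure.pi fun _ => gauss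

lemma measurePreserving_insertNth {α : Type*} [MeasurableSpace α] (m : Measure α) [SigmaFinite m]
    {n : ℕ} (i : Fin (n + 1)) :
    MeasurePreserving (fun p : α × (Fin n → α) => i.insertNth (α := fun _ => α) p.1 p.2)
      (m.prod (Measure.pi fun _ => m)) (Measure.pi fun _ => m) :=
  (measurePreserving_piFinSuccAbove (fun _ : Fin (n + 1) => m) i).symm

lemma lintegral_pi_insertNth {α : Type*} [MeasurableSpace α] (m : Measure α) [SigmaFinite m]
    {n : ℕ} (i : Fin (n + 1)) {h : (Fin (n + 1) → α) → ℝ≥0∞} (hh : Measurable h) :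
    ∫⁻ x, h x ∂(Measure.pi fun _ => m) =
      ∫⁻ w, ∫⁻ s, h (i.insertNth (α := fun _ => α) s w) ∂m ∂(Measure.pi fun _ => m) := by
  have hp := measurePreserving_insertNth m i
  have hm : Measurable fun p : α × (Fin n → α) => h (i.insertNth (α := fun _ => α) p.1 p.2) :=
    hh.comp hp.measurable
  rw [← hp.lintegral_comp hh, lintegral_prod_symm _ hm.aemeasurable]

lemma ae_pi_iff_ae_ae_insertNth {α : Type*} [MeasurableSpace α] (m : Measure α) [SigmaFinite m]
    {n : ℕ} (i : Fin (n + 1)) {p : (Fin (n + 1) → α) → Prop} (hp : MeasurableSet {x | p x}) :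
    (∀ᵐ x ∂(Measure.pi fun _ => m), p x) ↔
      ∀ᵐ w ∂(Measure.pi fun _ => m), ∀ᵐ s ∂m, p (i.insertNth (α := fun _ => α) s w) := by
  have h := (measurePreserving_insertNth m i).comp
    (Measure.measurePreserving_swap (μ := Measure.pi fun _ : Fin n => m) (ν := m))
  rw [← h.map_eq, ae_map_iff h.measurable.aemeasurable hp]
  exact Measure.ae_prod_iff_ae_ae (h.measurable hp)

lemma measurable_insertNth {α : Type*} [MeasurableSpace α] {n : ℕ} (i : Fin (n + 1)) :
    Measurable (fun p : α × (Fin n → α) => i.insertNth (α := fun _ => α) p.1 p.2) :=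
  (MeasurableEquiv.piFinSuccAbove (fun _ : Fin (n + 1) => α) i).symm.measurable

/-- `T` is a measurable map whose `i`-th component depends only on the coordinates `j` with
`rel i j` and is monotone in the `i`-th coordinate, with derivative bounded below by `τ i`. -/
structure IsTriangular {n : ℕ} (rel : Fin n → Fin n → Prop) (T : Fin n → (Fin n → ℝ) → ℝ)
    (τ : Fin n → (Fin n → ℝ) → ℝ≥0∞) : Prop where
  measurable_map : ∀ i, Measurable (T i)
  measurable_deriv : ∀ i, Measurable (τ i)
  map_congr : ∀ i x y, (∀ j, rel i j → x j = y j) → T i x = T i y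
  deriv_congr : ∀ i x y, (∀ j, rel i j → x j = y j) → τ i x = τ i y
  isLowerDeriv : ∀ i x, IsLowerDeriv (fun s => T i (Function.update x i s))
    (fun s => τ i (Function.update x i s))

/-- Existence of the Knothe rearrangement from the standard Gaussian to a measure with a
density. -/
theorem exists_knothe (n : ℕ) : ∀ (f : (Fin n → ℝ) → ℝ≥0∞), Measurable f →
    ∫⁻ x, f x ∂gaussPi n = 1 →
    ∃ (T : Fin n → (Fin n → ℝ) → ℝ) (τ : Fin n → (Fin n → ℝ) → ℝ≥0∞),
      IsTriangular (· ≤ ·) T τ ∧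
      (gaussPi n).map (fun x i => T i x) = (gaussPi n).withDensity f ∧
      ∀ᵐ x ∂gaussPi n, (∏ i, τ i x) * ((∏ i, gaussianPDF 0 1 (T i x)) * f (fun i => T i x)) =
        ∏ i, gaussianPDF 0 1 (x i) := by
  induction n with
  | zero =>
    intro f hf hf1
    have hf0 : f = 1 := by
      ext x
      rw [lintegral_unique, measure_univ, mul_one] at hf1
      rw [Pi.one_apply, ← hf1]
      exact congrArg f (Subsingleton.elim _ _)
    refine ⟨fun i => i.elim0, fun i => i.elim0, ⟨fun i => i.elim0, fun i => i.elim0,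
      fun i => i.elim0, fun i => i.elim0, fun i => i.elim0⟩, ?_, ?_⟩
    · rw [hf0, withDensity_one]
      convert Measure.map_id
    · simp [hf0]
  | succ n ih =>
    intro f hf hf1
    have hφ := measurable_gaussianPDF 0 1
    have hcons : Measurable fun p : ℝ × (Fin n → ℝ) => (Fin.cons p.1 p.2 : Fin (n + 1) → ℝ) := by
      simpa only [Fin.insertNth_zero'] using measurable_insertNth (α := ℝ) (n := n) 0
    have hfc : Measurable fun p : (Fin n → ℝ) × ℝ => f (Fin.cons p.2 p.1) :=
      hf.comp (hcons.comp measurable_swap)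
    have hpi : ∀ {h : (Fin (n + 1) → ℝ) → ℝ≥0∞}, Measurable h → ∫⁻ x, h x ∂gaussPi (n + 1) =
        ∫⁻ w, ∫⁻ s, h (Fin.cons s w) ∂gauss ∂gaussPi n := fun {h} hh => by
      simpa only [Fin.insertNth_zero'] using lintegral_pi_insertNth gauss 0 hh
    set f' : (Fin n → ℝ) → ℝ≥0∞ := fun w => ∫⁻ s, f (Fin.cons s w) ∂gauss with hf'
    have hf'm : Measurable f' := hfc.lintegral_prod_right'
    have hf'1 : ∫⁻ w, f' w ∂gaussPi n = 1 := by rw [← hf1, hpi hf]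
    obtain ⟨T', τ', hT', hmap', hdens'⟩ := ih f' hf'm hf'1
    have hT'm : Measurable fun w i => T' i w := measurable_pi_lambda _ hT'.measurable_map
    obtain ⟨t, σ, htm, hσm, hlow, hgood⟩ := exists_rearrangement_family
      (r := fun w s => f (Fin.cons s w) / f' w) (hfc.div (hf'm.comp measurable_fst))
    have hr1 : ∀ w, f' w ≠ 0 → f' w ≠ ∞ → ∫⁻ s, f (Fin.cons s w) / f' w ∂gauss = 1 := by
      intro w h0 ht
      simp only [div_eq_mul_inv]
      rw [lintegral_mul_const' _ _ (ENNReal.inv_ne_top.2 h0)]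
      exact ENNReal.mul_inv_cancel h0 ht
    have htail : Measurable (Fin.tail : (Fin (n + 1) → ℝ) → (Fin n → ℝ)) :=
      measurable_pi_lambda _ fun i => measurable_pi_apply _
    let T : Fin (n + 1) → (Fin (n + 1) → ℝ) → ℝ := fun i x =>
      Fin.cases (t (fun j => T' j (Fin.tail x)) (x 0)) (fun j => T' j (Fin.tail x)) i
    let τ : Fin (n + 1) → (Fin (n + 1) → ℝ) → ℝ≥0∞ := fun i x =>
      Fin.cases (σ (fun j => T' j (Fin.tail x)) (x 0)) (fun j => τ' j (Fin.tail x)) i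
    have hTcons : ∀ s w, (fun i => T i (Fin.cons s w)) =
        Fin.cons (t (fun j => T' j w) s) (fun j => T' j w) := by
      intro s w
      ext i
      refine Fin.cases ?_ (fun j => ?_) i <;> simp [T]
    have hpair : Measurable fun x : Fin (n + 1) → ℝ =>
        ((fun j => T' j (Fin.tail x), x 0) : (Fin n → ℝ) × ℝ) :=
      (hT'm.comp htail).prodMk (measurable_pi_apply 0)
    have htri : IsTriangular (· ≤ ·) T τ := by
      refine ⟨fun i => ?_, fun i => ?_, fun i => ?_, fun i => ?_, fun i => ?_⟩
      · refine Fin.cases ?_ (fun j => ?_) i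
        · exact htm.comp hpair
        · exact (hT'.measurable_map j).comp htail
      · refine Fin.cases ?_ (fun j => ?_) i
        · exact hσm.comp hpair
        · exact (hT'.measurable_deriv j).comp htail
      · refine Fin.cases (fun x y hxy => ?_) (fun j x y hxy => ?_) i
        · rw [show x = y from funext fun k => hxy k (Fin.zero_le k)]
        · exact hT'.map_congr j _ _ fun k hk => hxy k.succ (Fin.succ_le_succ_iff.2 hk)
      · refine Fin.cases (fun x y hxy => ?_) (fun j x y hxy => ?_) i
        · rw [show x = y from funext fun k => hxy k (Fin.zero_le k)]
        · exact hT'.deriv_congr j _ _ fun k hk => hxy k.succ (Fin.succ_le_succ_iff.2 hk)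
      · refine Fin.cases (fun x => ?_) (fun j x => ?_) i
        · simpa [T, τ] using hlow (fun j => T' j (Fin.tail x))
        · simpa [T, τ] using hT'.isLowerDeriv j (Fin.tail x)
    have hTm : Measurable fun x i => T i x := measurable_pi_lambda _ htri.measurable_map
    have hf't : ∀ᵐ w ∂gaussPi n, f' w < ∞ := ae_lt_top hf'm (by rw [hf'1]; exact one_ne_top)
    refine ⟨T, τ, htri, ?_, ?_⟩
    · refine Measure.ext_of_lintegral _ fun h hh => ?_
      have hinner : Measurable fun w : Fin n → ℝ => ∫⁻ s, h (Fin.cons (t w s) w) ∂gauss := by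
        refine Measurable.lintegral_prod_right'
          (f := fun p : (Fin n → ℝ) × ℝ => h (Fin.cons (t p.1 p.2) p.1)) ?_
        exact hh.comp (hcons.comp (htm.prodMk measurable_fst))
      have hhT : Measurable fun x => h (fun i => T i x) := hh.comp hTm
      rw [lintegral_map hh hTm, hpi hhT,
        lintegral_withDensity_eq_lintegral_mul _ hf hh, hpi (hf.mul hh)]
      simp only [hTcons]
      calc ∫⁻ w, ∫⁻ s, h (Fin.cons (t (fun j => T' j w) s) fun j => T' j w) ∂gauss ∂gaussPi n
          = ∫⁻ w, ∫⁻ s, h (Fin.cons (t w s) w) ∂gauss ∂((gaussPi n).withDensity f') := by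
            rw [← hmap', lintegral_map hinner hT'm]
        _ = ∫⁻ w, f' w * ∫⁻ s, h (Fin.cons (t w s) w) ∂gauss ∂gaussPi n :=
            lintegral_withDensity_eq_lintegral_mul _ hf'm hinner
        _ = ∫⁻ w, ∫⁻ s, (f * h) (Fin.cons s w) ∂gauss ∂gaussPi n := by
            refine lintegral_congr_ae ?_
            filter_upwards [hf't] with w hwt
            have hhw : Measurable fun s : ℝ => h (Fin.cons s w) :=
              hh.comp (hcons.comp (measurable_id.prodMk measurable_const))
            have hfw : Measurable fun s : ℝ => f (Fin.cons s w) :=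
              hf.comp (hcons.comp (measurable_id.prodMk measurable_const))
            by_cases hw0 : f' w = 0
            · rw [hw0, zero_mul]
              have h0 : ∀ᵐ s ∂gauss, f (Fin.cons s w) = 0 := (lintegral_eq_zero_iff hfw).1 hw0
              have h1 : ∀ᵐ s ∂gauss, (f * h) (Fin.cons s w) = 0 := by
                filter_upwards [h0] with s hs
                simp [hs]
              rw [lintegral_congr_ae h1, lintegral_zero]
            · have hg := (hgood w (hr1 w hw0 hwt.ne)).1
              rw [← lintegral_map hhw htm.of_uncurry_left, hg,
                lintegral_withDensity_eq_lintegral_mul _ (hfw.div_const _) hhw,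
                ← lintegral_const_mul _ ((hfw.div_const _).mul hhw)]
              refine lintegral_congr fun s => ?_
              simp only [Pi.mul_apply]
              rw [← mul_assoc, ENNReal.mul_div_cancel hw0 hwt.ne]
    · have hgw : ∀ᵐ w ∂gaussPi n, f' (fun i => T' i w) ≠ 0 ∧ f' (fun i => T' i w) ≠ ∞ := by
        have h : ∀ᵐ w ∂((gaussPi n).map fun w i => T' i w), f' w ≠ 0 ∧ f' w ≠ ∞ := by
          rw [hmap', ae_withDensity_iff hf'm]
          filter_upwards [hf't] with w hw h0
          exact ⟨h0, hw.ne⟩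
        exact ae_of_ae_map hT'm.aemeasurable h
      have hcomp : Measurable fun x : Fin (n + 1) → ℝ => f (fun i => T i x) := hf.comp hTm
      have hset : MeasurableSet {x : Fin (n + 1) → ℝ | (∏ i, τ i x) *
          ((∏ i, gaussianPDF 0 1 (T i x)) * f (fun i => T i x)) = ∏ i, gaussianPDF 0 1 (x i)} := by
        refine measurableSet_eq_fun ?_ ?_
        · refine Measurable.mul ?_ (Measurable.mul ?_ hcomp)
          · exact Finset.measurable_prod _ fun i _ => htri.measurable_deriv i
          · exact Finset.measurable_prod _ fun i _ => hφ.comp (htri.measurable_map i)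
        · exact Finset.measurable_prod _ fun i _ => hφ.comp (measurable_pi_apply i)
      refine (ae_pi_iff_ae_ae_insertNth gauss 0 hset).2 ?_
      simp only [Fin.insertNth_zero']
      filter_upwards [hgw, hdens'] with w hw hd
      filter_upwards [(hgood _ (hr1 _ hw.1 hw.2)).2] with s hs
      have hTs := hTcons s w
      have hT0 : T 0 (Fin.cons s w) = t (fun j => T' j w) s := by simp [T]
      have hTS : ∀ j : Fin n, T j.succ (Fin.cons s w) = T' j w := by simp [T]
      have hτ0 : τ 0 (Fin.cons s w) = σ (fun j => T' j w) s := by simp [τ]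
      have hτS : ∀ j : Fin n, τ j.succ (Fin.cons s w) = τ' j w := by simp [τ]
      rw [hTs, Fin.prod_univ_succ, Fin.prod_univ_succ, Fin.prod_univ_succ]
      simp only [hT0, hTS, hτ0, hτS, Fin.cons_zero, Fin.cons_succ]
      rw [← hs, ← hd]
      have hfe : f (Fin.cons (t (fun j => T' j w) s) fun j => T' j w) =
          f' (fun j => T' j w) * (f (Fin.cons (t (fun j => T' j w) s) fun j => T' j w) /
            f' (fun j => T' j w)) := (ENNReal.mul_div_cancel hw.1 hw.2).symm
      conv_lhs => rw [hfe]
      ring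

end Knothe

section Coordinate
open Set ProbabilityTheory

lemma measurePreserving_insertNth_swap {α : Type*} [MeasurableSpace α] (m : Measure α)
    [SigmaFinite m] {n : ℕ} (i : Fin (n + 1)) :
    MeasurePreserving (fun p : (Fin n → α) × α => i.insertNth (α := fun _ => α) p.2 p.1)
      ((Measure.pi fun _ => m).prod m) (Measure.pi fun _ => m) :=
  (measurePreserving_insertNth m i).comp Measure.measurePreserving_swap

/-- Select the first components of a family of pairs at the indices below `i`, and the second
components above `i`. -/
def splitAt {n : ℕ} (i : Fin (n + 1)) (z : Fin n → ℝ × ℝ) (j : Fin n) : ℝ :=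
  if i.succAbove j < i then (z j).1 else (z j).2

lemma measurePreserving_splitAt {n : ℕ} (i : Fin (n + 1)) (P : Measure (ℝ × ℝ))
    (h1 : P.map Prod.fst = gauss) (h2 : P.map Prod.snd = gauss) :
    MeasurePreserving (splitAt i) (Measure.pi fun _ => P) (gaussPi n) := by
  refine measurePreserving_pi (fun _ : Fin n => P) (fun _ => gauss)
    (f := fun j p => if i.succAbove j < i then p.1 else p.2) fun j => ?_
  by_cases h : i.succAbove j < i
  · simpa [h] using ⟨measurable_fst, h1⟩
  · simpa [h] using ⟨measurable_snd, h2⟩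

section
variable {n : ℕ} {T S : Fin (n + 1) → (Fin (n + 1) → ℝ) → ℝ}
  {τ σ : Fin (n + 1) → (Fin (n + 1) → ℝ) → ℝ≥0∞}

lemma IsTriangular.isLowerDeriv_insertNth {rel : Fin (n + 1) → Fin (n + 1) → Prop}
    (hT : IsTriangular rel T τ) (i : Fin (n + 1)) (w : Fin n → ℝ) :
    IsLowerDeriv (fun s => T i (i.insertNth (α := fun _ => ℝ) s w))
      (fun s => τ i (i.insertNth (α := fun _ => ℝ) s w)) := by
  simpa [Fin.update_insertNth] using hT.isLowerDeriv i (i.insertNth (α := fun _ => ℝ) 0 w)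

/-- The value of a function of the coordinates up to `i` at a split vector. -/
lemma insertNth_splitAt_of_ge {β : Type*} (i : Fin (n + 1)) {g : (Fin (n + 1) → ℝ) → β}
    (hg : ∀ x y, (∀ j, i ≥ j → x j = y j) → g x = g y) (s : ℝ) (z : Fin n → ℝ × ℝ) :
    g (i.insertNth (α := fun _ => ℝ) s (splitAt i z)) =
      g (i.insertNth (α := fun _ => ℝ) s fun j => (z j).1) := by
  refine hg _ _ fun j hj => ?_
  induction j using Fin.succAboveCases i with
  | x => simp
  | p j => simp [splitAt, lt_of_le_of_ne hj (Fin.succAbove_ne i j)]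

/-- The value of a function of the coordinates from `i` on at a split vector. -/
lemma insertNth_splitAt_of_le {β : Type*} (i : Fin (n + 1)) {g : (Fin (n + 1) → ℝ) → β}
    (hg : ∀ x y, (∀ j, i ≤ j → x j = y j) → g x = g y) (s : ℝ) (z : Fin n → ℝ × ℝ) :
    g (i.insertNth (α := fun _ => ℝ) s (splitAt i z)) =
      g (i.insertNth (α := fun _ => ℝ) s fun j => (z j).2) := by
  refine hg _ _ fun j hj => ?_
  induction j using Fin.succAboveCases i with
  | x => simp
  | p j => simp [splitAt, not_lt.2 hj]

lemma ae_memLp_insertNth (i : Fin (n + 1)) {g : (Fin (n + 1) → ℝ) → ℝ} (hm : Measurable g)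
    (hg : MemLp g 2 (gaussPi (n + 1))) :
    ∀ᵐ w ∂gaussPi n, MemLp (fun s => g (i.insertNth (α := fun _ => ℝ) s w)) 2 gauss := by
  have hp := measurePreserving_insertNth_swap gauss (n := n) i
  have h := (hp.integrable_comp_of_integrable hg.integrable_sq).prod_right_ae
  filter_upwards [h] with w hw
  refine (memLp_two_iff_integrable_sq ?_).2 hw
  exact (hm.comp (hp.measurable.comp measurable_prodMk_left)).aestronglyMeasurable

/-- The covariance of the sections of `T` and `S` in the `i`-th coordinate. -/
noncomputable def sectionCov (i : Fin (n + 1)) (T S : (Fin (n + 1) → ℝ) → ℝ) (w : Fin n → ℝ) : ℝ :=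
  ∫ s, T (i.insertNth (α := fun _ => ℝ) s w) * S (i.insertNth (α := fun _ => ℝ) s w) ∂gauss -
    (∫ s, T (i.insertNth (α := fun _ => ℝ) s w) ∂gauss) *
      ∫ s, S (i.insertNth (α := fun _ => ℝ) s w) ∂gauss

lemma integrable_and_integral_sectionCov (hT : IsTriangular (· ≥ ·) T τ)
    (hS : IsTriangular (· ≤ ·) S σ)
    (i : Fin (n + 1)) (hT2 : MemLp (T i) 2 (gaussPi (n + 1)))
    (hS2 : MemLp (S i) 2 (gaussPi (n + 1))) :
    Integrable (sectionCov i (T i) (S i)) (gaussPi n) ∧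
      ∫ w, sectionCov i (T i) (S i) w ∂gaussPi n = ∫ x, T i x * S i x ∂gaussPi (n + 1) -
        (∫ x, T i x ∂gaussPi (n + 1)) * ∫ x, S i x ∂gaussPi (n + 1) := by
  have hp := measurePreserving_insertNth_swap gauss (n := n) i
  have hfub : ∀ {g : (Fin (n + 1) → ℝ) → ℝ}, Integrable g (gaussPi (n + 1)) →
      Integrable (fun w => ∫ s, g (i.insertNth (α := fun _ => ℝ) s w) ∂gauss) (gaussPi n) ∧
      ∫ w, ∫ s, g (i.insertNth (α := fun _ => ℝ) s w) ∂gauss ∂gaussPi n =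
        ∫ x, g x ∂gaussPi (n + 1) := by
    intro g hg
    have h1 := hp.integrable_comp_of_integrable hg
    refine ⟨h1.integral_prod_left, ?_⟩
    have hg' : AEStronglyMeasurable g (Measure.map
        (fun p : (Fin n → ℝ) × ℝ => i.insertNth (α := fun _ => ℝ) p.2 p.1)
        ((gaussPi n).prod gauss)) := by
      rw [hp.map_eq]; exact hg.1
    have h2 := integral_map hp.measurable.aemeasurable hg'
    rw [hp.map_eq] at h2
    exact (h2.trans (integral_prod _ h1)).symm
  obtain ⟨hC, hC'⟩ := hfub (g := fun x => T i x * S i x) (hT2.integrable_mul hS2)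
  obtain ⟨hA, hA'⟩ := hfub (hT2.integrable one_le_two)
  obtain ⟨hB, hB'⟩ := hfub (hS2.integrable one_le_two)
  set A : (Fin n → ℝ) → ℝ := fun w => ∫ s, T i (i.insertNth (α := fun _ => ℝ) s w) ∂gauss with hAd
  set B : (Fin n → ℝ) → ℝ := fun w => ∫ s, S i (i.insertNth (α := fun _ => ℝ) s w) ∂gauss with hBd
  have hsplit := measurePreserving_splitAt (n := n) i (gauss.prod gauss)
    (by rw [Measure.map_fst_prod, measure_univ, one_smul])
    (by rw [Measure.map_snd_prod, measure_univ, one_smul])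
  have harrow := measurePreserving_arrowProdEquivProdArrow ℝ ℝ (Fin n) (fun _ => gauss)
    (fun _ => gauss)
  have hAB : ∀ z, A (splitAt i z) * B (splitAt i z) =
      A (fun j => (z j).1) * B (fun j => (z j).2) := by
    intro z
    simp only [hAd, hBd, insertNth_splitAt_of_ge i (hT.map_congr i),
      insertNth_splitAt_of_le i (hS.map_congr i)]
  have hABm : AEStronglyMeasurable (fun w => A w * B w) (gaussPi n) := hA.1.mul hB.1
  have hprod : Integrable (fun p : (Fin n → ℝ) × (Fin n → ℝ) => A p.1 * B p.2)
      ((gaussPi n).prod (gaussPi n)) := hA.mul_prod hB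
  have h1 : Integrable (fun z : Fin n → ℝ × ℝ => A (fun j => (z j).1) * B (fun j => (z j).2))
      (Measure.pi fun _ => gauss.prod gauss) := harrow.integrable_comp_of_integrable hprod
  have hABi : Integrable (fun w => A w * B w) (gaussPi n) := by
    rw [← hsplit.integrable_comp hABm]
    exact h1.congr (Filter.Eventually.of_forall fun z => (hAB z).symm)
  have hABe : ∫ w, A w * B w ∂gaussPi n = (∫ w, A w ∂gaussPi n) * ∫ w, B w ∂gaussPi n := by
    have hABm' := hABm
    rw [← hsplit.map_eq] at hABm'
    rw [← integral_prod_mul]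
    conv_lhs => rw [← hsplit.map_eq]
    rw [integral_map hsplit.measurable.aemeasurable hABm']
    simp only [hAB]
    exact harrow.integral_comp' (g := fun p : (Fin n → ℝ) × (Fin n → ℝ) => A p.1 * B p.2)
  refine ⟨hC.sub hABi, ?_⟩
  rw [← hC', ← hA', ← hB', ← hABe]
  exact integral_sub hC hABi

lemma ae_lintegral_bridge_le (hT : IsTriangular (· ≥ ·) T τ) (hS : IsTriangular (· ≤ ·) S σ)
    (i : Fin (n + 1)) (hT2 : MemLp (T i) 2 (gaussPi (n + 1)))
    (hS2 : MemLp (S i) 2 (gaussPi (n + 1))) :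
    ∀ᵐ w ∂gaussPi n, 0 ≤ sectionCov i (T i) (S i) w ∧
      ∫⁻ q, τ i (i.insertNth (α := fun _ => ℝ) q.1 w) * σ i (i.insertNth (α := fun _ => ℝ) q.2 w)
        ∂bridge ≤ ENNReal.ofReal (sectionCov i (T i) (S i) w) := by
  filter_upwards [ae_memLp_insertNth i (hT.measurable_map i) hT2,
    ae_memLp_insertNth i (hS.measurable_map i) hS2] with w h1 h2
  have hm : Measurable fun s : ℝ => i.insertNth (α := fun _ => ℝ) s w :=
    (measurable_insertNth i).comp measurable_prodMk_right
  exact ⟨(hT.isLowerDeriv_insertNth i w).covariance_nonneg (hS.isLowerDeriv_insertNth i w) h1 h2,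
    (hT.isLowerDeriv_insertNth i w).lintegral_bridge_le (hS.isLowerDeriv_insertNth i w)
    ((hT.measurable_deriv i).comp hm) ((hS.measurable_deriv i).comp hm) h1 h2⟩

/-- The product of the derivatives of two maps, evaluated at correlated points. -/
noncomputable def pairDeriv {m : ℕ} (τ σ : (Fin m → ℝ) → ℝ≥0∞) (z : Fin m → ℝ × ℝ) : ℝ≥0∞ :=
  τ (fun j => (z j).1) * σ (fun j => (z j).2)

lemma measurable_pairDeriv {m : ℕ} {τ σ : (Fin m → ℝ) → ℝ≥0∞} (hτ : Measurable τ)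
    (hσ : Measurable σ) : Measurable (pairDeriv τ σ) :=
  (hτ.comp (measurable_pi_lambda _ fun j => measurable_fst.comp (measurable_pi_apply j))).mul
    (hσ.comp (measurable_pi_lambda _ fun j => measurable_snd.comp (measurable_pi_apply j)))

lemma pairDeriv_insertNth (hT : IsTriangular (· ≥ ·) T τ) (hS : IsTriangular (· ≤ ·) S σ)
    (i : Fin (n + 1)) (q : ℝ × ℝ) (z : Fin n → ℝ × ℝ) :
    pairDeriv (τ i) (σ i) (i.insertNth (α := fun _ => ℝ × ℝ) q z) =
      τ i (i.insertNth (α := fun _ => ℝ) q.1 (splitAt i z)) *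
        σ i (i.insertNth (α := fun _ => ℝ) q.2 (splitAt i z)) := by
  rw [insertNth_splitAt_of_ge i (hT.deriv_congr i), insertNth_splitAt_of_le i (hS.deriv_congr i),
    pairDeriv]
  congr 2 <;> ext j <;> induction j using Fin.succAboveCases i <;> simp

/-- The covariance of the `i`-th components is at least the integral of the product of the
derivatives against the correlated Gaussian pairs. -/
lemma lintegral_pairDeriv_le (hT : IsTriangular (· ≥ ·) T τ) (hS : IsTriangular (· ≤ ·) S σ)
    (i : Fin (n + 1)) (hT2 : MemLp (T i) 2 (gaussPi (n + 1)))
    (hS2 : MemLp (S i) 2 (gaussPi (n + 1))) :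
    ∫⁻ z, pairDeriv (τ i) (σ i) z ∂(Measure.pi fun _ => bridge) ≤
      ENNReal.ofReal (∫ x, T i x * S i x ∂gaussPi (n + 1) -
        (∫ x, T i x ∂gaussPi (n + 1)) * ∫ x, S i x ∂gaussPi (n + 1)) := by
  obtain ⟨hi, he⟩ := integrable_and_integral_sectionCov hT hS i hT2 hS2
  have hae := ae_lintegral_bridge_le hT hS i hT2 hS2
  have hsplit := measurePreserving_splitAt (n := n) i bridge map_fst_bridge map_snd_bridge
  rw [lintegral_pi_insertNth bridge i
    (measurable_pairDeriv (hT.measurable_deriv i) (hS.measurable_deriv i)), ← he,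
    ofReal_integral_eq_lintegral_ofReal hi (hae.mono fun w hw => hw.1)]
  simp only [pairDeriv_insertNth hT hS]
  calc _ ≤ ∫⁻ z, ENNReal.ofReal (sectionCov i (T i) (S i) (splitAt i z))
        ∂(Measure.pi fun _ => bridge) :=
        lintegral_mono_ae ((hsplit.quasiMeasurePreserving.ae hae).mono fun z hz => hz.2)
    _ = _ := by
        have h := hi.1.aemeasurable.ennreal_ofReal
        rw [← hsplit.map_eq] at h
        conv_rhs => rw [← hsplit.map_eq]
        rw [lintegral_map' h hsplit.measurable.aemeasurable]

/-- If the derivatives multiply to one and the covariance is at most one, then some section is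
affine. -/
lemma exists_affine_section (hT : IsTriangular (· ≥ ·) T τ) (hS : IsTriangular (· ≤ ·) S σ)
    (i : Fin (n + 1)) (hT2 : MemLp (T i) 2 (gaussPi (n + 1)))
    (hS2 : MemLp (S i) 2 (gaussPi (n + 1)))
    (hmul : ∀ᵐ z ∂(Measure.pi fun _ => bridge), pairDeriv (τ i) (σ i) z = 1)
    (hcov : ∫ x, T i x * S i x ∂gaussPi (n + 1) -
        (∫ x, T i x ∂gaussPi (n + 1)) * ∫ x, S i x ∂gaussPi (n + 1) ≤ 1) :
    ∃ (w : Fin n → ℝ) (c b : ℝ), 0 < c ∧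
      ∀ᵐ s ∂gauss, T i (i.insertNth (α := fun _ => ℝ) s w) = c * s + b := by
  obtain ⟨hi, he⟩ := integrable_and_integral_sectionCov hT hS i hT2 hS2
  have hsplit := measurePreserving_splitAt (n := n) i bridge map_fst_bridge map_snd_bridge
  have hset : MeasurableSet {z | pairDeriv (τ i) (σ i) z = 1} :=
    measurable_pairDeriv (hT.measurable_deriv i) (hS.measurable_deriv i)
      (measurableSet_singleton 1)
  rw [ae_pi_iff_ae_ae_insertNth bridge i hset] at hmul
  simp only [pairDeriv_insertNth hT hS] at hmul
  have hge : ∀ᵐ z ∂(Measure.pi fun _ : Fin n => bridge),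
      1 ≤ sectionCov i (T i) (S i) (splitAt i z) := by
    filter_upwards [hmul, hsplit.quasiMeasurePreserving.ae (ae_lintegral_bridge_le hT hS i hT2 hS2)]
      with z hz1 hz2
    have h := hz2.2
    rw [lintegral_congr_ae hz1] at h
    simpa using h
  have hi' : Integrable (fun z => sectionCov i (T i) (S i) (splitAt i z))
      (Measure.pi fun _ : Fin n => bridge) := hsplit.integrable_comp_of_integrable hi
  have hInt : ∫ z, (sectionCov i (T i) (S i) (splitAt i z) - 1)
      ∂(Measure.pi fun _ : Fin n => bridge) ≤ 0 := by
    have h := hi.1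
    rw [← hsplit.map_eq] at h
    have h' := integral_map hsplit.measurable.aemeasurable h
    rw [hsplit.map_eq, he] at h'
    rw [integral_sub hi' (integrable_const _), ← h']
    simpa using hcov
  have hnn : 0 ≤ᵐ[Measure.pi fun _ : Fin n => bridge]
      fun z => sectionCov i (T i) (S i) (splitAt i z) - 1 := by
    filter_upwards [hge] with z hz using sub_nonneg.2 hz
  have hzero := (integral_eq_zero_iff_of_nonneg_ae hnn (hi'.sub (integrable_const _))).1
    (le_antisymm hInt (integral_nonneg_of_ae hnn))
  obtain ⟨z, hz1, hz2, hz3, hz4⟩ := (hzero.and (hmul.and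
    ((hsplit.quasiMeasurePreserving.ae (ae_memLp_insertNth i (hT.measurable_map i) hT2)).and
      (hsplit.quasiMeasurePreserving.ae (ae_memLp_insertNth i (hS.measurable_map i) hS2))))).exists
  refine ⟨splitAt i z, (hT.isLowerDeriv_insertNth i _).ae_eq_affine
    (hS.isLowerDeriv_insertNth i (splitAt i z)) hz3 hz4
    (volume_absolutelyContinuous_bridge.ae_le hz2) ?_⟩
  have h : sectionCov i (T i) (S i) (splitAt i z) - 1 = 0 := hz1
  exact (sub_eq_zero.1 h).le

end

end Coordinate

section Equality
open Set ProbabilityTheory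

lemma measurePreserving_comp_rev (n : ℕ) :
    MeasurePreserving (fun (x : Fin n → ℝ) i => x (Fin.rev i)) (gaussPi n) (gaussPi n) := by
  have hm : Measurable fun (x : Fin n → ℝ) i => x (Fin.rev i) :=
    measurable_pi_lambda _ fun i => measurable_pi_apply _
  refine ⟨hm, (Measure.pi_eq fun s hs => ?_).symm⟩
  rw [Measure.map_apply hm (MeasurableSet.univ_pi hs)]
  have : (fun (x : Fin n → ℝ) i => x (Fin.rev i)) ⁻¹' univ.pi s =
      univ.pi fun i => s (Fin.rev i) := by
    ext x
    simp only [mem_preimage, mem_univ_pi]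
    exact ⟨fun h i => by simpa using h (Fin.rev i), fun h i => by simpa using h (Fin.rev i)⟩
  rw [this, Measure.pi_pi]
  exact Equiv.prod_comp Fin.revPerm fun i => gauss (s i)

/-- The Knothe rearrangement with respect to the reversed order of the coordinates. -/
theorem exists_knothe_rev (n : ℕ) (f : (Fin n → ℝ) → ℝ≥0∞) (hf : Measurable f)
    (hf1 : ∫⁻ x, f x ∂gaussPi n = 1) :
    ∃ (T : Fin n → (Fin n → ℝ) → ℝ) (τ : Fin n → (Fin n → ℝ) → ℝ≥0∞),
      IsTriangular (· ≥ ·) T τ ∧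
      (gaussPi n).map (fun x i => T i x) = (gaussPi n).withDensity f ∧
      ∀ᵐ x ∂gaussPi n, (∏ i, τ i x) * ((∏ i, gaussianPDF 0 1 (T i x)) * f (fun i => T i x)) =
        ∏ i, gaussianPDF 0 1 (x i) := by
  have hR := measurePreserving_comp_rev n
  set R : (Fin n → ℝ) → Fin n → ℝ := fun x i => x (Fin.rev i) with hRd
  have hRR : ∀ x, R (R x) = x := fun x => by ext i; simp [hRd]
  have hfR : Measurable fun x => f (R x) := hf.comp hR.measurable
  obtain ⟨T, τ, hT, hmap, hdens⟩ := exists_knothe n (fun x => f (R x)) hfR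
    (by rw [hR.lintegral_comp hf, hf1])
  have hTm : Measurable fun x i => T i x := measurable_pi_lambda _ hT.measurable_map
  have hupd : ∀ (x : Fin n → ℝ) i s,
      R (Function.update x i s) = Function.update (R x) (Fin.rev i) s := by
    intro x i s
    ext j
    simp only [hRd, Function.update_apply]
    by_cases h : Fin.rev j = i
    · rw [if_pos h, if_pos (Fin.rev_eq_iff.1 h)]
    · rw [if_neg h, if_neg fun h' => h (Fin.rev_eq_iff.2 h')]
  refine ⟨fun i x => T (Fin.rev i) (R x), fun i x => τ (Fin.rev i) (R x), ⟨?_, ?_, ?_, ?_, ?_⟩,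
    ?_, ?_⟩
  · exact fun i => (hT.measurable_map _).comp hR.measurable
  · exact fun i => (hT.measurable_deriv _).comp hR.measurable
  · exact fun i x y h => hT.map_congr _ _ _ fun j hj => h _ (Fin.rev_le_iff.1 hj)
  · exact fun i x y h => hT.deriv_congr _ _ _ fun j hj => h _ (Fin.rev_le_iff.1 hj)
  · intro i x
    simp only [hupd]
    exact hT.isLowerDeriv _ _
  · have h1 : (fun x i => T (Fin.rev i) (R x)) = R ∘ (fun x i => T i x) ∘ R := rfl
    rw [h1, ← Measure.map_map hR.measurable (hTm.comp hR.measurable),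
      ← Measure.map_map hTm hR.measurable, hR.map_eq, hmap]
    refine Measure.ext_of_lintegral _ fun h hh => ?_
    have hhR : Measurable fun x => h (R x) := hh.comp hR.measurable
    rw [lintegral_map hh hR.measurable, lintegral_withDensity_eq_lintegral_mul _ hfR hhR,
      lintegral_withDensity_eq_lintegral_mul _ hf hh]
    exact hR.lintegral_comp (hf.mul hh)
  · filter_upwards [hR.quasiMeasurePreserving.ae hdens] with x hx
    have e1 : ∏ i, τ (Fin.rev i) (R x) = ∏ i, τ i (R x) :=
      Equiv.prod_comp Fin.revPerm fun i => τ i (R x)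
    have e2 : ∏ i, gaussianPDF 0 1 (T (Fin.rev i) (R x)) = ∏ i, gaussianPDF 0 1 (T i (R x)) :=
      Equiv.prod_comp Fin.revPerm fun i => gaussianPDF 0 1 (T i (R x))
    have e3 : ∏ i, gaussianPDF 0 1 (R x i) = ∏ i, gaussianPDF 0 1 (x i) :=
      Equiv.prod_comp Fin.revPerm fun i => gaussianPDF 0 1 (x i)
    rw [e1, e2, ← e3]
    exact hx

lemma log_gaussianPDFReal (x : ℝ) :
    Real.log (gaussianPDFReal 0 1 x) = Real.log (√(2 * Real.pi))⁻¹ - x ^ 2 / 2 := by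
  rw [gaussianPDFReal_zero_one, Real.log_mul (by positivity) (Real.exp_pos _).ne', Real.log_exp]
  ring

/-- The logarithm of the Jacobian of a transport map from the standard Gaussian. -/
lemma sum_log_deriv_eq {n : ℕ} {t : Fin n → ℝ≥0∞} {y x : Fin n → ℝ} {r : ℝ≥0∞}
    (h : (∏ i, t i) * ((∏ i, gaussianPDF 0 1 (y i)) * r) = ∏ i, gaussianPDF 0 1 (x i)) :
    (∀ i, 0 < (t i).toReal) ∧ ∑ i, Real.log (t i).toReal =
      (∑ i, y i ^ 2) / 2 - (∑ i, x i ^ 2) / 2 - Real.log r.toReal := by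
  have h' := congrArg ENNReal.toReal h
  simp only [ENNReal.toReal_mul, ENNReal.toReal_prod, toReal_gaussianPDF] at h'
  have hpos : ∀ z : Fin n → ℝ, 0 < ∏ i, gaussianPDFReal 0 1 (z i) := fun z =>
    Finset.prod_pos fun i _ => gaussianPDFReal_pos 0 1 _ one_ne_zero
  have ht0 : ∏ i, (t i).toReal ≠ 0 := fun h0 => by
    rw [h0, zero_mul] at h'
    exact (hpos x).ne h'
  have hr0 : r.toReal ≠ 0 := fun h0 => by
    rw [h0, mul_zero, mul_zero] at h'
    exact (hpos x).ne h'
  have hti : ∀ i, 0 < (t i).toReal := fun i =>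
    lt_of_le_of_ne ENNReal.toReal_nonneg
      (Ne.symm (Finset.prod_ne_zero_iff.1 ht0 i (Finset.mem_univ i)))
  refine ⟨hti, ?_⟩
  have hlog := congrArg Real.log h'
  rw [Real.log_mul ht0 (mul_ne_zero (hpos y).ne' hr0), Real.log_mul (hpos y).ne' hr0,
    Real.log_prod fun i _ => (hti i).ne',
    Real.log_prod fun i _ => (gaussianPDFReal_pos 0 1 _ one_ne_zero).ne',
    Real.log_prod fun i _ => (gaussianPDFReal_pos 0 1 _ one_ne_zero).ne'] at hlog
  simp only [log_gaussianPDFReal, Finset.sum_sub_distrib, ← Finset.sum_div] at hlog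
  linarith

lemma integrable_sq_gaussPi {n : ℕ} (i : Fin n) : Integrable (fun x => x i ^ 2) (gaussPi n) := by
  have hp := measurePreserving_eval (fun _ : Fin n => gauss) i
  have h : Integrable (fun x : ℝ => x ^ 2) gauss :=
    (memLp_id_gaussianReal (μ := 0) (v := 1) 2).integrable_sq
  exact hp.integrable_comp_of_integrable h

lemma integral_sq_gaussPi {n : ℕ} (i : Fin n) : ∫ x, x i ^ 2 ∂gaussPi n = 1 := by
  have hp := measurePreserving_eval (fun _ : Fin n => gauss) i
  have h := integral_map (μ := gaussPi n) (f := fun x : ℝ => x ^ 2) hp.measurable.aemeasurable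
    (by fun_prop)
  rw [hp.map_eq, integral_sq_gauss] at h
  exact h.symm

/-- Entropy of the target of a triangular transport in terms of the Jacobian. -/
lemma integral_sum_log_deriv {n : ℕ} {rel : Fin n → Fin n → Prop}
    {T : Fin n → (Fin n → ℝ) → ℝ} {τ : Fin n → (Fin n → ℝ) → ℝ≥0∞} (hT : IsTriangular rel T τ)
    {μ : Measure (Fin n → ℝ)} {f : (Fin n → ℝ) → ℝ≥0∞}
    (hmap : (gaussPi n).map (fun x i => T i x) = μ)
    (hdens : ∀ᵐ x ∂gaussPi n, (∏ i, τ i x) * ((∏ i, gaussianPDF 0 1 (T i x)) *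
      f (fun i => T i x)) = ∏ i, gaussianPDF 0 1 (x i))
    (h2 : ∀ i, Integrable (fun x => x i ^ 2) μ)
    (hlog : Integrable (fun x => Real.log (f x).toReal) μ) :
    Integrable (fun x => ∑ i, Real.log (τ i x).toReal) (gaussPi n) ∧
      ∫ x, ∑ i, Real.log (τ i x).toReal ∂gaussPi n =
        (∑ i, ∫ x, x i ^ 2 ∂μ) / 2 - n / 2 - ∫ x, Real.log (f x).toReal ∂μ := by
  have hTm : Measurable fun x i => T i x := measurable_pi_lambda _ hT.measurable_map
  have hp : MeasurePreserving (fun x i => T i x) (gaussPi n) μ := ⟨hTm, hmap⟩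
  have e : (fun x => ∑ i, Real.log (τ i x).toReal) =ᵐ[gaussPi n] fun x =>
      (∑ i, T i x ^ 2) / 2 - (∑ i, x i ^ 2) / 2 - Real.log (f (fun i => T i x)).toReal :=
    hdens.mono fun x hx => (sum_log_deriv_eq hx).2
  have hμ2 : Integrable (fun x : Fin n → ℝ => (∑ i, x i ^ 2) / 2) μ :=
    (integrable_finsetSum _ fun i _ => h2 i).div_const 2
  have i1 : Integrable (fun x => (∑ i, T i x ^ 2) / 2) (gaussPi n) :=
    hp.integrable_comp_of_integrable hμ2
  have i2 : Integrable (fun x : Fin n → ℝ => (∑ i, x i ^ 2) / 2) (gaussPi n) :=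
    (integrable_finsetSum _ fun i _ => integrable_sq_gaussPi i).div_const 2
  have i3 : Integrable (fun x => Real.log (f (fun i => T i x)).toReal) (gaussPi n) :=
    hp.integrable_comp_of_integrable hlog
  have i12 : Integrable (fun x => (∑ i, T i x ^ 2) / 2 - (∑ i, x i ^ 2) / 2) (gaussPi n) :=
    i1.sub i2
  refine ⟨(i12.sub i3).congr e.symm, ?_⟩
  have c1 : ∫ x, (∑ i, T i x ^ 2) / 2 ∂gaussPi n = ∫ x, (∑ i, x i ^ 2) / 2 ∂μ := by
    have h := hμ2.1
    rw [← hmap] at h ⊢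
    exact (integral_map hTm.aemeasurable h).symm
  have c3 : ∫ x, Real.log (f (fun i => T i x)).toReal ∂gaussPi n =
      ∫ x, Real.log (f x).toReal ∂μ := by
    have h := hlog.1
    rw [← hmap] at h ⊢
    exact (integral_map hTm.aemeasurable h).symm
  rw [integral_congr_ae e, integral_sub i12 i3, integral_sub i1 i2, c1, c3, integral_div,
    integral_div, integral_finsetSum _ fun i _ => h2 i,
    integral_finsetSum _ fun i _ => integrable_sq_gaussPi i]
  simp [integral_sq_gaussPi]

/-- If no coupling of `μ` and `ν` has a larger correlation than the one permitted by the
entropies, then the first coordinate of `μ` is a nondegenerate Gaussian. -/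
theorem exists_map_eval_zero_eq_affine {n : ℕ} {μ ν : Measure (Fin (n + 1) → ℝ)}
    {f g : (Fin (n + 1) → ℝ) → ℝ≥0∞} (hf : Measurable f) (hg : Measurable g)
    (hf1 : ∫⁻ x, f x ∂gaussPi (n + 1) = 1) (hg1 : ∫⁻ x, g x ∂gaussPi (n + 1) = 1)
    (hμ : μ = (gaussPi (n + 1)).withDensity f) (hν : ν = (gaussPi (n + 1)).withDensity g)
    (hμ2 : ∀ i, Integrable (fun x => x i ^ 2) μ) (hν2 : ∀ i, Integrable (fun x => x i ^ 2) ν)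
    (hflog : Integrable (fun x => Real.log (f x).toReal) μ)
    (hglog : Integrable (fun x => Real.log (g x).toReal) ν)
    (hmean : ∑ i, (∫ x, x i ∂μ) * ∫ x, x i ∂ν = 0)
    (hopt : ∀ X Y : (Fin (n + 1) → ℝ) → Fin (n + 1) → ℝ, Measurable X → Measurable Y →
      (gaussPi (n + 1)).map X = μ → (gaussPi (n + 1)).map Y = ν →
      ∫ x, ∑ i, X x i * Y x i ∂gaussPi (n + 1) ≤
        (∑ i, ∫ x, x i ^ 2 ∂μ) / 2 + (∑ i, ∫ x, x i ^ 2 ∂ν) / 2 -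
          ∫ x, Real.log (f x).toReal ∂μ - ∫ x, Real.log (g x).toReal ∂ν) :
    ∃ c b : ℝ, 0 < c ∧ μ.map (fun x => x 0) = gauss.map fun s => c * s + b := by
  obtain ⟨T, τ, hT, hTmap, hTdens⟩ := exists_knothe_rev (n + 1) f hf hf1
  obtain ⟨S, σ, hS, hSmap, hSdens⟩ := exists_knothe (n + 1) g hg hg1
  rw [← hμ] at hTmap
  rw [← hν] at hSmap
  have hTm : Measurable fun x i => T i x := measurable_pi_lambda _ hT.measurable_map
  have hSm : Measurable fun x i => S i x := measurable_pi_lambda _ hS.measurable_map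
  obtain ⟨hU, hU'⟩ := integral_sum_log_deriv hT hTmap hTdens hμ2 hflog
  obtain ⟨hW, hW'⟩ := integral_sum_log_deriv hS hSmap hSdens hν2 hglog
  have hT2 : ∀ i, MemLp (T i) 2 (gaussPi (n + 1)) := fun i =>
    (memLp_two_iff_integrable_sq (hT.measurable_map i).aestronglyMeasurable).2
      ((⟨hTm, hTmap⟩ : MeasurePreserving _ _ μ).integrable_comp_of_integrable (hμ2 i))
  have hS2 : ∀ i, MemLp (S i) 2 (gaussPi (n + 1)) := fun i =>
    (memLp_two_iff_integrable_sq (hS.measurable_map i).aestronglyMeasurable).2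
      ((⟨hSm, hSmap⟩ : MeasurePreserving _ _ ν).integrable_comp_of_integrable (hν2 i))
  have hTmean : ∀ i, ∫ x, T i x ∂gaussPi (n + 1) = ∫ x, x i ∂μ := fun i => by
    rw [← hTmap]
    exact (integral_map (f := fun x : Fin (n + 1) → ℝ => x i) hTm.aemeasurable
      (measurable_pi_apply i).aestronglyMeasurable).symm
  have hSmean : ∀ i, ∫ x, S i x ∂gaussPi (n + 1) = ∫ x, x i ∂ν := fun i => by
    rw [← hSmap]
    exact (integral_map (f := fun x : Fin (n + 1) → ℝ => x i) hSm.aemeasurable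
      (measurable_pi_apply i).aestronglyMeasurable).symm
  have hle := hopt _ _ hTm hSm hTmap hSmap
  have hTS : ∀ i, Integrable (fun x => T i x * S i x) (gaussPi (n + 1)) := fun i =>
    (hT2 i).integrable_mul (hS2 i)
  rw [integral_finsetSum _ fun i _ => hTS i] at hle
  set P : Measure (Fin (n + 1) → ℝ × ℝ) := Measure.pi fun _ => bridge with hP
  set cov : Fin (n + 1) → ℝ := fun i => ∫ x, T i x * S i x ∂gaussPi (n + 1) -
    (∫ x, T i x ∂gaussPi (n + 1)) * ∫ x, S i x ∂gaussPi (n + 1) with hcov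
  have hcov_sum : ∑ i, cov i = ∑ i, ∫ x, T i x * S i x ∂gaussPi (n + 1) := by
    simp only [hcov, Finset.sum_sub_distrib, hTmean, hSmean, hmean, sub_zero]
  have hcov0 : ∀ i, 0 ≤ cov i := fun i => by
    rw [hcov]
    simp only
    rw [← (integrable_and_integral_sectionCov hT hS i (hT2 i) (hS2 i)).2]
    exact integral_nonneg_of_ae
      ((ae_lintegral_bridge_le hT hS i (hT2 i) (hS2 i)).mono fun w hw => hw.1)
  have hG : ∀ i, ∫⁻ z, pairDeriv (τ i) (σ i) z ∂P ≤ ENNReal.ofReal (cov i) := fun i =>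
    lintegral_pairDeriv_le hT hS i (hT2 i) (hS2 i)
  have hGm : ∀ i, Measurable (pairDeriv (τ i) (σ i)) := fun i =>
    measurable_pairDeriv (hT.measurable_deriv i) (hS.measurable_deriv i)
  have hGt : ∀ i, ∫⁻ z, pairDeriv (τ i) (σ i) z ∂P ≠ ∞ := fun i =>
    ((hG i).trans_lt ENNReal.ofReal_lt_top).ne
  set r : Fin (n + 1) → (Fin (n + 1) → ℝ × ℝ) → ℝ :=
    fun i z => (pairDeriv (τ i) (σ i) z).toReal with hr
  have hri : ∀ i, Integrable (r i) P := fun i =>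
    integrable_toReal_of_lintegral_ne_top (hGm i).aemeasurable (hGt i)
  have hrle : ∀ i, ∫ z, r i z ∂P ≤ cov i := fun i => by
    rw [hr]
    simp only
    rw [integral_toReal (hGm i).aemeasurable (ae_lt_top (hGm i) (hGt i))]
    exact ENNReal.toReal_le_of_le_ofReal (hcov0 i) (hG i)
  have hfst : MeasurePreserving (fun (z : Fin (n + 1) → ℝ × ℝ) i => (z i).1) P
      (gaussPi (n + 1)) := measurePreserving_pi (fun _ => bridge) (fun _ => gauss)
    fun _ => ⟨measurable_fst, map_fst_bridge⟩
  have hsnd : MeasurePreserving (fun (z : Fin (n + 1) → ℝ × ℝ) i => (z i).2) P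
      (gaussPi (n + 1)) := measurePreserving_pi (fun _ => bridge) (fun _ => gauss)
    fun _ => ⟨measurable_snd, map_snd_bridge⟩
  set L : (Fin (n + 1) → ℝ × ℝ) → ℝ := fun z => ∑ i, Real.log (τ i fun j => (z j).1).toReal +
    ∑ i, Real.log (σ i fun j => (z j).2).toReal with hL
  have hU2 : Integrable (fun z : Fin (n + 1) → ℝ × ℝ =>
      ∑ i, Real.log (τ i fun j => (z j).1).toReal) P := hfst.integrable_comp_of_integrable hU
  have hW2 : Integrable (fun z : Fin (n + 1) → ℝ × ℝ =>
      ∑ i, Real.log (σ i fun j => (z j).2).toReal) P := hsnd.integrable_comp_of_integrable hW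
  have hLi : Integrable L P := hU2.add hW2
  have hLe : ∫ z, L z ∂P = ∫ x, ∑ i, Real.log (τ i x).toReal ∂gaussPi (n + 1) +
      ∫ x, ∑ i, Real.log (σ i x).toReal ∂gaussPi (n + 1) := by
    have h1 := hU.1
    have h2 := hW.1
    rw [← hfst.map_eq] at h1
    rw [← hsnd.map_eq] at h2
    have h1' := integral_map hfst.measurable.aemeasurable h1
    have h2' := integral_map hsnd.measurable.aemeasurable h2
    rw [hfst.map_eq] at h1'
    rw [hsnd.map_eq] at h2'
    rw [h1', h2']
    exact integral_add hU2 hW2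
  have hLr : ∀ᵐ z ∂P, (∀ i, 0 < r i z) ∧ L z = ∑ i, Real.log (r i z) := by
    filter_upwards [hfst.quasiMeasurePreserving.ae hTdens,
      hsnd.quasiMeasurePreserving.ae hSdens] with z h1 h2
    have p1 := (sum_log_deriv_eq h1).1
    have p2 := (sum_log_deriv_eq h2).1
    have hrz : ∀ i, r i z = (τ i fun j => (z j).1).toReal * (σ i fun j => (z j).2).toReal :=
      fun i => ENNReal.toReal_mul
    refine ⟨fun i => by rw [hrz]; exact mul_pos (p1 i) (p2 i), ?_⟩
    simp only [hL, hrz]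
    rw [← Finset.sum_add_distrib]
    exact Finset.sum_congr rfl fun i _ => (Real.log_mul (p1 i).ne' (p2 i).ne').symm
  have hsum_r : Integrable (fun z => ∑ i, r i z) P := integrable_finsetSum _ fun i _ => hri i
  have hD : Integrable (fun z => ∑ i, r i z - L z - (n + 1 : ℝ)) P :=
    (hsum_r.sub hLi).sub (integrable_const _)
  have hDe : ∫ z, (∑ i, r i z - L z - (n + 1 : ℝ)) ∂P =
      ∑ i, ∫ z, r i z ∂P - ∫ z, L z ∂P - (n + 1) := by
    have hsub : Integrable (fun z => ∑ i, r i z - L z) P := hsum_r.sub hLi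
    rw [integral_sub hsub (integrable_const _), integral_sub hsum_r hLi,
      integral_finsetSum _ fun i _ => hri i]
    simp
  have hsplit : ∀ z, ∑ i, (r i z - 1 - Real.log (r i z)) =
      ∑ i, r i z - ∑ i, Real.log (r i z) - (n + 1 : ℝ) := by
    intro z
    simp only [Finset.sum_sub_distrib, Finset.sum_const, Finset.card_univ, Fintype.card_fin,
      nsmul_eq_mul, mul_one]
    push_cast
    ring
  have hnn : 0 ≤ᵐ[P] fun z => ∑ i, r i z - L z - (n + 1 : ℝ) := by
    filter_upwards [hLr] with z hz
    rw [hz.2, ← hsplit]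
    exact Finset.sum_nonneg fun i _ => by linarith [Real.log_le_sub_one_of_pos (hz.1 i)]
  have hsum_le : ∑ i, ∫ z, r i z ∂P ≤ ∑ i, cov i := Finset.sum_le_sum fun i _ => hrle i
  have hzero := (integral_eq_zero_iff_of_nonneg_ae hnn hD).1 (le_antisymm (by
    rw [hDe, hLe, hU', hW']
    push_cast
    linarith) (integral_nonneg_of_ae hnn))
  have hone : ∀ᵐ z ∂P, ∀ i, r i z = 1 := by
    filter_upwards [hLr, hzero] with z hz h0 i
    have h0' : ∑ i, r i z - L z - (n + 1 : ℝ) = 0 := h0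
    rw [hz.2, ← hsplit] at h0'
    have hi := (Finset.sum_eq_zero_iff_of_nonneg fun i _ => by
      linarith [Real.log_le_sub_one_of_pos (hz.1 i)]).1 h0' i (Finset.mem_univ i)
    by_contra hne
    linarith [Real.log_lt_sub_one_of_pos (hz.1 i) hne]
  have hcov1 : ∀ i, 1 ≤ cov i := fun i => by
    refine le_trans (le_of_eq ?_) (hrle i)
    rw [integral_congr_ae (hone.mono fun z hz => hz i)]
    simp
  have hL0 : ∫ z, L z ∂P = 0 := by
    refine integral_eq_zero_of_ae ?_
    filter_upwards [hLr, hone] with z hz h1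
    simp [hz.2, h1]
  have hcov_le : cov 0 ≤ 1 := by
    have h1 : ∑ i, cov i ≤ n + 1 := by
      rw [hcov_sum]
      rw [hLe, hU', hW'] at hL0
      push_cast at hL0
      linarith
    have h2 : ∑ i : Fin n, (1 : ℝ) ≤ ∑ i : Fin n, cov i.succ :=
      Finset.sum_le_sum fun i _ => hcov1 _
    rw [Fin.sum_univ_succ] at h1
    simp only [Finset.sum_const, Finset.card_univ, Fintype.card_fin, nsmul_eq_mul, mul_one] at h2
    linarith
  obtain ⟨w, c, b, hc, hw⟩ := exists_affine_section hT hS 0 (hT2 0) (hS2 0)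
    (hone.mono fun z hz => (ENNReal.toReal_eq_one_iff _).1 (hz 0)) hcov_le
  refine ⟨c, b, hc, ?_⟩
  have heval := measurePreserving_eval (fun _ : Fin (n + 1) => gauss) 0
  rw [← hTmap, Measure.map_map (measurable_pi_apply 0) hTm, ← heval.map_eq,
    Measure.map_map (by fun_prop) heval.measurable]
  refine Measure.map_congr ?_
  filter_upwards [heval.quasiMeasurePreserving.ae hw] with x hx
  refine Eq.trans (hT.map_congr 0 _ _ fun j hj => ?_) hx
  rw [Fin.le_zero_iff.1 hj]
  simp

end Equality

section Euclidean
open Set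

lemma stdGaussian_eq (d : ℕ) :
    _root_.stdGaussian d = ProbabilityTheory.stdGaussian (EuclideanSpace ℝ (Fin d)) := by
  have hb : (0 : ℝ) < ((1 : ℂ) / 2).re := by norm_num
  have hInt : Integrable fun x : EuclideanSpace ℝ (Fin d) =>
      (2 * Real.pi) ^ (-(d : ℝ) / 2) * Real.exp (-‖x‖ ^ 2 / 2) := by
    have h := (GaussianFourier.integrable_cexp_neg_mul_sq_norm_add hb 0
      (0 : EuclideanSpace ℝ (Fin d))).re.const_mul ((2 * Real.pi) ^ (-(d : ℝ) / 2))
    refine h.congr (ae_of_all _ fun x => ?_)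
    have : (-(1 / 2 : ℂ) * (‖x‖ : ℂ) ^ 2 + 0 * ((inner ℝ (0 : EuclideanSpace ℝ (Fin d)) x : ℝ) : ℂ))
        = ((-‖x‖ ^ 2 / 2 : ℝ) : ℂ) := by push_cast; ring
    simp only [this, RCLike.re_to_complex]
    rw [← Complex.ofReal_exp, Complex.ofReal_re]
  have hfin : IsFiniteMeasure (_root_.stdGaussian d) := by
    exact isFiniteMeasure_withDensity_ofReal hInt.2
  refine Measure.ext_of_charFun (funext fun t => ?_)
  rw [ProbabilityTheory.charFun_stdGaussian, charFun_apply, _root_.stdGaussian,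
    integral_withDensity_eq_integral_toReal_smul (by fun_prop) (by simp)]
  have h := GaussianFourier.integral_cexp_neg_mul_sq_norm_add hb Complex.I t
  have hpos : (0 : ℝ) < 2 * Real.pi := by positivity
  have hcongr : ∀ x : EuclideanSpace ℝ (Fin d),
      (ENNReal.ofReal ((2 * Real.pi) ^ (-(d : ℝ) / 2) * Real.exp (-‖x‖ ^ 2 / 2))).toReal •
        Complex.exp ((inner ℝ x t : ℝ) * Complex.I) =
      (((2 * Real.pi) ^ (-(d : ℝ) / 2) : ℝ) : ℂ) *
        Complex.exp (-(1 / 2) * (‖x‖ : ℂ) ^ 2 + Complex.I * (inner ℝ t x : ℝ)) := by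
    intro x
    rw [ENNReal.toReal_ofReal (by positivity), Complex.real_smul, Complex.ofReal_mul, mul_assoc,
      Complex.ofReal_exp, ← Complex.exp_add, real_inner_comm]
    congr 2
    push_cast
    ring
  simp_rw [hcongr]
  rw [integral_const_mul, h, ← mul_assoc]
  have h1 : ((Real.pi : ℂ) / (1 / 2)) ^ ((Module.finrank ℝ (EuclideanSpace ℝ (Fin d)) : ℂ) / 2)
      = (((2 * Real.pi) ^ ((d : ℝ) / 2) : ℝ) : ℂ) := by
    rw [Complex.ofReal_cpow hpos.le, finrank_euclideanSpace_fin]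
    congr 1
    · push_cast; ring
    · push_cast; ring
  rw [h1, ← Complex.ofReal_mul, ← Real.rpow_add hpos, neg_div, neg_add_cancel, Real.rpow_zero,
    Complex.ofReal_one, one_mul, Complex.I_sq]
  congr 1
  ring

lemma map_withDensity_equiv {α β : Type*} [MeasurableSpace α] [MeasurableSpace β]
    (ρ : Measure α) (e : α ≃ᵐ β) {f : α → ℝ≥0∞} (hf : Measurable f) :
    (ρ.withDensity f).map e = (ρ.map e).withDensity (f ∘ e.symm) := by
  ext s hs
  rw [Measure.map_apply e.measurable hs, withDensity_apply _ (e.measurable hs),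
    withDensity_apply _ hs, setLIntegral_map hs (hf.comp e.symm.measurable) e.measurable]
  simp

lemma eq_withDensity_rnDeriv_of_relEnt_ne_top {d : ℕ} {μ : Measure (EuclideanSpace ℝ (Fin d))} [IsProbabilityMeasure μ]
    (h : relEnt μ (_root_.stdGaussian d) ≠ ∞) :
    μ = (ProbabilityTheory.stdGaussian (EuclideanSpace ℝ (Fin d))).withDensity
        (μ.rnDeriv (_root_.stdGaussian d)) ∧
      Integrable (fun x => Real.log (μ.rnDeriv (_root_.stdGaussian d) x).toReal) μ ∧
      relEnt μ (_root_.stdGaussian d) =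
        ENNReal.ofReal (∫ x, Real.log (μ.rnDeriv (_root_.stdGaussian d) x).toReal ∂μ) := by
  unfold relEnt at h ⊢
  split_ifs at h ⊢ with hc
  · refine ⟨?_, hc.2, rfl⟩
    have : IsProbabilityMeasure (_root_.stdGaussian d) := by rw [stdGaussian_eq]; infer_instance
    have h3 : SigmaFinite (_root_.stdGaussian d) := inferInstance
    have h4 : SFinite μ := inferInstance
    have h2 := Measure.withDensity_rnDeriv_eq _ _ hc.1
    rw [← stdGaussian_eq]
    exact h2.symm
  · exact absurd rfl h

/-- The expected inner product of a pair of random vectors with laws `μ` and `ν` is at most the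
value of the symmetrized Talagrand deficit. -/
lemma integral_inner_le_of_W2sq_eq {d : ℕ} {μ ν : Measure (EuclideanSpace ℝ (Fin d))}
    {a b : ℝ} (hμ2 : Integrable (fun x => ‖x‖ ^ 2) μ) (hν2 : Integrable (fun x => ‖x‖ ^ 2) ν)
    (hW : W2sq μ ν = 2 * ENNReal.ofReal a + 2 * ENNReal.ofReal b)
    {Ω : Type*} [MeasurableSpace Ω] {P : Measure Ω}
    {X Y : Ω → EuclideanSpace ℝ (Fin d)} (hX : Measurable X) (hY : Measurable Y)
    (hXμ : P.map X = μ) (hYν : P.map Y = ν) :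
    ∫ ω, ⟪X ω, Y ω⟫ ∂P ≤ (∫ x, ‖x‖ ^ 2 ∂μ) / 2 + (∫ x, ‖x‖ ^ 2 ∂ν) / 2 - a - b := by
  have hX2 : Integrable (fun ω => ‖X ω‖ ^ 2) P := by
    subst hXμ; exact (integrable_map_measure (by fun_prop) hX.aemeasurable).1 hμ2
  have hY2 : Integrable (fun ω => ‖Y ω‖ ^ 2) P := by
    subst hYν; exact (integrable_map_measure (by fun_prop) hY.aemeasurable).1 hν2
  have hXY : Integrable (fun ω => ⟪X ω, Y ω⟫) P := by
    refine (hX2.add hY2).mono' (by fun_prop) (ae_of_all _ fun ω => ?_)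
    have := norm_inner_le_norm (𝕜 := ℝ) (X ω) (Y ω)
    simp only [Pi.add_apply]
    nlinarith [sq_nonneg (‖X ω‖ - ‖Y ω‖), sq_nonneg ‖X ω‖, sq_nonneg ‖Y ω‖]
  have hexp : ∀ ω, ‖X ω - Y ω‖ ^ 2 = ‖X ω‖ ^ 2 + ‖Y ω‖ ^ 2 - 2 * ⟪X ω, Y ω⟫ := fun ω => by
    rw [norm_sub_sq_real]; ring
  have hInt : Integrable (fun ω => ‖X ω - Y ω‖ ^ 2) P := by
    simp_rw [hexp]; exact (hX2.add hY2).sub (hXY.const_mul 2)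
  have hcost : ∫⁻ p, (‖p.1 - p.2‖₊ : ℝ≥0∞) ^ 2 ∂P.map (fun ω => (X ω, Y ω)) =
      ENNReal.ofReal (∫ ω, ‖X ω - Y ω‖ ^ 2 ∂P) := by
    rw [lintegral_map (by fun_prop) (by fun_prop),
      ofReal_integral_eq_lintegral_ofReal hInt (ae_of_all _ fun ω => by positivity)]
    refine lintegral_congr fun ω => ?_
    rw [ENNReal.ofReal_pow (norm_nonneg _), ofReal_norm]
    rfl
  have hle : W2sq μ ν ≤ ENNReal.ofReal (∫ ω, ‖X ω - Y ω‖ ^ 2 ∂P) := by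
    rw [← hcost]
    refine iInf₂_le _ ⟨?_, ?_⟩
    · rw [Measure.map_map measurable_fst (by fun_prop)]; exact hXμ
    · rw [Measure.map_map measurable_snd (by fun_prop)]; exact hYν
  have hle2 : 2 * a + 2 * b ≤ ∫ ω, ‖X ω - Y ω‖ ^ 2 ∂P := by
    rw [← ENNReal.ofReal_le_ofReal_iff (integral_nonneg fun ω => by positivity)]
    refine le_trans (ENNReal.ofReal_add_le) ?_
    rwa [ENNReal.ofReal_mul zero_le_two, ENNReal.ofReal_mul zero_le_two, ENNReal.ofReal_ofNat,
      ← hW]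
  have hI : ∫ ω, ‖X ω - Y ω‖ ^ 2 ∂P =
      (∫ x, ‖x‖ ^ 2 ∂μ) + (∫ x, ‖x‖ ^ 2 ∂ν) - 2 * ∫ ω, ⟪X ω, Y ω⟫ ∂P := by
    simp_rw [hexp]
    have hadd : Integrable (fun ω => ‖X ω‖ ^ 2 + ‖Y ω‖ ^ 2) P := hX2.add hY2
    rw [integral_sub hadd (hXY.const_mul 2), integral_const_mul]
    have : ∫ ω, (‖X ω‖ ^ 2 + ‖Y ω‖ ^ 2) ∂P = (∫ x, ‖x‖ ^ 2 ∂μ) + ∫ x, ‖x‖ ^ 2 ∂ν := by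
      rw [integral_add hX2 hY2, ← hXμ, ← hYν, integral_map hX.aemeasurable (by fun_prop),
        integral_map hY.aemeasurable (by fun_prop)]
    rw [this]
  linarith

lemma exists_orthonormalBasis_zero_eq {n : ℕ} {u : EuclideanSpace ℝ (Fin (n + 1))}
    (hu : ‖u‖ = 1) :
    ∃ b : OrthonormalBasis (Fin (n + 1)) ℝ (EuclideanSpace ℝ (Fin (n + 1))), b 0 = u := by
  obtain ⟨b, hb⟩ := Orthonormal.exists_orthonormalBasis_extension_of_card_eq (𝕜 := ℝ)
    (E := EuclideanSpace ℝ (Fin (n + 1))) (ι := Fin (n + 1)) (by simp) (v := fun _ => u)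
    (s := {0}) ⟨fun i => by simpa using hu, fun i j hij => (hij (Subsingleton.elim i j)).elim⟩
  exact ⟨b, hb 0 rfl⟩

end Euclidean

section Marginals
open Set

/-- Every pair of random vectors with laws `μ` and `ν` has expected inner product at most the
symmetrized Talagrand bound expressed through the densities `f` and `g`. -/
def InnerBound {d : ℕ} (μ ν : Measure (EuclideanSpace ℝ (Fin d)))
    (f g : EuclideanSpace ℝ (Fin d) → ℝ≥0∞) : Prop :=
  ∀ {Ω : Type} [MeasurableSpace Ω] (P : Measure Ω) (X Y : Ω → EuclideanSpace ℝ (Fin d)),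
    Measurable X → Measurable Y → P.map X = μ → P.map Y = ν →
    ∫ ω, ⟪X ω, Y ω⟫ ∂P ≤ (∫ x, ‖x‖ ^ 2 ∂μ) / 2 + (∫ x, ‖x‖ ^ 2 ∂ν) / 2 -
      ∫ x, Real.log (f x).toReal ∂μ - ∫ x, Real.log (g x).toReal ∂ν

lemma InnerBound.symm {d : ℕ} {μ ν : Measure (EuclideanSpace ℝ (Fin d))}
    {f g : EuclideanSpace ℝ (Fin d) → ℝ≥0∞} (h : InnerBound μ ν f g) : InnerBound ν μ g f := by
  intro Ω _ P X Y hX hY hXν hYμ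
  have := h P Y X hY hX hYμ hXν
  simp_rw [real_inner_comm (X _)] at this
  linarith

/-- The coordinates in an orthonormal basis, as a measurable equivalence. -/
noncomputable def coordEquiv {n : ℕ}
    (b : OrthonormalBasis (Fin n) ℝ (EuclideanSpace ℝ (Fin n))) :
    EuclideanSpace ℝ (Fin n) ≃ᵐ (Fin n → ℝ) :=
  b.measurableEquiv.trans (MeasurableEquiv.toLp 2 (Fin n → ℝ)).symm

section coord
variable {n : ℕ} (b : OrthonormalBasis (Fin n) ℝ (EuclideanSpace ℝ (Fin n)))

lemma coordEquiv_apply (x : EuclideanSpace ℝ (Fin n)) (i : Fin n) :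
    coordEquiv b x i = ⟪b i, x⟫ := b.repr_apply_apply x i

lemma coordEquiv_symm_apply (a : Fin n → ℝ) : (coordEquiv b).symm a = ∑ i, a i • b i :=
  (b.sum_repr_symm (WithLp.toLp 2 a)).symm

lemma inner_coordEquiv_symm (a c : Fin n → ℝ) :
    ⟪(coordEquiv b).symm a, (coordEquiv b).symm c⟫ = ∑ i, a i * c i := by
  rw [← b.sum_inner_mul_inner]
  refine Finset.sum_congr rfl fun i _ => ?_
  rw [real_inner_comm, ← coordEquiv_apply, ← coordEquiv_apply]
  simp

lemma sum_sq_coordEquiv (x : EuclideanSpace ℝ (Fin n)) :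
    ∑ i, coordEquiv b x i ^ 2 = ‖x‖ ^ 2 := by
  rw [← real_inner_self_eq_norm_sq, ← (coordEquiv b).symm_apply_apply x, inner_coordEquiv_symm]
  simp [sq]

lemma map_coordEquiv_stdGaussian :
    (ProbabilityTheory.stdGaussian (EuclideanSpace ℝ (Fin n))).map (coordEquiv b) =
      gaussPi n := by
  have h : (fun x : Fin n → ℝ => ∑ i, x i • b i) = (coordEquiv b).symm :=
    funext fun a => (coordEquiv_symm_apply b a).symm
  rw [ProbabilityTheory.stdGaussian_eq_map_pi_orthonormalBasis b, h,
    (coordEquiv b).map_map_symm]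

end coord

variable {n : ℕ} {μ ν : Measure (EuclideanSpace ℝ (Fin (n + 1)))}
    {f g : EuclideanSpace ℝ (Fin (n + 1)) → ℝ≥0∞}

theorem exists_map_inner_eq_gaussianReal [IsProbabilityMeasure μ] [IsProbabilityMeasure ν]
    (hf : Measurable f) (hg : Measurable g)
    (hμ : μ = (ProbabilityTheory.stdGaussian _).withDensity f)
    (hν : ν = (ProbabilityTheory.stdGaussian _).withDensity g)
    (hμ2 : Integrable (fun x => ‖x‖ ^ 2) μ) (hν2 : Integrable (fun x => ‖x‖ ^ 2) ν)
    (hflog : Integrable (fun x => Real.log (f x).toReal) μ)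
    (hglog : Integrable (fun x => Real.log (g x).toReal) ν)
    (hmean : ⟪∫ x, x ∂μ, ∫ x, x ∂ν⟫ = 0) (hopt : InnerBound μ ν f g)
    {u : EuclideanSpace ℝ (Fin (n + 1))} (hu : ‖u‖ = 1) :
    ∃ (m : ℝ) (v : NNReal), v ≠ 0 ∧
      μ.map (fun x => ⟪u, x⟫) = ProbabilityTheory.gaussianReal m v := by
  obtain ⟨b, rfl⟩ := exists_orthonormalBasis_zero_eq hu
  set e := coordEquiv b with he
  have hem := e.measurable
  have hmapD : ∀ {ρ : Measure (EuclideanSpace ℝ (Fin (n + 1)))}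
      {k : EuclideanSpace ℝ (Fin (n + 1)) → ℝ≥0∞}, Measurable k →
      ρ = (ProbabilityTheory.stdGaussian _).withDensity k →
      ρ.map e = (gaussPi (n + 1)).withDensity (k ∘ e.symm) := by
    intro ρ k hk h
    rw [h, map_withDensity_equiv _ _ hk, he, map_coordEquiv_stdGaussian]
  have hone : ∀ {ρ : Measure (EuclideanSpace ℝ (Fin (n + 1)))} [IsProbabilityMeasure ρ]
      {k : EuclideanSpace ℝ (Fin (n + 1)) → ℝ≥0∞}, Measurable k →
      ρ = (ProbabilityTheory.stdGaussian _).withDensity k →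
      ∫⁻ x, (k ∘ e.symm) x ∂gaussPi (n + 1) = 1 := by
    intro ρ _ k hk h
    have := Measure.isProbabilityMeasure_map (μ := ρ) hem.aemeasurable
    rw [← setLIntegral_univ, ← withDensity_apply _ MeasurableSet.univ, ← hmapD hk h, measure_univ]
  have hsq : ∀ {ρ : Measure (EuclideanSpace ℝ (Fin (n + 1)))},
      Integrable (fun x => ‖x‖ ^ 2) ρ → ∀ i, Integrable (fun x => x i ^ 2) (ρ.map e) := by
    intro ρ h i
    rw [integrable_map_equiv]
    refine h.mono' (by fun_prop) (ae_of_all _ fun x => ?_)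
    rw [← sum_sq_coordEquiv b x]
    simp only [Function.comp_apply, norm_pow, Real.norm_eq_abs, sq_abs]
    exact Finset.single_le_sum (f := fun i => coordEquiv b x i ^ 2) (fun j _ => sq_nonneg _)
      (Finset.mem_univ i)
  have hsqI : ∀ {ρ : Measure (EuclideanSpace ℝ (Fin (n + 1)))},
      Integrable (fun x => ‖x‖ ^ 2) ρ → ∑ i, ∫ x, x i ^ 2 ∂ρ.map e = ∫ x, ‖x‖ ^ 2 ∂ρ := by
    intro ρ h
    rw [← integral_finsetSum _ fun i _ => hsq h i, integral_map_equiv]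
    simp_rw [he, sum_sq_coordEquiv]
  have hlog : ∀ (ρ : Measure (EuclideanSpace ℝ (Fin (n + 1))))
      (k : EuclideanSpace ℝ (Fin (n + 1)) → ℝ≥0∞),
      ∫ x, Real.log ((k ∘ e.symm) x).toReal ∂ρ.map e = ∫ x, Real.log (k x).toReal ∂ρ := by
    intro ρ k
    rw [integral_map_equiv]
    simp
  have hlogi : ∀ {ρ : Measure (EuclideanSpace ℝ (Fin (n + 1)))}
      {k : EuclideanSpace ℝ (Fin (n + 1)) → ℝ≥0∞},
      Integrable (fun x => Real.log (k x).toReal) ρ →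
      Integrable (fun x => Real.log ((k ∘ e.symm) x).toReal) (ρ.map e) := by
    intro ρ k h
    rw [integrable_map_equiv]
    refine h.congr (ae_of_all _ fun x => ?_)
    simp
  have hmeanI : ∀ {ρ : Measure (EuclideanSpace ℝ (Fin (n + 1)))} [IsProbabilityMeasure ρ],
      Integrable (fun x => ‖x‖ ^ 2) ρ →
      ∀ i, ∫ x, x i ∂ρ.map e = ⟪b i, ∫ x, x ∂ρ⟫ := by
    intro ρ _ h i
    have hid : Integrable (fun x => x) ρ := by
      have : MemLp (fun x : EuclideanSpace ℝ (Fin (n + 1)) => x) 2 ρ :=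
        (memLp_two_iff_integrable_sq_norm (by fun_prop)).2 h
      exact this.integrable one_le_two
    rw [integral_map_equiv]
    simp_rw [he, coordEquiv_apply]
    exact integral_inner hid (b i)
  obtain ⟨c, t, hc, h⟩ := exists_map_eval_zero_eq_affine (hf.comp e.symm.measurable)
    (hg.comp e.symm.measurable) (hone hf hμ) (hone hg hν) (hmapD hf hμ) (hmapD hg hν) (hsq hμ2)
    (hsq hν2) (hlogi hflog) (hlogi hglog)
    (by
      simp_rw [hmeanI hμ2, hmeanI hν2]
      rw [← hmean, ← b.sum_inner_mul_inner]
      exact Finset.sum_congr rfl fun i _ => by rw [real_inner_comm])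
    (by
      intro X Y hX hY hXμ hYν
      rw [hlog, hlog, hsqI hμ2, hsqI hν2]
      have := hopt (gaussPi (n + 1)) (e.symm ∘ X) (e.symm ∘ Y) (e.symm.measurable.comp hX)
        (e.symm.measurable.comp hY)
        (by rw [← Measure.map_map e.symm.measurable hX, hXμ, e.map_symm_map])
        (by rw [← Measure.map_map e.symm.measurable hY, hYν, e.map_symm_map])
      simpa only [Function.comp_apply, he, inner_coordEquiv_symm] using this)
  refine ⟨t, NNReal.mk (c ^ 2) (sq_nonneg c), ?_, ?_⟩
  · intro h0
    have : c ^ 2 = 0 := congrArg NNReal.toReal h0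
    exact hc.ne' (pow_eq_zero_iff two_ne_zero |>.1 this)
  · have h1 : (fun x => ⟪b 0, x⟫) = (fun x : Fin (n + 1) → ℝ => x 0) ∘ e :=
      funext fun x => (coordEquiv_apply b x 0).symm
    have h2 : (fun s : ℝ => c * s + t) = (fun s => s + t) ∘ fun s => c * s := rfl
    rw [h1, ← Measure.map_map (measurable_pi_apply 0) hem, h, h2,
      ← Measure.map_map (by fun_prop) (by fun_prop), ProbabilityTheory.gaussianReal_map_const_mul,
      ProbabilityTheory.gaussianReal_map_add_const]
    simp

/-- A law all of whose unit marginals are nondegenerate Gaussians is Gaussian, with a positive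
definite covariance matrix. -/
lemma exists_posDef_of_map_inner {d : ℕ} {μ : Measure (EuclideanSpace ℝ (Fin d))}
    [IsProbabilityMeasure μ]
    (h : ∀ u : EuclideanSpace ℝ (Fin d), ‖u‖ = 1 → ∃ (m : ℝ) (v : NNReal), v ≠ 0 ∧
      μ.map (fun x => ⟪u, x⟫) = ProbabilityTheory.gaussianReal m v) :
    ∃ A : Matrix (Fin d) (Fin d) ℝ, A.PosDef ∧
      μ = ProbabilityTheory.multivariateGaussian (∫ x, x ∂μ) A := by
  have hG : ProbabilityTheory.IsGaussian μ := by
    refine ProbabilityTheory.isGaussian_of_map_eq_gaussianReal fun L => ?_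
    obtain ⟨w, rfl⟩ := (InnerProductSpace.toDual ℝ (EuclideanSpace ℝ (Fin d))).surjective L
    by_cases hw : w = 0
    · refine ⟨0, 0, ?_⟩
      subst hw
      rw [map_zero, ProbabilityTheory.gaussianReal_zero_var]
      have : ((0 : EuclideanSpace ℝ (Fin d) →L[ℝ] ℝ) : EuclideanSpace ℝ (Fin d) → ℝ) =
        fun _ => 0 := rfl
      exact (congrArg (fun k => μ.map k) this).trans (by rw [Measure.map_const]; simp)
    · have hw' : ‖w‖ ≠ 0 := norm_ne_zero_iff.2 hw
      obtain ⟨m, v, -, hv⟩ := h (‖w‖⁻¹ • w)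
        (by rw [norm_smul, norm_inv, norm_norm, inv_mul_cancel₀ hw'])
      have : (InnerProductSpace.toDual ℝ (EuclideanSpace ℝ (Fin d)) w :
          EuclideanSpace ℝ (Fin d) → ℝ) =
          (fun s => ‖w‖ * s) ∘ fun x => ⟪‖w‖⁻¹ • w, x⟫ := by
        funext x
        simp [real_inner_smul_left, mul_inv_cancel_left₀ hw']
      refine ⟨‖w‖ * m, NNReal.mk (‖w‖ ^ 2) (sq_nonneg _) * v, ?_⟩
      rw [this, ← Measure.map_map (by fun_prop) (by fun_prop), hv,
        ProbabilityTheory.gaussianReal_map_const_mul]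
  have hL2 : MemLp id 2 μ := ProbabilityTheory.IsGaussian.memLp_two_id
  let e := EuclideanSpace.basisFun (Fin d) ℝ
  let A : Matrix (Fin d) (Fin d) ℝ := fun i j => ProbabilityTheory.covarianceBilin μ (e i) (e j)
  have hA : ∀ x y : EuclideanSpace ℝ (Fin d),
      ProbabilityTheory.covarianceBilin μ x y = x.ofLp ⬝ᵥ A.mulVec y.ofLp := by
    intro x y
    conv_lhs => rw [← e.sum_repr x, ← e.sum_repr y]
    simp only [map_sum, map_smul, sum_apply, smul_apply,
      smul_eq_mul, dotProduct, Matrix.mulVec, Finset.mul_sum, A, e]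
    rw [Finset.sum_comm]
    refine Finset.sum_congr rfl fun i _ => Finset.sum_congr rfl fun j _ => ?_
    simp
    ring
  have hsymm : A.IsHermitian := by
    ext i j
    exact ProbabilityTheory.covarianceBilin_comm (e j) (e i)
  have hpos : A.PosDef := by
    refine Matrix.PosDef.of_dotProduct_mulVec_pos hsymm fun x hx => ?_
    have hx' : ‖WithLp.toLp 2 x‖ ≠ 0 := by
      simpa using hx
    set w : EuclideanSpace ℝ (Fin d) := WithLp.toLp 2 x with hw
    obtain ⟨m, v, hv0, hv⟩ := h (‖w‖⁻¹ • w)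
      (by rw [norm_smul, norm_inv, norm_norm, inv_mul_cancel₀ hx'])
    have h1 : ProbabilityTheory.covarianceBilin μ (‖w‖⁻¹ • w) (‖w‖⁻¹ • w) = v := by
      rw [ProbabilityTheory.covarianceBilin_self hL2]
      have := ProbabilityTheory.variance_id_gaussianReal (μ := m) (v := v)
      rw [← hv, ProbabilityTheory.variance_map (by fun_prop) (by fun_prop)] at this
      exact this
    have h2 : 0 < ProbabilityTheory.covarianceBilin μ w w := by
      have hv' : (0 : ℝ) < v := NNReal.coe_pos.2 (pos_iff_ne_zero.2 hv0)
      rw [← h1] at hv'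
      simp only [map_smul, smul_apply, smul_eq_mul] at hv'
      have h3 : 0 < ‖w‖⁻¹ := by positivity
      exact pos_of_mul_pos_right (pos_of_mul_pos_right hv' h3.le) h3.le
    rw [hA] at h2
    simpa using h2
  refine ⟨A, hpos, ?_⟩
  refine ProbabilityTheory.IsGaussian.ext (by simp) ?_
  ext x y
  rw [ProbabilityTheory.covarianceBilin_multivariateGaussian hpos.posSemidef, hA]

end Marginals

section GaussianLaw
open Set Matrix

variable {d : ℕ}

lemma measurable_toEuclideanLin (T : Matrix (Fin d) (Fin d) ℝ) : Measurable (toEuclideanLin T) :=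
  (LinearMap.continuous_of_finiteDimensional _).measurable

lemma toEuclideanLin_mul_apply (S T : Matrix (Fin d) (Fin d) ℝ) (x : EuclideanSpace ℝ (Fin d)) :
    toEuclideanLin (S * T) x = toEuclideanLin S (toEuclideanLin T x) := by
  simp [toLpLin_apply]

lemma toEuclideanLin_one_apply (x : EuclideanSpace ℝ (Fin d)) :
    toEuclideanLin (1 : Matrix (Fin d) (Fin d) ℝ) x = x := by
  simp

lemma inner_toEuclideanLin_left (T : Matrix (Fin d) (Fin d) ℝ) (x y : EuclideanSpace ℝ (Fin d)) :
    ⟪toEuclideanLin T x, y⟫ = ⟪x, toEuclideanLin Tᵀ y⟫ := by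
  rw [← conjTranspose_eq_transpose_of_trivial, toEuclideanLin_conjTranspose_eq_adjoint,
    LinearMap.adjoint_inner_right]

/-- The affine bijection `x ↦ m + T x` of `ℝ^d`. -/
noncomputable def affineEquiv (m : EuclideanSpace ℝ (Fin d)) (T : Matrix (Fin d) (Fin d) ℝ)
    (hT : IsUnit T.det) : EuclideanSpace ℝ (Fin d) ≃ᵐ EuclideanSpace ℝ (Fin d) where
  toFun x := m + toEuclideanLin T x
  invFun y := toEuclideanLin T⁻¹ (y - m)
  left_inv x := by
    beta_reduce
    rw [add_sub_cancel_left, ← toEuclideanLin_mul_apply, nonsing_inv_mul _ hT,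
      toEuclideanLin_one_apply]
  right_inv y := by
    beta_reduce
    rw [← toEuclideanLin_mul_apply, mul_nonsing_inv _ hT, toEuclideanLin_one_apply,
      add_sub_cancel]
  measurable_toFun := (measurable_toEuclideanLin T).const_add m
  measurable_invFun := (measurable_toEuclideanLin T⁻¹).comp (measurable_id.sub_const m)

lemma norm_sq_toEuclideanLin_inv (T : Matrix (Fin d) (Fin d) ℝ) (x : EuclideanSpace ℝ (Fin d)) :
    ‖toEuclideanLin T⁻¹ x‖ ^ 2 = ⟪x, toEuclideanLin (T * Tᵀ)⁻¹ x⟫ := by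
  rw [← real_inner_self_eq_norm_sq, inner_toEuclideanLin_left, ← toEuclideanLin_mul_apply,
    Matrix.mul_inv_rev, transpose_nonsing_inv]

lemma map_affine_stdGaussian (m : EuclideanSpace ℝ (Fin d)) {T : Matrix (Fin d) (Fin d) ℝ}
    (hT : IsUnit T.det) :
    (ProbabilityTheory.stdGaussian (EuclideanSpace ℝ (Fin d))).map
      (fun x => m + toEuclideanLin T x) = gaussianMeasure m (T * Tᵀ) := by
  have hdet : LinearMap.det (toEuclideanLin T) = T.det := LinearMap.det_toLpLin 2 T
  have hvol : (volume : Measure (EuclideanSpace ℝ (Fin d))).map (affineEquiv m T hT) =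
      ENNReal.ofReal |T.det⁻¹| • volume := by
    have h1 : (affineEquiv m T hT : EuclideanSpace ℝ (Fin d) → EuclideanSpace ℝ (Fin d)) =
      (fun x => m + x) ∘ toEuclideanLin T := rfl
    rw [h1, ← Measure.map_map (by fun_prop) (measurable_toEuclideanLin T),
      Measure.map_linearMap_addHaar_eq_smul_addHaar _ (by rw [hdet]; exact hT.ne_zero), hdet,
      Measure.map_smul, map_add_left_eq_self]
  have hmap := map_withDensity_equiv volume (affineEquiv m T hT)
    (f := fun x => ENNReal.ofReal ((2 * Real.pi) ^ (-(d : ℝ) / 2) * Real.exp (-‖x‖ ^ 2 / 2)))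
    (by fun_prop)
  have hfun : (fun x => m + toEuclideanLin T x) = affineEquiv m T hT := rfl
  rw [← stdGaussian_eq, _root_.stdGaussian, hfun, hmap, hvol, withDensity_smul_measure,
    ← withDensity_smul _
      (by exact Measurable.comp (by fun_prop) (affineEquiv m T hT).symm.measurable),
    gaussianMeasure]
  congr 1
  funext y
  have hy : (affineEquiv m T hT).symm y = toEuclideanLin T⁻¹ (y - m) := rfl
  have hpi : (0 : ℝ) < 2 * Real.pi := by positivity
  have hTd : 0 < |T.det| := abs_pos.2 hT.ne_zero
  simp only [Pi.smul_apply, Function.comp_apply, smul_eq_mul]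
  rw [hy, norm_sq_toEuclideanLin_inv, ← ENNReal.ofReal_mul (abs_nonneg _), ← mul_assoc]
  congr 2
  rw [det_mul, det_transpose, Real.mul_rpow (by positivity) (mul_self_nonneg _), mul_comm,
    ← Real.rpow_natCast, ← Real.rpow_mul hpi.le]
  congr 1
  · congr 1; ring
  · rw [← abs_mul_abs_self T.det, ← sq, ← Real.rpow_natCast, ← Real.rpow_mul hTd.le, abs_inv]
    norm_num
    rw [Real.rpow_neg_one]

lemma exists_posDef_mul_self {A : Matrix (Fin d) (Fin d) ℝ} (hA : A.PosDef) :
    ∃ S : Matrix (Fin d) (Fin d) ℝ, S.PosDef ∧ S * S = A ∧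
      ∀ m, ProbabilityTheory.multivariateGaussian m A =
        (ProbabilityTheory.stdGaussian (EuclideanSpace ℝ (Fin d))).map
          (fun x => m + toEuclideanLin S x) := by
  open scoped MatrixOrder in
  have hs : CFC.sqrt A * CFC.sqrt A = A := CFC.sqrt_mul_sqrt_self A hA.posSemidef.nonneg
  have hps : (CFC.sqrt A).PosSemidef := (CFC.sqrt_nonneg A).posSemidef
  refine ⟨CFC.sqrt A, hps.posDef_iff_isUnit.2 ?_, hs, fun m => rfl⟩
  rw [isUnit_iff_isUnit_det]
  have := hA.det_pos.ne'
  rw [← hs, det_mul] at this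
  exact (left_ne_zero_of_mul this).isUnit

lemma multivariateGaussian_eq (m : EuclideanSpace ℝ (Fin d)) {A : Matrix (Fin d) (Fin d) ℝ}
    (hA : A.PosDef) : ProbabilityTheory.multivariateGaussian m A = gaussianMeasure m A := by
  obtain ⟨S, hS, hSA, h⟩ := exists_posDef_mul_self hA
  have hSt : Sᵀ = S := by simpa using hS.isHermitian.eq
  rw [h, map_affine_stdGaussian m hS.det_pos.ne'.isUnit, hSt, hSA]

lemma integrable_sq_inner_stdGaussian (b : OrthonormalBasis (Fin d) ℝ (EuclideanSpace ℝ (Fin d)))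
    (i : Fin d) : Integrable (fun x => ⟪b i, x⟫ ^ 2)
      (ProbabilityTheory.stdGaussian (EuclideanSpace ℝ (Fin d))) := by
  have h := integrable_sq_gaussPi i
  rw [← map_coordEquiv_stdGaussian b, integrable_map_equiv] at h
  refine h.congr (ae_of_all _ fun x => ?_)
  simp [coordEquiv_apply]

lemma integral_sq_inner_stdGaussian (b : OrthonormalBasis (Fin d) ℝ (EuclideanSpace ℝ (Fin d)))
    (i : Fin d) :
    ∫ x, ⟪b i, x⟫ ^ 2 ∂ProbabilityTheory.stdGaussian (EuclideanSpace ℝ (Fin d)) = 1 := by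
  have h := integral_sq_gaussPi i
  rw [← map_coordEquiv_stdGaussian b, integral_map_equiv] at h
  simpa [coordEquiv_apply] using h

lemma inner_toEuclideanLin_eq_sum {M : Matrix (Fin d) (Fin d) ℝ} (hM : M.IsHermitian)
    (x : EuclideanSpace ℝ (Fin d)) :
    ⟪x, toEuclideanLin M x⟫ = ∑ i, hM.eigenvalues i * ⟪hM.eigenvectorBasis i, x⟫ ^ 2 := by
  have hMt : Mᵀ = M := by simpa using hM.eq
  rw [← hM.eigenvectorBasis.sum_inner_mul_inner]
  refine Finset.sum_congr rfl fun i _ => ?_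
  have h1 : toEuclideanLin M (hM.eigenvectorBasis i) =
      hM.eigenvalues i • hM.eigenvectorBasis i := by
    rw [toLpLin_apply, hM.mulVec_eigenvectorBasis]
    rfl
  have h2 : ⟪hM.eigenvectorBasis i, toEuclideanLin M x⟫ =
      hM.eigenvalues i * ⟪hM.eigenvectorBasis i, x⟫ := by
    have h3 := inner_toEuclideanLin_left M (hM.eigenvectorBasis i) x
    rw [h1, real_inner_smul_left, hMt] at h3
    exact h3.symm
  rw [h2, real_inner_comm]
  ring

lemma integrable_inner_toEuclideanLin {M : Matrix (Fin d) (Fin d) ℝ} (hM : M.IsHermitian) :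
    Integrable (fun x => ⟪x, toEuclideanLin M x⟫)
      (ProbabilityTheory.stdGaussian (EuclideanSpace ℝ (Fin d))) := by
  simp_rw [inner_toEuclideanLin_eq_sum hM]
  exact integrable_finsetSum _ fun i _ => (integrable_sq_inner_stdGaussian _ i).const_mul _

lemma integral_inner_toEuclideanLin {M : Matrix (Fin d) (Fin d) ℝ} (hM : M.IsHermitian) :
    ∫ x, ⟪x, toEuclideanLin M x⟫ ∂ProbabilityTheory.stdGaussian (EuclideanSpace ℝ (Fin d)) =
      ∑ i, hM.eigenvalues i := by
  simp_rw [inner_toEuclideanLin_eq_sum hM]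
  rw [integral_finsetSum _ fun i _ => (integrable_sq_inner_stdGaussian _ i).const_mul _]
  simp_rw [integral_const_mul, integral_sq_inner_stdGaussian, mul_one]

lemma integrable_norm_sq_stdGaussian :
    Integrable (fun x => ‖x‖ ^ 2) (ProbabilityTheory.stdGaussian (EuclideanSpace ℝ (Fin d))) := by
  simp_rw [← (EuclideanSpace.basisFun (Fin d) ℝ).sum_sq_inner_right]
  exact integrable_finsetSum _ fun i _ => integrable_sq_inner_stdGaussian _ i

lemma integral_norm_sq_stdGaussian :
    ∫ x, ‖x‖ ^ 2 ∂ProbabilityTheory.stdGaussian (EuclideanSpace ℝ (Fin d)) = d := by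
  simp_rw [← (EuclideanSpace.basisFun (Fin d) ℝ).sum_sq_inner_right]
  rw [integral_finsetSum _ fun i _ => integrable_sq_inner_stdGaussian _ i]
  simp_rw [integral_sq_inner_stdGaussian]
  simp

/-- The relative entropy of a Gaussian law with respect to the standard Gaussian. -/
lemma integral_log_rnDeriv_gaussianMeasure (m : EuclideanSpace ℝ (Fin d))
    {A : Matrix (Fin d) (Fin d) ℝ} (hA : A.PosDef)
    (h2 : Integrable (fun x => ‖x‖ ^ 2) (gaussianMeasure m A)) :
    ∫ x, Real.log ((gaussianMeasure m A).rnDeriv (_root_.stdGaussian d) x).toReal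
        ∂gaussianMeasure m A =
      (∫ x, ‖x‖ ^ 2 ∂gaussianMeasure m A) / 2 - d / 2 - Real.log A.det / 2 := by
  have hpi : (0 : ℝ) < 2 * Real.pi := by positivity
  have hdet := hA.det_pos
  have hmA : Measurable fun x : EuclideanSpace ℝ (Fin d) =>
      ⟪x - m, toEuclideanLin A⁻¹ (x - m)⟫ :=
    (measurable_id.sub_const m).inner
      ((measurable_toEuclideanLin A⁻¹).comp (measurable_id.sub_const m))
  set p : EuclideanSpace ℝ (Fin d) → ℝ := fun x => ((2 * Real.pi) ^ d * A.det) ^ (-(1 : ℝ) / 2) *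
      Real.exp (-⟪x - m, toEuclideanLin A⁻¹ (x - m)⟫ / 2) with hp
  set q : EuclideanSpace ℝ (Fin d) → ℝ := fun x =>
    (2 * Real.pi) ^ (-(d : ℝ) / 2) * Real.exp (-‖x‖ ^ 2 / 2) with hq
  have hp0 : ∀ x, 0 < p x := fun x => by positivity
  have hq0 : ∀ x, 0 < q x := fun x => by positivity
  have hpm : Measurable p := by
    exact measurable_const.mul (Real.measurable_exp.comp ((hmA.neg).div_const 2))
  have hqm : Measurable q := by fun_prop
  have hμ : gaussianMeasure m A =
      (_root_.stdGaussian d).withDensity fun x => ENNReal.ofReal (p x / q x) := by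
    have h := withDensity_mul (volume : Measure (EuclideanSpace ℝ (Fin d))) hqm.ennreal_ofReal
      (hpm.div hqm).ennreal_ofReal
    refine Eq.trans ?_ h
    rw [gaussianMeasure]
    congr 1
    funext x
    rw [Pi.mul_apply, Pi.div_apply, ← ENNReal.ofReal_mul (hq0 x).le, mul_div_cancel₀ _ (hq0 x).ne']
  have hsf : SigmaFinite (_root_.stdGaussian d) := by rw [stdGaussian_eq]; infer_instance
  have hrn : ∀ᵐ x ∂gaussianMeasure m A,
      Real.log ((gaussianMeasure m A).rnDeriv (_root_.stdGaussian d) x).toReal =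
        ‖x‖ ^ 2 / 2 - ⟪x - m, toEuclideanLin A⁻¹ (x - m)⟫ / 2 - Real.log A.det / 2 := by
    have h := Measure.rnDeriv_withDensity (_root_.stdGaussian d)
      (hpm.div hqm).ennreal_ofReal
    have hac : gaussianMeasure m A ≪ _root_.stdGaussian d := by
      rw [hμ]; exact withDensity_absolutelyContinuous _ _
    have h' := hac.ae_le h
    filter_upwards [h'] with x hx
    have hx2 : (gaussianMeasure m A).rnDeriv (_root_.stdGaussian d) x =
        ENNReal.ofReal (p x / q x) := by
      conv_lhs => rw [hμ]
      exact hx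
    rw [hx2, ENNReal.toReal_ofReal (div_pos (hp0 x) (hq0 x)).le,
      Real.log_div (hp0 x).ne' (hq0 x).ne', hp, hq]
    simp only
    rw [Real.log_mul (by positivity) (by positivity), Real.log_mul (by positivity) (by positivity),
      Real.log_exp, Real.log_exp, Real.log_rpow (by positivity), Real.log_rpow hpi,
      Real.log_mul (by positivity) hdet.ne', Real.log_pow]
    ring
  rw [integral_congr_ae hrn]
  obtain ⟨S, hS, hSA, -⟩ := exists_posDef_mul_self hA
  have hSt : Sᵀ = S := by simpa using hS.isHermitian.eq
  have hSu : IsUnit S.det := hS.det_pos.ne'.isUnit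
  have hmap := map_affine_stdGaussian m hSu
  rw [hSt, hSA] at hmap
  have hquad : ∀ x : EuclideanSpace ℝ (Fin d),
      ⟪m + toEuclideanLin S x - m, toEuclideanLin A⁻¹ (m + toEuclideanLin S x - m)⟫ =
        ‖x‖ ^ 2 := by
    intro x
    have h := norm_sq_toEuclideanLin_inv S (toEuclideanLin S x)
    rw [hSt, hSA, ← toEuclideanLin_mul_apply, nonsing_inv_mul _ hSu,
      toEuclideanLin_one_apply] at h
    rw [add_sub_cancel_left, h]
  have hmeas : Measurable fun x => m + toEuclideanLin S x :=
    (measurable_toEuclideanLin S).const_add m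
  have hqi : Integrable (fun x => ⟪x - m, toEuclideanLin A⁻¹ (x - m)⟫) (gaussianMeasure m A) := by
    rw [← hmap, integrable_map_measure hmA.aestronglyMeasurable hmeas.aemeasurable]
    refine integrable_norm_sq_stdGaussian.congr (ae_of_all _ fun x => ?_)
    simp only [Function.comp_apply, hquad]
  have hqI : ∫ x, ⟪x - m, toEuclideanLin A⁻¹ (x - m)⟫ ∂gaussianMeasure m A = d := by
    rw [← hmap, integral_map hmeas.aemeasurable hmA.aestronglyMeasurable]
    simp_rw [hquad]
    exact integral_norm_sq_stdGaussian
  have hprob : IsProbabilityMeasure (gaussianMeasure m A) := by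
    rw [← hmap]; exact Measure.isProbabilityMeasure_map hmeas.aemeasurable
  have i1 : Integrable (fun x => ‖x‖ ^ 2 / 2) (gaussianMeasure m A) := h2.div_const 2
  have i2 : Integrable (fun x => ⟪x - m, toEuclideanLin A⁻¹ (x - m)⟫ / 2)
    (gaussianMeasure m A) := hqi.div_const 2
  have i12 : Integrable (fun x => ‖x‖ ^ 2 / 2 - ⟪x - m, toEuclideanLin A⁻¹ (x - m)⟫ / 2)
    (gaussianMeasure m A) := i1.sub i2
  rw [integral_sub i12 (integrable_const _), integral_sub i1 i2, integral_div, integral_div, hqI]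
  simp

/-- If the mean of the eigenvalues does not exceed one plus the mean of their logarithms, the
matrix is the identity. -/
lemma eq_one_of_sum_eigenvalues_le {M : Matrix (Fin d) (Fin d) ℝ} (hM : M.PosDef)
    (h : ∑ i, hM.isHermitian.eigenvalues i ≤ d + Real.log M.det) : M = 1 := by
  have hpos := hM.eigenvalues_pos
  have hdet : Real.log M.det = ∑ i, Real.log (hM.isHermitian.eigenvalues i) := by
    rw [hM.isHermitian.det_eq_prod_eigenvalues]
    exact Real.log_prod fun i _ => (hpos i).ne'
  have hle : ∀ i ∈ Finset.univ, 0 ≤ hM.isHermitian.eigenvalues i - 1 -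
      Real.log (hM.isHermitian.eigenvalues i) := fun i _ => by
    linarith [Real.log_le_sub_one_of_pos (hpos i)]
  have hsum : ∑ i, (hM.isHermitian.eigenvalues i - 1 -
      Real.log (hM.isHermitian.eigenvalues i)) = 0 := by
    refine le_antisymm ?_ (Finset.sum_nonneg hle)
    rw [Finset.sum_sub_distrib, Finset.sum_sub_distrib, ← hdet]
    simp only [Finset.sum_const, Finset.card_univ, Fintype.card_fin, nsmul_eq_mul, mul_one]
    linarith
  have hone : ∀ i, hM.isHermitian.eigenvalues i = 1 := by
    intro i
    by_contra hne
    have h1 := (Finset.sum_eq_zero_iff_of_nonneg hle).1 hsum i (Finset.mem_univ i)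
    linarith [Real.log_lt_sub_one_of_pos (hpos i) hne]
  have hfun : (RCLike.ofReal ∘ hM.isHermitian.eigenvalues : Fin d → ℝ) = fun _ => 1 := by
    funext i
    simp [hone i]
  rw [hM.isHermitian.spectral_theorem, hfun]
  simp

/-- Among Gaussian laws, the inner product bound forces inverse covariances. -/
theorem eq_inv_of_innerBound {m : EuclideanSpace ℝ (Fin d)} {A B : Matrix (Fin d) (Fin d) ℝ}
    (hA : A.PosDef) (hB : B.PosDef)
    (hμ2 : Integrable (fun x => ‖x‖ ^ 2) (gaussianMeasure 0 A))
    (hν2 : Integrable (fun x => ‖x‖ ^ 2) (gaussianMeasure m B))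
    (h : InnerBound (gaussianMeasure 0 A) (gaussianMeasure m B)
      ((gaussianMeasure 0 A).rnDeriv (_root_.stdGaussian d))
      ((gaussianMeasure m B).rnDeriv (_root_.stdGaussian d))) : B = A⁻¹ := by
  obtain ⟨S, hS, hSA, -⟩ := exists_posDef_mul_self hA
  have hSt : Sᵀ = S := by simpa using hS.isHermitian.eq
  have hSu : IsUnit S.det := hS.det_pos.ne'.isUnit
  have hSBS : (S * B * S).PosDef := by
    have := hB.mul_mul_conjTranspose_same (B := S)
      (vecMul_injective_iff_isUnit.2 ((isUnit_iff_isUnit_det S).2 hSu))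
    rwa [hS.isHermitian.eq] at this
  obtain ⟨M, hM, hMM, -⟩ := exists_posDef_mul_self hSBS
  have hMt : Mᵀ = M := by simpa using hM.isHermitian.eq
  have hBM : (S⁻¹ * M) * (S⁻¹ * M)ᵀ = B := by
    rw [transpose_mul, transpose_nonsing_inv, hSt, hMt]
    calc S⁻¹ * M * (M * S⁻¹) = S⁻¹ * (M * M) * S⁻¹ := by simp only [Matrix.mul_assoc]
      _ = (S⁻¹ * S) * B * (S * S⁻¹) := by rw [hMM]; simp only [Matrix.mul_assoc]
      _ = B := by rw [nonsing_inv_mul _ hSu, mul_nonsing_inv _ hSu, Matrix.one_mul, Matrix.mul_one]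
  have hTu : IsUnit (S⁻¹ * M).det := by
    rw [det_mul]
    exact (isUnit_nonsing_inv_det _ hSu).mul hM.det_pos.ne'.isUnit
  have hX := map_affine_stdGaussian 0 hSu
  rw [hSt, hSA] at hX
  have hY := map_affine_stdGaussian m hTu
  rw [hBM] at hY
  have hkey := h (ProbabilityTheory.stdGaussian _) _ _
    ((measurable_toEuclideanLin S).const_add 0) ((measurable_toEuclideanLin (S⁻¹ * M)).const_add m)
    hX hY
  have hinner : ∀ x : EuclideanSpace ℝ (Fin d),
      ⟪0 + toEuclideanLin S x, m + toEuclideanLin (S⁻¹ * M) x⟫ =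
        ⟪toEuclideanLin S m, x⟫ + ⟪x, toEuclideanLin M x⟫ := by
    intro x
    rw [zero_add, inner_add_right, real_inner_comm, inner_toEuclideanLin_left S x,
      ← toEuclideanLin_mul_apply, hSt, ← Matrix.mul_assoc, mul_nonsing_inv _ hSu, Matrix.one_mul,
      inner_toEuclideanLin_left S m, hSt]
  have hid : Integrable (fun x => x)
      (ProbabilityTheory.stdGaussian (EuclideanSpace ℝ (Fin d))) :=
    ProbabilityTheory.IsGaussian.integrable_id
  have hI : ∫ x, ⟪0 + toEuclideanLin S x, m + toEuclideanLin (S⁻¹ * M) x⟫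
      ∂ProbabilityTheory.stdGaussian (EuclideanSpace ℝ (Fin d)) =
      ∑ i, hM.isHermitian.eigenvalues i := by
    simp_rw [hinner]
    rw [integral_add (hid.const_inner _) (integrable_inner_toEuclideanLin hM.isHermitian),
      integral_inner hid, ProbabilityTheory.integral_id_stdGaussian, inner_zero_right, zero_add,
      integral_inner_toEuclideanLin]
  have hdetM : Real.log A.det + Real.log B.det = 2 * Real.log M.det := by
    rw [← Real.log_mul hA.det_pos.ne' hB.det_pos.ne']
    have : A.det * B.det = M.det ^ 2 := by
      have h1 := congrArg det hMM
      simp only [det_mul] at h1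
      rw [sq, h1, ← hSA, det_mul]
      ring
    rw [this, Real.log_pow]
    norm_num
  rw [hI, integral_log_rnDeriv_gaussianMeasure 0 hA hμ2,
    integral_log_rnDeriv_gaussianMeasure m hB hν2] at hkey
  have hM1 : M = 1 := eq_one_of_sum_eigenvalues_le hM (by linarith)
  rw [← hBM, hM1, ← hSA, Matrix.mul_one, transpose_nonsing_inv, hSt, Matrix.mul_inv_rev]

end GaussianLaw

end SymmTalagrand

/-- **Equality cases of the symmetrized Talagrand inequality, necessity**: if `μ` is centered,
both measures have finite second moment and finite relative entropy with respect to the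
standard Gaussian `γ`, and `W₂(μ,ν)² = 2 Ent_γ(μ) + 2 Ent_γ(ν)`, then there is a symmetric
positive definite matrix `A` and `m ∈ ℝ^d` with `μ = N(0, A)` and `ν = N(m, A⁻¹)`. -/
theorem symmetrized_talagrand_eq_iff_gaussian (d : ℕ) (hd : 1 ≤ d)
    (μ ν : Measure (EuclideanSpace ℝ (Fin d)))
    [IsProbabilityMeasure μ] [IsProbabilityMeasure ν]
    (hμ2 : Integrable (fun x => ‖x‖ ^ 2) μ) (hν2 : Integrable (fun x => ‖x‖ ^ 2) ν)
    (hμent : relEnt μ (stdGaussian d) ≠ ∞) (hνent : relEnt ν (stdGaussian d) ≠ ∞)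
    (hcent : ∫ x, x ∂μ = 0)
    (heq : W2sq μ ν = 2 * relEnt μ (stdGaussian d) + 2 * relEnt ν (stdGaussian d)) :
    ∃ (A : Matrix (Fin d) (Fin d) ℝ) (m : EuclideanSpace ℝ (Fin d)),
      A.PosDef ∧ A.IsSymm ∧ μ = gaussianMeasure 0 A ∧ ν = gaussianMeasure m A⁻¹ := by
  obtain ⟨n, rfl⟩ : ∃ n, d = n + 1 := ⟨d - 1, by omega⟩
  obtain ⟨hμd, hμlog, hμE⟩ := SymmTalagrand.eq_withDensity_rnDeriv_of_relEnt_ne_top hμent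
  obtain ⟨hνd, hνlog, hνE⟩ := SymmTalagrand.eq_withDensity_rnDeriv_of_relEnt_ne_top hνent
  rw [hμE, hνE] at heq
  have hopt : SymmTalagrand.InnerBound μ ν (μ.rnDeriv (stdGaussian (n + 1)))
      (ν.rnDeriv (stdGaussian (n + 1))) := fun P X Y hX hY hXμ hYν =>
    SymmTalagrand.integral_inner_le_of_W2sq_eq hμ2 hν2 heq hX hY hXμ hYν
  obtain ⟨A, hA, hμA⟩ := SymmTalagrand.exists_posDef_of_map_inner fun u hu =>
    SymmTalagrand.exists_map_inner_eq_gaussianReal (Measure.measurable_rnDeriv _ _)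
      (Measure.measurable_rnDeriv _ _) hμd hνd hμ2 hν2 hμlog hνlog
      (by rw [hcent, inner_zero_left]) hopt hu
  obtain ⟨B, hB, hνB⟩ := SymmTalagrand.exists_posDef_of_map_inner fun u hu =>
    SymmTalagrand.exists_map_inner_eq_gaussianReal (Measure.measurable_rnDeriv _ _)
      (Measure.measurable_rnDeriv _ _) hνd hμd hν2 hμ2 hνlog hμlog
      (by rw [hcent, inner_zero_right]) hopt.symm hu
  rw [hcent, SymmTalagrand.multivariateGaussian_eq 0 hA] at hμA
  rw [SymmTalagrand.multivariateGaussian_eq _ hB] at hνB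
  generalize ∫ x, x ∂ν = m at hνB
  subst hμA hνB
  have hBA := SymmTalagrand.eq_inv_of_innerBound hA hB hμ2 hν2 hopt
  have hAs : A.transpose = A := by simpa using hA.isHermitian.eq
  exact ⟨A, m, hA, hAs, rfl, by rw [hBA]⟩
end

section
/- Talagrand's transport-entropy inequality for the Gaussian measure: Let d ≥ 1 and let γ be the standard Gaussian measure on ℝ^d. For every probability measure ν on ℝ^d with finite second moment, W₂(ν, γ)² ≤ 2 Ent_γ(ν). -/
open MeasureTheory ENNReal
open scoped RealInnerProductSpace

section GaussianTransport

open ProbabilityTheory Set Filter Topology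

theorem continuous_cdf_of_nullSingleton (ν : Measure ℝ) [IsProbabilityMeasure ν]
    (hν : ∀ x, ν {x} = 0) : Continuous (cdf ν) := by
  rw [continuous_iff_continuousAt]
  intro x
  rw [(monotone_cdf ν).continuousAt_iff_leftLim_eq_rightLim, StieltjesFunction.rightLim_eq]
  have h := hν x
  rw [← measure_cdf ν, StieltjesFunction.measure_singleton, ENNReal.ofReal_eq_zero] at h
  exact le_antisymm ((monotone_cdf ν).leftLim_le le_rfl) (by linarith)

theorem exists_cdf_eq {ν : Measure ℝ} [IsProbabilityMeasure ν]
    (hν : ∀ x, ν {x} = 0) {u : ℝ} (hu : u ∈ Ioo (0 : ℝ) 1) : ∃ t, cdf ν t = u := by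
  have hc := continuous_cdf_of_nullSingleton ν hν
  obtain ⟨a, ha⟩ := ((tendsto_cdf_atBot ν).eventually (gt_mem_nhds hu.1)).exists
  obtain ⟨b, hb⟩ := ((tendsto_cdf_atTop ν).eventually (lt_mem_nhds hu.2)).exists
  exact mem_range_of_exists_le_of_exists_ge hc ⟨a, ha.le⟩ ⟨b, hb.le⟩

/-- The cumulative distribution function of an atomless law is uniformly distributed. -/
theorem measure_cdf_le {ν : Measure ℝ} [IsProbabilityMeasure ν]
    (hν : ∀ x, ν {x} = 0) {u : ℝ} (hu : u ∈ Ioo (0 : ℝ) 1) :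
    ν {t | cdf ν t ≤ u} = ENNReal.ofReal u := by
  have hc := continuous_cdf_of_nullSingleton ν hν
  obtain ⟨t, ht⟩ := exists_cdf_eq hν hu
  obtain ⟨b, hb⟩ := ((tendsto_cdf_atTop ν).eventually (lt_mem_nhds hu.2)).exists
  set A := {t | cdf ν t ≤ u}
  have hA : IsClosed A := isClosed_le hc continuous_const
  have hbdd : BddAbove A := ⟨b, fun y hy => by
    by_contra! h
    exact absurd (monotone_cdf ν h.le) (not_le.2 (lt_of_le_of_lt hy hb))⟩
  have hmem : sSup A ∈ A := hA.csSup_mem ⟨t, ht.le⟩ hbdd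
  have hle : t ≤ sSup A := le_csSup hbdd ht.le
  have hAI : A = Iic (sSup A) := by
    ext y
    exact ⟨fun hy => le_csSup hbdd hy, fun hy => (monotone_cdf ν hy).trans hmem⟩
  have hval : cdf ν (sSup A) = u := le_antisymm hmem (ht ▸ monotone_cdf ν hle)
  rw [hAI, ← ofReal_cdf, hval]

theorem ae_cdf_mem_Ioo {ν : Measure ℝ} [IsProbabilityMeasure ν]
    (hν : ∀ x, ν {x} = 0) : ∀ᵐ t ∂ν, cdf ν t ∈ Ioo (0 : ℝ) 1 := by
  have h0 : ν {t | cdf ν t ≤ 0} = 0 := by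
    refine le_antisymm (ENNReal.le_of_forall_pos_le_add fun ε hε _ => ?_) zero_le
    rw [zero_add]
    have hm : min (ε : ℝ) (1 / 2) ∈ Ioo (0 : ℝ) 1 :=
      ⟨lt_min hε (by norm_num), (min_le_right _ _).trans_lt (by norm_num)⟩
    calc ν {t | cdf ν t ≤ 0} ≤ ν {t | cdf ν t ≤ min (ε : ℝ) (1 / 2)} :=
          measure_mono fun t ht => le_trans ht hm.1.le
      _ = ENNReal.ofReal (min (ε : ℝ) (1 / 2)) := measure_cdf_le hν hm
      _ ≤ ENNReal.ofReal ε := ENNReal.ofReal_le_ofReal (min_le_left _ _)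
      _ = ε := ENNReal.ofReal_coe_nnreal
  have hmeas : Measurable (cdf ν) := (monotone_cdf ν).measurable
  have h1 : ν {t | 1 ≤ cdf ν t} = 0 := by
    have hcompl : {t | 1 ≤ cdf ν t} = {t | cdf ν t < 1}ᶜ := by ext; simp
    rw [hcompl, prob_compl_eq_zero_iff (measurableSet_lt hmeas measurable_const)]
    refine le_antisymm prob_le_one (ENNReal.le_of_forall_pos_le_add fun ε hε _ => ?_)
    have hm : 1 - min (ε : ℝ) (1 / 2) ∈ Ioo (0 : ℝ) 1 := by
      have h2 : 0 < min (ε : ℝ) (1 / 2) := lt_min hε (by norm_num)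
      have h3 : min (ε : ℝ) (1 / 2) ≤ 1 / 2 := min_le_right _ _
      constructor <;> linarith
    have h4 : ENNReal.ofReal (1 - min (ε : ℝ) (1 / 2)) ≤ ν {t | cdf ν t < 1} := by
      rw [← measure_cdf_le hν hm]
      exact measure_mono fun t ht => lt_of_le_of_lt ht hm.2
    calc (1 : ℝ≥0∞) = ENNReal.ofReal ((1 - min (ε : ℝ) (1 / 2)) + min (ε : ℝ) (1 / 2)) := by simp
      _ ≤ ENNReal.ofReal (1 - min (ε : ℝ) (1 / 2)) + ENNReal.ofReal (min (ε : ℝ) (1 / 2)) :=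
          ENNReal.ofReal_add_le
      _ ≤ ν {t | cdf ν t < 1} + ENNReal.ofReal ε :=
          add_le_add h4 (ENNReal.ofReal_le_ofReal (min_le_left _ _))
      _ = _ := by rw [ENNReal.ofReal_coe_nnreal]
  have h0' : ∀ᵐ t ∂ν, ¬ cdf ν t ≤ 0 := measure_eq_zero_iff_ae_notMem.1 h0
  have h1' : ∀ᵐ t ∂ν, ¬ 1 ≤ cdf ν t := measure_eq_zero_iff_ae_notMem.1 h1
  filter_upwards [h0', h1'] with t ht ht'
  exact ⟨not_le.1 ht, not_le.1 ht'⟩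

theorem gaussianReal_singleton (x : ℝ) : gaussianReal 0 1 {x} = 0 :=
  gaussianReal_absolutelyContinuous 0 one_ne_zero (by simp)

theorem strictMono_cdf_gaussianReal : StrictMono (cdf (gaussianReal 0 1)) := by
  intro a b hab
  have h : gaussianReal 0 1 (Ioc a b) ≠ 0 := fun h => by
    have := gaussianReal_absolutelyContinuous' 0 one_ne_zero h
    simp only [Real.volume_Ioc, ENNReal.ofReal_eq_zero] at this
    linarith
  rw [← measure_cdf (gaussianReal 0 1), StieltjesFunction.measure_Ioc, ne_eq,
    ENNReal.ofReal_eq_zero] at h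
  linarith

theorem exists_measurable_leftInverse_cdf_gaussianReal :
    ∃ g : ℝ → ℝ, Measurable g ∧ ∀ t, g (cdf (gaussianReal 0 1) t) = t := by
  have h := (continuous_cdf_of_nullSingleton _ gaussianReal_singleton).measurableEmbedding
    strictMono_cdf_gaussianReal.injective
  obtain ⟨g, hg, hgc⟩ := h.exists_measurable_extend measurable_id fun _ => inferInstance
  exact ⟨g, hg, fun t => congrFun hgc t⟩

/-- The quantile function of the standard Gaussian law. -/
noncomputable def gaussianQuantile : ℝ → ℝ :=
  exists_measurable_leftInverse_cdf_gaussianReal.choose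

theorem measurable_gaussianQuantile : Measurable gaussianQuantile :=
  exists_measurable_leftInverse_cdf_gaussianReal.choose_spec.1

theorem cdf_gaussianQuantile {u : ℝ} (hu : u ∈ Ioo (0 : ℝ) 1) :
    cdf (gaussianReal 0 1) (gaussianQuantile u) = u := by
  obtain ⟨t, rfl⟩ := exists_cdf_eq gaussianReal_singleton hu
  rw [gaussianQuantile, exists_measurable_leftInverse_cdf_gaussianReal.choose_spec.2]

theorem cdf_gaussianReal_mem_Ioo (a : ℝ) : cdf (gaussianReal 0 1) a ∈ Ioo (0 : ℝ) 1 :=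
  ⟨(cdf_nonneg _ (a - 1)).trans_lt (strictMono_cdf_gaussianReal (by linarith)),
    (strictMono_cdf_gaussianReal (lt_add_one a)).trans_le (cdf_le_one _ _)⟩

/-- The monotone rearrangement of a law on the line onto the standard Gaussian law. -/
noncomputable def gaussianRearrangement (ν : Measure ℝ) (t : ℝ) : ℝ := gaussianQuantile (cdf ν t)

theorem measurable_gaussianRearrangement (ν : Measure ℝ) :
    Measurable (gaussianRearrangement ν) :=
  measurable_gaussianQuantile.comp (monotone_cdf ν).measurable

theorem map_gaussianRearrangement {ν : Measure ℝ} [IsProbabilityMeasure ν]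
    (hν : ∀ x, ν {x} = 0) : ν.map (gaussianRearrangement ν) = gaussianReal 0 1 := by
  have hS := measurable_gaussianRearrangement ν
  have := Measure.isProbabilityMeasure_map (μ := ν) hS.aemeasurable
  refine Measure.eq_of_cdf _ _ (StieltjesFunction.ext fun a => ?_)
  rw [cdf_eq_real, Measure.real, Measure.map_apply hS measurableSet_Iic,
    measure_congr (t := {t | cdf ν t ≤ cdf (gaussianReal 0 1) a}),
    measure_cdf_le hν (cdf_gaussianReal_mem_Ioo a), ENNReal.toReal_ofReal (cdf_nonneg _ _)]
  filter_upwards [ae_cdf_mem_Ioo hν] with t ht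
  apply propext
  change gaussianRearrangement ν t ≤ a ↔ _ ≤ _
  rw [← strictMono_cdf_gaussianReal.le_iff_le, gaussianRearrangement, cdf_gaussianQuantile ht]

theorem gaussianPDFReal_zero_one (s : ℝ) :
    gaussianPDFReal 0 1 s = (√(2 * Real.pi))⁻¹ * Real.exp (-s ^ 2 / 2) := by
  simp [gaussianPDFReal]

theorem hasDerivAt_neg_gaussianPDFReal (s : ℝ) :
    HasDerivAt (fun s => -gaussianPDFReal 0 1 s) (gaussianPDFReal 0 1 s * s) s := by
  simp_rw [gaussianPDFReal_zero_one]
  have h2 : HasDerivAt (fun s : ℝ => -s ^ 2 / 2) (-s) s := by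
    refine ((hasDerivAt_pow 2 s).fun_neg.div_const 2).congr_deriv ?_
    push_cast
    ring
  exact (h2.exp.const_mul (√(2 * Real.pi))⁻¹).fun_neg.congr_deriv (by ring)

theorem tendsto_gaussianPDFReal_atTop : Tendsto (gaussianPDFReal 0 1) atTop (𝓝 0) := by
  have h : Tendsto (fun s : ℝ => -s ^ 2 / 2) atTop atBot := by
    have := (tendsto_pow_atTop (α := ℝ) two_ne_zero).atTop_div_const (by norm_num : (0:ℝ) < 2)
    refine (tendsto_neg_atTop_atBot.comp this).congr fun s => ?_
    simp [neg_div]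
  have := (Real.tendsto_exp_atBot.comp h).const_mul (√(2 * Real.pi))⁻¹
  rw [mul_zero] at this
  exact this.congr fun s => (gaussianPDFReal_zero_one s).symm

theorem integrable_id_gaussianReal : Integrable (fun s : ℝ => s) (gaussianReal 0 1) :=
  (memLp_id_gaussianReal 1).integrable le_rfl

theorem integrable_gaussianPDFReal_mul : Integrable (fun s => gaussianPDFReal 0 1 s * s) := by
  have h := integrable_id_gaussianReal
  rw [gaussianReal_of_var_ne_zero 0 one_ne_zero] at h
  rw [integrable_withDensity_iff (measurable_gaussianPDF 0 1) (by simp [gaussianPDF])] at h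
  simpa [mul_comm] using h

theorem setIntegral_Ioi_id_gaussianReal (a : ℝ) :
    ∫ s in Ioi a, s ∂gaussianReal 0 1 = gaussianPDFReal 0 1 a := by
  rw [← integral_indicator measurableSet_Ioi, integral_gaussianReal_eq_integral_smul one_ne_zero]
  have h : (fun x => gaussianPDFReal 0 1 x • (Ioi a).indicator (fun s : ℝ => s) x) =
      (Ioi a).indicator fun s => gaussianPDFReal 0 1 s * s := by
    ext x; by_cases hx : x ∈ Ioi a <;> simp [hx]
  rw [h, integral_indicator measurableSet_Ioi,
    integral_Ioi_of_hasDerivAt_of_tendsto' (fun x _ => hasDerivAt_neg_gaussianPDFReal x)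
      integrable_gaussianPDFReal_mul.integrableOn tendsto_gaussianPDFReal_atTop.neg]
  simp

theorem memLp_gaussianRearrangement {ν : Measure ℝ} [IsProbabilityMeasure ν]
    (hν : ∀ x, ν {x} = 0) : MemLp (gaussianRearrangement ν) 2 ν := by
  have h : MemLp (fun s : ℝ => s) 2 (gaussianReal 0 1) := memLp_id_gaussianReal 2
  rw [← map_gaussianRearrangement hν] at h
  exact (memLp_map_measure_iff h.aestronglyMeasurable
    (measurable_gaussianRearrangement ν).aemeasurable).1 h

theorem integral_gaussianRearrangement {ν : Measure ℝ} [IsProbabilityMeasure ν]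
    (hν : ∀ x, ν {x} = 0) : ∫ y, gaussianRearrangement ν y ∂ν = 0 := by
  have h : ∫ s, s ∂gaussianReal 0 1 = 0 := integral_id_gaussianReal
  rw [← map_gaussianRearrangement hν, integral_map
    (measurable_gaussianRearrangement ν).aemeasurable (by fun_prop)] at h
  exact h

theorem setIntegral_Ioi_gaussianRearrangement {ν : Measure ℝ} [IsProbabilityMeasure ν]
    (hν : ∀ x, ν {x} = 0) {t : ℝ} (ht : cdf ν t ∈ Ioo (0 : ℝ) 1) :
    ∫ y in Ioi t, gaussianRearrangement ν y ∂ν =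
      gaussianPDFReal 0 1 (gaussianRearrangement ν t) := by
  have hae : Iic t =ᵐ[ν] {y | cdf ν y ≤ cdf ν t} :=
    ae_eq_of_subset_of_measure_ge (fun y hy => monotone_cdf ν hy)
      (by rw [measure_cdf_le hν ht, ofReal_cdf]) measurableSet_Iic.nullMeasurableSet
      (measure_ne_top _ _)
  have hset : Ioi t =ᵐ[ν] gaussianRearrangement ν ⁻¹' Ioi (gaussianRearrangement ν t) := by
    filter_upwards [hae.mem_iff, ae_cdf_mem_Ioo hν] with y hy hy'
    apply propext
    change t < y ↔ gaussianQuantile (cdf ν t) < gaussianQuantile (cdf ν y)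
    rw [← strictMono_cdf_gaussianReal.lt_iff_lt (b := gaussianQuantile _),
      cdf_gaussianQuantile ht, cdf_gaussianQuantile hy', ← not_le, ← not_le]
    exact not_congr hy
  rw [setIntegral_congr_set hset, ← setIntegral_Ioi_id_gaussianReal,
    ← map_gaussianRearrangement hν, setIntegral_map measurableSet_Ioi (by fun_prop)
      (measurable_gaussianRearrangement ν).aemeasurable]

theorem setIntegral_Ioi_gaussianRearrangement_nonneg {ν : Measure ℝ} [IsProbabilityMeasure ν]
    (hν : ∀ x, ν {x} = 0) (t : ℝ) : 0 ≤ ∫ y in Ioi t, gaussianRearrangement ν y ∂ν := by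
  rcases (cdf_nonneg ν t).eq_or_lt with h0 | h0
  · have h : ν (Iic t) = 0 := by rw [← ofReal_cdf, ← h0, ENNReal.ofReal_zero]
    have hu : (Ioi t : Set ℝ) =ᵐ[ν] univ := by
      rw [← compl_Iic, ae_eq_univ, compl_compl]
      exact h
    rw [setIntegral_congr_set hu, setIntegral_univ, integral_gaussianRearrangement hν]
  rcases (cdf_le_one ν t).eq_or_lt with h1 | h1
  · have h : ν (Ioi t) = 0 := by
      rw [← compl_Iic, prob_compl_eq_zero_iff measurableSet_Iic, ← ofReal_cdf, h1,
        ENNReal.ofReal_one]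
    rw [setIntegral_measure_zero _ h]
  · rw [setIntegral_Ioi_gaussianRearrangement hν ⟨h0, h1⟩]
    exact gaussianPDFReal_nonneg _ _ _

/-- The difference `1_{t < y} - 1_{t < 0}`, whose integral in `t` is `y`. -/
noncomputable def signedInterval (y t : ℝ) : ℝ :=
  (Iio y).indicator 1 t - (Iio 0).indicator 1 t

theorem measurable_signedInterval : Measurable fun p : ℝ × ℝ => signedInterval p.1 p.2 := by
  have h1 : Measurable ({p : ℝ × ℝ | p.2 < p.1}.indicator (1 : ℝ × ℝ → ℝ)) :=
    measurable_one.indicator (measurableSet_lt measurable_snd measurable_fst)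
  have h2 : Measurable ({p : ℝ × ℝ | p.2 < 0}.indicator (1 : ℝ × ℝ → ℝ)) :=
    measurable_one.indicator (measurableSet_lt measurable_snd measurable_const)
  exact h1.sub h2

theorem signedInterval_of_nonneg {y : ℝ} (hy : 0 ≤ y) :
    signedInterval y = (Ico 0 y).indicator 1 := by
  ext t
  simp only [signedInterval, indicator, mem_Iio, mem_Ico, Pi.one_apply]
  grind

theorem signedInterval_of_nonpos {y : ℝ} (hy : y ≤ 0) :
    signedInterval y = -(Ico y 0).indicator 1 := by
  ext t
  simp only [signedInterval, indicator, mem_Iio, mem_Ico, Pi.one_apply, Pi.neg_apply]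
  grind

theorem integrable_signedInterval (y : ℝ) : Integrable (signedInterval y) := by
  rcases le_total 0 y with hy | hy
  · rw [signedInterval_of_nonneg hy]
    exact (integrable_indicator_iff measurableSet_Ico).2 (by simp [Pi.one_def])
  · rw [signedInterval_of_nonpos hy]
    exact ((integrable_indicator_iff measurableSet_Ico).2 (by simp [Pi.one_def])).neg

theorem integral_signedInterval (y : ℝ) : ∫ t, signedInterval y t = y := by
  rcases le_total 0 y with hy | hy
  · simp [signedInterval_of_nonneg hy, integral_indicator_one, hy]
  · simp [signedInterval_of_nonpos hy, integral_neg, integral_indicator_one, hy]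

theorem integral_norm_signedInterval (y : ℝ) : ∫ t, ‖signedInterval y t‖ = |y| := by
  rcases le_total 0 y with hy | hy
  · simp [signedInterval_of_nonneg hy, norm_indicator_eq_indicator_norm,
      integral_indicator measurableSet_Ico, hy, abs_of_nonneg hy]
  · simp [signedInterval_of_nonpos hy, norm_indicator_eq_indicator_norm,
      integral_indicator measurableSet_Ico, hy, abs_of_nonpos hy]

/-- If `S` is centered, integrating its tail integrals yields its first moment. -/
theorem integrable_and_integral_setIntegral_Ioi {ν : Measure ℝ} [IsProbabilityMeasure ν]
    {S : ℝ → ℝ} (hS : Measurable S) (hSi : Integrable S ν) (hS0 : ∫ y, S y ∂ν = 0)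
    (hyS : Integrable (fun y => y * S y) ν) :
    Integrable (fun t => ∫ y in Ioi t, S y ∂ν) ∧
      ∫ t, ∫ y in Ioi t, S y ∂ν = ∫ y, y * S y ∂ν := by
  have hm : Measurable fun p : ℝ × ℝ => signedInterval p.1 p.2 * S p.1 :=
    measurable_signedInterval.mul (hS.comp measurable_fst)
  have hintegrable : Integrable (fun p : ℝ × ℝ => signedInterval p.1 p.2 * S p.1)
      (ν.prod volume) := by
    rw [integrable_prod_iff hm.aestronglyMeasurable]
    refine ⟨Eventually.of_forall fun y => (integrable_signedInterval y).mul_const (S y), ?_⟩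
    refine hyS.norm.congr (Eventually.of_forall fun y => ?_)
    simp only [norm_mul, integral_mul_const, integral_norm_signedInterval, ← Real.norm_eq_abs]
  have htail : ∀ t, ∫ y, signedInterval y t * S y ∂ν = ∫ y in Ioi t, S y ∂ν := by
    intro t
    have h : ∀ y, signedInterval y t * S y =
        (Ioi t).indicator S y - (Iio (0 : ℝ)).indicator 1 t * S y := by
      intro y
      rw [signedInterval, sub_mul]
      congr 1
      by_cases hy : t < y <;> simp [hy]
    simp_rw [h]
    rw [integral_sub (hSi.indicator measurableSet_Ioi) (hSi.const_mul _), integral_const_mul, hS0,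
      mul_zero, sub_zero, integral_indicator measurableSet_Ioi]
  refine ⟨hintegrable.integral_prod_right.congr (Eventually.of_forall htail), ?_⟩
  have hswap := integral_integral_swap (f := fun y t => signedInterval y t * S y) hintegrable
  simp_rw [htail, integral_mul_const, integral_signedInterval] at hswap
  exact hswap.symm

/-- The ratio between the Gaussian density at the rearranged point and the density of the law
`f • γ` at the original point. -/
noncomputable def densityRatio (f : ℝ≥0∞) (s t : ℝ) : ℝ :=
  gaussianPDFReal 0 1 s / (f.toReal * gaussianPDFReal 0 1 t)

theorem densityRatio_nonneg (f : ℝ≥0∞) (s t : ℝ) : 0 ≤ densityRatio f s t :=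
  div_nonneg (gaussianPDFReal_nonneg _ _ _)
    (mul_nonneg ENNReal.toReal_nonneg (gaussianPDFReal_nonneg _ _ _))

theorem le_log_of_densityRatio {f : ℝ≥0∞} (h0 : f ≠ 0) (h1 : f ≠ ∞) (s t : ℝ) :
    1 - densityRatio f s t + (t ^ 2 - s ^ 2) / 2 ≤ Real.log f.toReal := by
  have hf : 0 < f.toReal := ENNReal.toReal_pos h0 h1
  have hr : densityRatio f s t = Real.exp ((t ^ 2 - s ^ 2) / 2 - Real.log f.toReal) := by
    have hc : (√(2 * Real.pi))⁻¹ ≠ 0 := by positivity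
    rw [densityRatio, gaussianPDFReal_zero_one, gaussianPDFReal_zero_one, Real.exp_sub,
      Real.exp_log hf, sub_div, Real.exp_sub, neg_div, neg_div, Real.exp_neg, Real.exp_neg]
    field_simp
  have := Real.add_one_le_exp ((t ^ 2 - s ^ 2) / 2 - Real.log f.toReal)
  rw [hr]
  linarith

theorem withDensity_gaussianReal_singleton (f : ℝ → ℝ≥0∞) (x : ℝ) :
    (gaussianReal 0 1).withDensity f {x} = 0 :=
  withDensity_absolutelyContinuous _ _ (gaussianReal_singleton x)

theorem lintegral_div_density_le {f : ℝ → ℝ≥0∞} (hf : Measurable f) {ψ : ℝ → ℝ}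
    (hψ : AEMeasurable ψ) :
    ∫⁻ t, ENNReal.ofReal (ψ t / ((f t).toReal * gaussianPDFReal 0 1 t))
        ∂(gaussianReal 0 1).withDensity f ≤ ∫⁻ t, ENNReal.ofReal (ψ t) := by
  have hfm : Measurable (gaussianPDF 0 1 * f) := (measurable_gaussianPDF 0 1).mul hf
  have hq : AEMeasurable fun t => ENNReal.ofReal (ψ t / ((f t).toReal * gaussianPDFReal 0 1 t)) :=
    (hψ.div (hf.ennreal_toReal.mul (measurable_gaussianPDFReal 0 1)).aemeasurable).ennreal_ofReal
  rw [gaussianReal_of_var_ne_zero 0 one_ne_zero,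
    ← withDensity_mul _ (measurable_gaussianPDF 0 1) hf,
    lintegral_withDensity_eq_lintegral_mul₀ hfm.aemeasurable hq]
  refine lintegral_mono fun t => ?_
  simp only [Pi.mul_apply]
  rcases eq_or_ne (f t) 0 with h | h
  · simp [h]
  rcases eq_or_ne (f t) ∞ with h' | h'
  · simp [h']
  have hf0 : 0 < (f t).toReal := ENNReal.toReal_pos h h'
  have hp : 0 < gaussianPDFReal 0 1 t := gaussianPDFReal_pos _ _ _ one_ne_zero
  rw [gaussianPDF, ← ENNReal.ofReal_toReal h', ENNReal.toReal_ofReal hf0.le,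
    ← ENNReal.ofReal_mul hp.le, ← ENNReal.ofReal_mul (by positivity), mul_comm (f t).toReal,
    mul_div_cancel₀ _ (by positivity)]

theorem lintegral_densityRatio_le {f : ℝ → ℝ≥0∞} (hf : Measurable f)
    [IsProbabilityMeasure ((gaussianReal 0 1).withDensity f)]
    (h2 : MemLp (fun t : ℝ => t) 2 ((gaussianReal 0 1).withDensity f)) :
    0 ≤ ∫ t, t * gaussianRearrangement ((gaussianReal 0 1).withDensity f) t
        ∂(gaussianReal 0 1).withDensity f ∧
    ∫⁻ t, ENNReal.ofReal (densityRatio (f t)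
        (gaussianRearrangement ((gaussianReal 0 1).withDensity f) t) t)
        ∂(gaussianReal 0 1).withDensity f ≤
      ENNReal.ofReal (∫ t, t * gaussianRearrangement ((gaussianReal 0 1).withDensity f) t
        ∂(gaussianReal 0 1).withDensity f) := by
  have hat := withDensity_gaussianReal_singleton f
  set ν := (gaussianReal 0 1).withDensity f
  have hS := measurable_gaussianRearrangement ν
  have hSL := memLp_gaussianRearrangement hat
  obtain ⟨hψ, hψeq⟩ := integrable_and_integral_setIntegral_Ioi hS (hSL.integrable one_le_two)
    (integral_gaussianRearrangement hat) (h2.integrable_mul hSL)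
  have hψ0 := setIntegral_Ioi_gaussianRearrangement_nonneg hat
  rw [← hψeq]
  refine ⟨integral_nonneg hψ0, ?_⟩
  rw [ofReal_integral_eq_lintegral_ofReal hψ (Eventually.of_forall hψ0)]
  calc _ = ∫⁻ t, ENNReal.ofReal ((∫ y in Ioi t, gaussianRearrangement ν y ∂ν) /
        ((f t).toReal * gaussianPDFReal 0 1 t)) ∂ν := by
        refine lintegral_congr_ae ?_
        filter_upwards [ae_cdf_mem_Ioo hat] with t ht
        rw [densityRatio, setIntegral_Ioi_gaussianRearrangement hat ht]
    _ ≤ ∫⁻ t, ENNReal.ofReal (∫ y in Ioi t, gaussianRearrangement ν y ∂ν) :=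
        lintegral_div_density_le hf hψ.aestronglyMeasurable.aemeasurable

section Disintegration

variable {E : Type*} [MeasurableSpace E]

/-- The density of the first marginal of `h • (γ ⊗ γ₁)`, with `γ₁` the standard Gaussian law. -/
noncomputable def marginalDensity (h : E × ℝ → ℝ≥0∞) (e : E) : ℝ≥0∞ :=
  ∫⁻ t, h (e, t) ∂gaussianReal 0 1

open Classical in
/-- The conditional density of the second coordinate under `h • (γ ⊗ γ₁)`. -/
noncomputable def conditionalDensity (h : E × ℝ → ℝ≥0∞) (e : E) (t : ℝ) : ℝ≥0∞ :=
  if marginalDensity h e = 0 ∨ marginalDensity h e = ∞ then 1 else h (e, t) / marginalDensity h e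

/-- The conditional law of the second coordinate under `h • (γ ⊗ γ₁)`. -/
noncomputable def conditionalLaw (h : E × ℝ → ℝ≥0∞) : Kernel E ℝ :=
  (Kernel.const E (gaussianReal 0 1)).withDensity (conditionalDensity h)

variable {h : E × ℝ → ℝ≥0∞}

theorem measurable_marginalDensity (hh : Measurable h) : Measurable (marginalDensity h) :=
  hh.lintegral_prod_right'

theorem measurable_conditionalDensity (hh : Measurable h) :
    Measurable (Function.uncurry (conditionalDensity h)) := by
  classical
  have hm := measurable_marginalDensity hh
  have hs : MeasurableSet {p : E × ℝ | marginalDensity h p.1 = 0 ∨ marginalDensity h p.1 = ∞} :=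
    ((hm.comp measurable_fst) (measurableSet_singleton 0)).union
      ((hm.comp measurable_fst) (measurableSet_singleton ∞))
  exact Measurable.ite hs measurable_const (hh.div (hm.comp measurable_fst))

theorem conditionalLaw_apply (hh : Measurable h) (e : E) :
    conditionalLaw h e = (gaussianReal 0 1).withDensity (conditionalDensity h e) := by
  rw [conditionalLaw, Kernel.withDensity_apply _ (measurable_conditionalDensity hh),
    Kernel.const_apply]

theorem isMarkovKernel_conditionalLaw (hh : Measurable h) : IsMarkovKernel (conditionalLaw h) := by
  refine ⟨fun e => ⟨?_⟩⟩
  rw [conditionalLaw_apply hh, withDensity_apply _ MeasurableSet.univ, setLIntegral_univ]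
  by_cases he : marginalDensity h e = 0 ∨ marginalDensity h e = ∞
  · simp [conditionalDensity, he]
  · simp only [conditionalDensity, he, if_false, div_eq_mul_inv]
    have hhe : Measurable fun t => h (e, t) := hh.comp measurable_prodMk_left
    rw [lintegral_mul_const _ hhe]
    push Not at he
    exact ENNReal.mul_inv_cancel he.1 he.2

theorem lintegral_marginalDensity {γ : Measure E} [SFinite γ] (hh : Measurable h) :
    ∫⁻ e, marginalDensity h e ∂γ = ∫⁻ p, h p ∂γ.prod (gaussianReal 0 1) :=
  (lintegral_prod _ hh.aemeasurable).symm

theorem marginal_mul_conditional {γ : Measure E} [SFinite γ] (hh : Measurable h)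
    (hfin : ∫⁻ p, h p ∂γ.prod (gaussianReal 0 1) ≠ ∞) :
    ∀ᵐ p ∂γ.prod (gaussianReal 0 1),
      marginalDensity h p.1 * conditionalDensity h p.1 p.2 = h p := by
  have hm := measurable_marginalDensity hh
  have hset : MeasurableSet
      {p : E × ℝ | marginalDensity h p.1 * conditionalDensity h p.1 p.2 = h p} :=
    measurableSet_eq_fun
      ((hm.comp measurable_fst).mul (measurable_conditionalDensity hh)) hh
  rw [Measure.ae_prod_iff_ae_ae hset]
  have hlt := ae_lt_top hm ((lintegral_marginalDensity (γ := γ) hh).trans_ne hfin)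
  filter_upwards [hlt] with e he
  rcases eq_or_ne (marginalDensity h e) 0 with h0 | h0
  · have h0' := h0
    have hhe : Measurable fun t => h (e, t) := hh.comp measurable_prodMk_left
    rw [marginalDensity, lintegral_eq_zero_iff hhe] at h0'
    filter_upwards [h0'] with t ht
    rw [h0, zero_mul]
    exact ht.symm
  · refine Eventually.of_forall fun t => ?_
    simp only [conditionalDensity, h0, he.ne, or_self, if_false]
    exact ENNReal.mul_div_cancel h0 he.ne

theorem compProd_conditionalLaw {γ : Measure E} [SFinite γ] (hh : Measurable h)
    (hfin : ∫⁻ p, h p ∂γ.prod (gaussianReal 0 1) ≠ ∞) :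
    (γ.withDensity (marginalDensity h)) ⊗ₘ conditionalLaw h =
      (γ.prod (gaussianReal 0 1)).withDensity h := by
  have hm := measurable_marginalDensity hh
  have := isMarkovKernel_conditionalLaw hh
  have : IsSFiniteKernel
      ((Kernel.const E (gaussianReal 0 1)).withDensity (conditionalDensity h)) := by
    change IsSFiniteKernel (conditionalLaw h)
    infer_instance
  rw [conditionalLaw, Measure.compProd_withDensity (measurable_conditionalDensity hh),
    Measure.compProd_const, prod_withDensity_left hm]
  refine (withDensity_mul _ (hm.comp measurable_fst)
    (measurable_conditionalDensity hh)).symm.trans ?_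
  exact withDensity_congr_ae (marginal_mul_conditional hh hfin)

theorem map_fst_withDensity_prod {γ : Measure E} [SFinite γ] (hh : Measurable h)
    (hfin : ∫⁻ p, h p ∂γ.prod (gaussianReal 0 1) ≠ ∞) :
    ((γ.prod (gaussianReal 0 1)).withDensity h).map Prod.fst =
      γ.withDensity (marginalDensity h) := by
  have := isMarkovKernel_conditionalLaw hh
  rw [← compProd_conditionalLaw hh hfin]
  exact Measure.fst_compProd _ _

/-- The conditional monotone rearrangement of the second coordinate. -/
noncomputable def conditionalRearrangement (h : E × ℝ → ℝ≥0∞) (p : E × ℝ) : ℝ :=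
  gaussianRearrangement (conditionalLaw h p.1) p.2

theorem measurable_conditionalRearrangement (hh : Measurable h) :
    Measurable (conditionalRearrangement h) := by
  have := isMarkovKernel_conditionalLaw hh
  refine measurable_gaussianQuantile.comp ?_
  simp_rw [cdf_eq_real]
  have hs : MeasurableSet {q : (E × ℝ) × ℝ | q.2 ≤ q.1.2} :=
    measurableSet_le measurable_snd (measurable_snd.comp measurable_fst)
  exact (Kernel.measurable_kernel_prodMk_left
    (κ := (conditionalLaw h).comap Prod.fst measurable_fst) hs).ennreal_toReal

theorem conditionalLaw_singleton (hh : Measurable h) (e : E) (x : ℝ) :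
    conditionalLaw h e {x} = 0 := by
  rw [conditionalLaw_apply hh, withDensity_gaussianReal_singleton]

theorem map_conditionalRearrangement {γ : Measure E} [IsProbabilityMeasure γ] (hh : Measurable h)
    (hfin : ∫⁻ p, h p ∂γ.prod (gaussianReal 0 1) ≠ ∞) {T : E → E} (hT : Measurable T)
    (hTγ : (γ.withDensity (marginalDensity h)).map T = γ) :
    ((γ.prod (gaussianReal 0 1)).withDensity h).map
      (fun p => (T p.1, conditionalRearrangement h p)) = γ.prod (gaussianReal 0 1) := by
  have := isMarkovKernel_conditionalLaw hh
  have hS := measurable_conditionalRearrangement hh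
  have hTS : Measurable fun p : E × ℝ => (T p.1, conditionalRearrangement h p) :=
    (hT.comp measurable_fst).prodMk hS
  ext A hA
  rw [Measure.map_apply hTS hA, ← compProd_conditionalLaw hh hfin,
    Measure.compProd_apply (hTS hA), Measure.prod_apply hA]
  conv_rhs => rw [← hTγ]
  rw [lintegral_map (measurable_measure_prodMk_left hA) hT]
  refine lintegral_congr fun e => ?_
  rw [← map_gaussianRearrangement (conditionalLaw_singleton hh e),
    Measure.map_apply (measurable_gaussianRearrangement _) (measurable_prodMk_left hA)]
  rfl

theorem lintegral_conditional_densityRatio_le {γ : Measure E} [IsProbabilityMeasure γ]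
    (hh : Measurable h) (hone : ∫⁻ p, h p ∂γ.prod (gaussianReal 0 1) = 1)
    (h2 : MemLp (fun p : E × ℝ => p.2) 2 ((γ.prod (gaussianReal 0 1)).withDensity h))
    (hS2 : MemLp (conditionalRearrangement h) 2 ((γ.prod (gaussianReal 0 1)).withDensity h)) :
    0 ≤ ∫ p, p.2 * conditionalRearrangement h p ∂(γ.prod (gaussianReal 0 1)).withDensity h ∧
    ∫⁻ p, ENNReal.ofReal (densityRatio (conditionalDensity h p.1 p.2)
        (conditionalRearrangement h p) p.2) ∂(γ.prod (gaussianReal 0 1)).withDensity h ≤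
      ENNReal.ofReal (∫ p, p.2 * conditionalRearrangement h p
        ∂(γ.prod (gaussianReal 0 1)).withDensity h) := by
  have := isMarkovKernel_conditionalLaw hh
  have hS := measurable_conditionalRearrangement hh
  have hfin : ∫⁻ p, h p ∂γ.prod (gaussianReal 0 1) ≠ ∞ := by simp [hone]
  have hprod := h2.integrable_mul hS2
  have hsq := h2.integrable_sq
  rw [← compProd_conditionalLaw hh hfin] at hprod hsq ⊢
  have hbound : ∀ᵐ e ∂γ.withDensity (marginalDensity h),
      0 ≤ ∫ t, t * conditionalRearrangement h (e, t) ∂conditionalLaw h e ∧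
      ∫⁻ t, ENNReal.ofReal (densityRatio (conditionalDensity h e t)
        (conditionalRearrangement h (e, t)) t) ∂conditionalLaw h e ≤
      ENNReal.ofReal (∫ t, t * conditionalRearrangement h (e, t) ∂conditionalLaw h e) := by
    filter_upwards [hsq.ae_of_compProd] with e he
    have hL : MemLp (fun t : ℝ => t) 2 (conditionalLaw h e) :=
      (memLp_two_iff_integrable_sq (by fun_prop)).2 he
    have hP : IsProbabilityMeasure (conditionalLaw h e) := inferInstance
    simp only [conditionalRearrangement]
    rw [conditionalLaw_apply hh] at hL hP ⊢
    exact lintegral_densityRatio_le ((measurable_conditionalDensity hh).comp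
      measurable_prodMk_left) hL
  have hr : Measurable fun p : E × ℝ => ENNReal.ofReal (densityRatio
      (conditionalDensity h p.1 p.2) (conditionalRearrangement h p) p.2) :=
    (((measurable_gaussianPDFReal 0 1).comp hS).div
      ((measurable_conditionalDensity hh).ennreal_toReal.mul
        ((measurable_gaussianPDFReal 0 1).comp measurable_snd))).ennreal_ofReal
  have hI := Measure.integral_compProd hprod
  simp only [Pi.mul_apply] at hI
  have hF : Integrable (fun e => ∫ t, t * conditionalRearrangement h (e, t) ∂conditionalLaw h e)
      (γ.withDensity (marginalDensity h)) := hprod.integral_compProd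
  rw [hI, Measure.lintegral_compProd hr, ofReal_integral_eq_lintegral_ofReal hF
    (hbound.mono fun e he => he.1)]
  exact ⟨integral_nonneg_of_ae (hbound.mono fun e he => he.1),
    lintegral_mono_ae (hbound.mono fun e he => he.2)⟩

end Disintegration

theorem memLp_conditionalRearrangement {E : Type*} [MeasurableSpace E] {h : E × ℝ → ℝ≥0∞}
    {γ : Measure E} [IsProbabilityMeasure γ] (hh : Measurable h)
    (hfin : ∫⁻ p, h p ∂γ.prod (gaussianReal 0 1) ≠ ∞) {T : E → E} (hT : Measurable T)
    (hTγ : (γ.withDensity (marginalDensity h)).map T = γ) :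
    MemLp (conditionalRearrangement h) 2 ((γ.prod (gaussianReal 0 1)).withDensity h) ∧
    ∫ p, conditionalRearrangement h p ^ 2 ∂(γ.prod (gaussianReal 0 1)).withDensity h = 1 := by
  have hS := measurable_conditionalRearrangement hh
  have hmap : ((γ.prod (gaussianReal 0 1)).withDensity h).map (conditionalRearrangement h) =
      gaussianReal 0 1 := by
    have hTS : MeasurePreserving (fun p : E × ℝ => (T p.1, conditionalRearrangement h p))
        ((γ.prod (gaussianReal 0 1)).withDensity h) (γ.prod (gaussianReal 0 1)) :=
      ⟨(hT.comp measurable_fst).prodMk hS, map_conditionalRearrangement hh hfin hT hTγ⟩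
    exact (measurePreserving_snd.comp hTS).map_eq
  have hL : MemLp (fun s : ℝ => s) 2 (gaussianReal 0 1) := memLp_id_gaussianReal 2
  have hV : ∫ s, s ^ 2 ∂gaussianReal 0 1 = 1 := by
    have hv := variance_fun_id_gaussianReal (μ := 0) (v := 1)
    rw [variance_of_integral_eq_zero (by fun_prop) integral_id_gaussianReal] at hv
    simpa using hv
  rw [← hmap] at hL hV
  refine ⟨(memLp_map_measure_iff hL.aestronglyMeasurable hS.aemeasurable).1 hL, ?_⟩
  rw [integral_map hS.aemeasurable (by fun_prop)] at hV
  exact hV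

theorem integral_sub_sq_le_of_integral_le {Ω : Type*} [MeasurableSpace Ω] {μ : Measure Ω}
    [IsProbabilityMeasure μ] {X S r : Ω → ℝ} (hX : MemLp X 2 μ) (hS : MemLp S 2 μ)
    (hr : Integrable r μ) (hSone : ∫ p, S p ^ 2 ∂μ = 1) (hle : ∫ p, r p ∂μ ≤ ∫ p, X p * S p ∂μ) :
    Integrable (fun p => 1 - r p + (X p ^ 2 - S p ^ 2) / 2) μ ∧
      ∫ p, (X p - S p) ^ 2 ∂μ ≤ 2 * ∫ p, (1 - r p + (X p ^ 2 - S p ^ 2) / 2) ∂μ := by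
  have hX2 := hX.integrable_sq
  have hS2 := hS.integrable_sq
  have hXS : Integrable (fun p => X p * S p) μ := hX.integrable_mul hS
  have hsub : Integrable (fun p => (X p ^ 2 - S p ^ 2) / 2) μ := (hX2.sub hS2).div_const 2
  have hsub1 : Integrable (fun p => 1 - r p) μ := (integrable_const 1).sub hr
  refine ⟨hsub1.add hsub, ?_⟩
  have hsq : ∫ p, (X p - S p) ^ 2 ∂μ =
      ∫ p, X p ^ 2 ∂μ - 2 * ∫ p, X p * S p ∂μ + ∫ p, S p ^ 2 ∂μ := by
    have hd : Integrable (fun p => X p ^ 2 - 2 * (X p * S p)) μ := hX2.sub (hXS.const_mul 2)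
    rw [← integral_const_mul, ← integral_sub hX2 (hXS.const_mul 2), ← integral_add hd hS2]
    refine integral_congr_ae (Eventually.of_forall fun p => ?_)
    simp only
    ring
  rw [integral_add hsub1 hsub, integral_sub (integrable_const 1) hr, integral_div,
    integral_sub hX2 hS2, hsq, hSone]
  simp only [integral_const, probReal_univ, smul_eq_mul, mul_one]
  linarith

/-- The one-dimensional transport-entropy estimate for the conditional laws of the last coordinate,
in the form of an integrable minorant of the conditional log-density. -/
theorem exists_conditional_entropy_minorant {E : Type*} [MeasurableSpace E] {h : E × ℝ → ℝ≥0∞}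
    {γ : Measure E} [IsProbabilityMeasure γ] (hh : Measurable h)
    (hone : ∫⁻ p, h p ∂γ.prod (gaussianReal 0 1) = 1)
    (h2 : MemLp (fun p : E × ℝ => p.2) 2 ((γ.prod (gaussianReal 0 1)).withDensity h))
    {T : E → E} (hT : Measurable T) (hTγ : (γ.withDensity (marginalDensity h)).map T = γ) :
    ∃ c : E × ℝ → ℝ, Integrable c ((γ.prod (gaussianReal 0 1)).withDensity h) ∧
      (∀ᵐ p ∂(γ.prod (gaussianReal 0 1)).withDensity h,
        Real.log (marginalDensity h p.1).toReal + c p ≤ Real.log (h p).toReal) ∧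
      ∫ p, (p.2 - conditionalRearrangement h p) ^ 2 ∂(γ.prod (gaussianReal 0 1)).withDensity h ≤
        2 * ∫ p, c p ∂(γ.prod (gaussianReal 0 1)).withDensity h := by
  have hfin : ∫⁻ p, h p ∂γ.prod (gaussianReal 0 1) ≠ ∞ := by simp [hone]
  have hS := measurable_conditionalRearrangement hh
  obtain ⟨hS2, hSone⟩ := memLp_conditionalRearrangement hh hfin hT hTγ
  obtain ⟨hpos, hle⟩ := lintegral_conditional_densityRatio_le hh hone h2 hS2
  have hcond := marginal_mul_conditional hh hfin
  have hprob : IsProbabilityMeasure ((γ.prod (gaussianReal 0 1)).withDensity h) :=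
    ⟨by rw [withDensity_apply _ MeasurableSet.univ, setLIntegral_univ, hone]⟩
  have hh0 : ∀ᵐ p ∂(γ.prod (gaussianReal 0 1)).withDensity h, h p ≠ 0 :=
    (ae_withDensity_iff hh).2 (Eventually.of_forall fun _ hp => hp)
  have hac := withDensity_absolutelyContinuous (γ.prod (gaussianReal 0 1)) h
  have hhtop := hac.ae_le (ae_lt_top hh hfin)
  have hcond := hac.ae_le hcond
  set μ := (γ.prod (gaussianReal 0 1)).withDensity h
  set S := conditionalRearrangement h
  have hr : Measurable fun p : E × ℝ => densityRatio (conditionalDensity h p.1 p.2) (S p) p.2 :=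
    ((measurable_gaussianPDFReal 0 1).comp hS).div
      ((measurable_conditionalDensity hh).ennreal_toReal.mul
        ((measurable_gaussianPDFReal 0 1).comp measurable_snd))
  have hr0 : 0 ≤ᵐ[μ] fun p => densityRatio (conditionalDensity h p.1 p.2) (S p) p.2 :=
    Eventually.of_forall fun p => densityRatio_nonneg _ _ _
  have hri : Integrable (fun p => densityRatio (conditionalDensity h p.1 p.2) (S p) p.2) μ :=
    ⟨hr.aestronglyMeasurable, (hasFiniteIntegral_iff_ofReal hr0).2
      (hle.trans_lt ENNReal.ofReal_lt_top)⟩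
  have hrle : ∫ p, densityRatio (conditionalDensity h p.1 p.2) (S p) p.2 ∂μ ≤
      ∫ p, p.2 * S p ∂μ := by
    rw [integral_eq_lintegral_of_nonneg_ae hr0 hr.aestronglyMeasurable]
    exact ENNReal.toReal_le_of_le_ofReal hpos hle
  obtain ⟨hintegrable, hcost⟩ := integral_sub_sq_le_of_integral_le h2 hS2 hri hSone hrle
  refine ⟨_, hintegrable, ?_, hcost⟩
  filter_upwards [hh0, hhtop, hcond] with p hp0 hptop hp
  have hm0 : marginalDensity h p.1 ≠ 0 := fun h0 => hp0 (by rw [← hp, h0, zero_mul])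
  have hk0 : conditionalDensity h p.1 p.2 ≠ 0 := fun h0 => hp0 (by rw [← hp, h0, mul_zero])
  have hmtop : marginalDensity h p.1 ≠ ∞ := fun h0 => hptop.ne (by
    rw [← hp, h0, ENNReal.top_mul hk0])
  have hktop : conditionalDensity h p.1 p.2 ≠ ∞ := fun h0 => hptop.ne (by
    rw [← hp, h0, ENNReal.mul_top hm0])
  have hlog := le_log_of_densityRatio hk0 hktop (S p) p.2
  rw [← hp, ENNReal.toReal_mul, Real.log_mul (ENNReal.toReal_pos hm0 hmtop).ne'
    (ENNReal.toReal_pos hk0 hktop).ne']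
  linarith

theorem map_withDensity_of_measurePreserving {α β : Type*} [MeasurableSpace α] [MeasurableSpace β]
    {a : Measure α} {b : Measure β} {e : α ≃ᵐ β} (he : MeasurePreserving e a b) (h : α → ℝ≥0∞) :
    (a.withDensity h).map e = b.withDensity (h ∘ e.symm) := by
  ext s hs
  rw [e.map_apply, withDensity_apply _ (e.measurable hs), withDensity_apply _ hs,
    ← he.setLIntegral_comp_preimage_emb e.measurableEmbedding]
  simp

/-- The standard Gaussian law on `Fin n → ℝ`. -/
noncomputable abbrev piGaussian (n : ℕ) : Measure (Fin n → ℝ) :=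
  Measure.pi fun _ => gaussianReal 0 1

theorem memLp_of_map_eq_piGaussian {α : Type*} [MeasurableSpace α] {μ : Measure α} {n : ℕ}
    {T : α → Fin n → ℝ} (hT : Measurable T) (hTμ : μ.map T = piGaussian n) (i : Fin n) :
    MemLp (fun x => T x i) 2 μ := by
  have hL : MemLp (fun s : ℝ => s) 2 (gaussianReal 0 1) := memLp_id_gaussianReal 2
  rw [← (measurePreserving_eval (fun _ : Fin n => gaussianReal 0 1) i).map_eq, ← piGaussian, ← hTμ,
    Measure.map_map (measurable_pi_apply i) hT] at hL
  exact (memLp_map_measure_iff hL.aestronglyMeasurable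
    ((measurable_pi_apply i).comp hT).aemeasurable).1 hL

/-- Splitting off the first coordinate. -/
noncomputable def splitFirst (n : ℕ) : (Fin (n + 1) → ℝ) ≃ᵐ (Fin n → ℝ) × ℝ :=
  (MeasurableEquiv.piFinSuccAbove (fun _ => ℝ) 0).trans MeasurableEquiv.prodComm

theorem splitFirst_fst (n : ℕ) (x : Fin (n + 1) → ℝ) (i : Fin n) :
    (splitFirst n x).1 i = x i.succ := rfl

theorem splitFirst_snd (n : ℕ) (x : Fin (n + 1) → ℝ) : (splitFirst n x).2 = x 0 := rfl

theorem splitFirst_symm_zero (n : ℕ) (p : (Fin n → ℝ) × ℝ) : (splitFirst n).symm p 0 = p.2 := by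
  rw [← splitFirst_snd n ((splitFirst n).symm p), MeasurableEquiv.apply_symm_apply]

theorem splitFirst_symm_succ (n : ℕ) (p : (Fin n → ℝ) × ℝ) (i : Fin n) :
    (splitFirst n).symm p i.succ = p.1 i := by
  rw [← splitFirst_fst n ((splitFirst n).symm p), MeasurableEquiv.apply_symm_apply]

theorem measurePreserving_splitFirst (n : ℕ) (μ : Measure ℝ) [SigmaFinite μ] :
    MeasurePreserving (splitFirst n) (Measure.pi fun _ => μ) ((Measure.pi fun _ => μ).prod μ) :=
  Measure.measurePreserving_swap.comp
    (measurePreserving_piFinSuccAbove (fun _ : Fin (n + 1) => μ) 0)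

theorem exists_transport_piGaussian (n : ℕ) : ∀ {h : (Fin n → ℝ) → ℝ≥0∞}, Measurable h →
    ∫⁻ x, h x ∂piGaussian n = 1 →
    (∀ i, MemLp (fun x : Fin n → ℝ => x i) 2 ((piGaussian n).withDensity h)) →
    ∃ T : (Fin n → ℝ) → Fin n → ℝ, Measurable T ∧
      ((piGaussian n).withDensity h).map T = piGaussian n ∧
      ∃ c : (Fin n → ℝ) → ℝ, Integrable c ((piGaussian n).withDensity h) ∧
        (∀ᵐ x ∂(piGaussian n).withDensity h, c x ≤ Real.log (h x).toReal) ∧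
        ∫ x, ∑ i, (x i - T x i) ^ 2 ∂(piGaussian n).withDensity h ≤
          2 * ∫ x, c x ∂(piGaussian n).withDensity h := by
  induction n with
  | zero =>
    intro h hh hone _
    have hconst : h = fun _ => 1 := by
      ext x
      have hx : h = fun _ => h x := funext fun y => by rw [Subsingleton.elim y x]
      rw [hx] at hone
      simpa using hone
    subst hconst
    refine ⟨id, measurable_id, by simp, 0, integrable_zero _ _ _, by simp, by simp⟩
  | succ n ih =>
    intro h hh hone hmem
    set μ := (piGaussian (n + 1)).withDensity h with hμ
    set H := h ∘ (splitFirst n).symm with hH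
    have hHm : Measurable H := hh.comp (splitFirst n).symm.measurable
    have hsplit := measurePreserving_splitFirst n (gaussianReal 0 1)
    set M := ((piGaussian n).prod (gaussianReal 0 1)).withDensity H with hM
    have hε : MeasurePreserving (splitFirst n) μ M :=
      ⟨(splitFirst n).measurable, map_withDensity_of_measurePreserving hsplit h⟩
    have hHone : ∫⁻ p, H p ∂(piGaussian n).prod (gaussianReal 0 1) = 1 := by
      rw [← hsplit.lintegral_comp hHm, ← hone]
      simp [hH]
    have hHfin : ∫⁻ p, H p ∂(piGaussian n).prod (gaussianReal 0 1) ≠ ∞ := by simp [hHone]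
    have hfst : MeasurePreserving Prod.fst M ((piGaussian n).withDensity (marginalDensity H)) :=
      ⟨measurable_fst, map_fst_withDensity_prod hHm hHfin⟩
    have hmarg := hfst.comp hε
    have hmem₁ : ∀ i, MemLp (fun y : Fin n → ℝ => y i) 2
        ((piGaussian n).withDensity (marginalDensity H)) := fun i => by
      rw [← hmarg.map_eq, memLp_map_measure_iff (measurable_pi_apply i).aestronglyMeasurable
        hmarg.measurable.aemeasurable]
      exact hmem i.succ
    obtain ⟨T₁, hT₁, hT₁map, c₁, hc₁, hc₁le, hc₁int⟩ := ih (measurable_marginalDensity hHm)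
      ((lintegral_marginalDensity hHm).trans hHone) hmem₁
    have hsnd : MemLp (fun p : (Fin n → ℝ) × ℝ => p.2) 2 M := by
      rw [← hε.map_eq, memLp_map_measure_iff (by fun_prop) hε.measurable.aemeasurable]
      exact hmem 0
    obtain ⟨c₂, hc₂, hc₂le, hc₂int⟩ :=
      exists_conditional_entropy_minorant hHm hHone hsnd hT₁ hT₁map
    have hTS : Measurable fun p : (Fin n → ℝ) × ℝ => (T₁ p.1, conditionalRearrangement H p) :=
      (hT₁.comp measurable_fst).prodMk (measurable_conditionalRearrangement hHm)
    have hS2 := (memLp_conditionalRearrangement hHm hHfin hT₁ hT₁map).1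
    have hTm : Measurable fun x => (splitFirst n).symm
        (T₁ (splitFirst n x).1, conditionalRearrangement H (splitFirst n x)) :=
      (splitFirst n).symm.measurable.comp (hTS.comp (splitFirst n).measurable)
    refine ⟨fun x => (splitFirst n).symm
      (T₁ (splitFirst n x).1, conditionalRearrangement H (splitFirst n x)), hTm, ?_,
      fun x => c₁ (splitFirst n x).1 + c₂ (splitFirst n x), ?_, ?_, ?_⟩
    · have hTSp : MeasurePreserving
          (fun p : (Fin n → ℝ) × ℝ => (T₁ p.1, conditionalRearrangement H p)) M
          ((piGaussian n).prod (gaussianReal 0 1)) :=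
        ⟨hTS, map_conditionalRearrangement hHm hHfin hT₁ hT₁map⟩
      exact ((hsplit.symm _).comp (hTSp.comp hε)).map_eq
    · exact (hmarg.integrable_comp_of_integrable hc₁).add (hε.integrable_comp_of_integrable hc₂)
    · filter_upwards [hmarg.quasiMeasurePreserving.ae hc₁le, hε.quasiMeasurePreserving.ae hc₂le]
        with x hx₁ hx₂
      have hHx : H (splitFirst n x) = h x := by simp [hH]
      rw [hHx] at hx₂
      simp only [Function.comp_apply] at hx₁
      linarith
    · have hi₁ : Integrable (fun y => ∑ i, (y i - T₁ y i) ^ 2)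
          ((piGaussian n).withDensity (marginalDensity H)) :=
        integrable_finsetSum _ fun i _ =>
          ((hmem₁ i).sub (memLp_of_map_eq_piGaussian hT₁ hT₁map i)).integrable_sq
      have hi₂ : Integrable (fun p => (p.2 - conditionalRearrangement H p) ^ 2) M :=
        (hsnd.sub hS2).integrable_sq
      have hcomp₁ : ∀ f : (Fin n → ℝ) → ℝ,
          Integrable f ((piGaussian n).withDensity (marginalDensity H)) →
          ∫ x, f (splitFirst n x).1 ∂μ =
            ∫ y, f y ∂(piGaussian n).withDensity (marginalDensity H) := fun f hf => by
        rw [← hmarg.map_eq] at hf ⊢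
        rw [integral_map hmarg.measurable.aemeasurable hf.aestronglyMeasurable]
        rfl
      have hcomp₂ : ∀ f : (Fin n → ℝ) × ℝ → ℝ, ∫ x, f (splitFirst n x) ∂μ = ∫ p, f p ∂M :=
        hε.integral_comp (splitFirst n).measurableEmbedding
      have hcost : ∀ x : Fin (n + 1) → ℝ, ∑ i, (x i - (splitFirst n).symm
          (T₁ (splitFirst n x).1, conditionalRearrangement H (splitFirst n x)) i) ^ 2 =
          ∑ i, ((splitFirst n x).1 i - T₁ (splitFirst n x).1 i) ^ 2 +
          ((splitFirst n x).2 - conditionalRearrangement H (splitFirst n x)) ^ 2 := fun x => by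
        rw [Fin.sum_univ_succ, splitFirst_symm_zero, add_comm]
        simp_rw [splitFirst_symm_succ]
        rfl
      simp_rw [hcost]
      have hcompi₁ : ∀ f : (Fin n → ℝ) → ℝ,
          Integrable f ((piGaussian n).withDensity (marginalDensity H)) →
          Integrable (fun x => f (splitFirst n x).1) μ := fun _ hf =>
        hmarg.integrable_comp_of_integrable hf
      have hcompi₂ : ∀ f : (Fin n → ℝ) × ℝ → ℝ, Integrable f M →
          Integrable (fun x => f (splitFirst n x)) μ := fun _ hf =>
        hε.integrable_comp_of_integrable hf
      have hleft : ∫ x, (∑ i, ((splitFirst n x).1 i - T₁ (splitFirst n x).1 i) ^ 2 +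
          ((splitFirst n x).2 - conditionalRearrangement H (splitFirst n x)) ^ 2) ∂μ =
          ∫ y, ∑ i, (y i - T₁ y i) ^ 2 ∂(piGaussian n).withDensity (marginalDensity H) +
          ∫ p, (p.2 - conditionalRearrangement H p) ^ 2 ∂M :=
        (integral_add (hcompi₁ _ hi₁) (hcompi₂ _ hi₂)).trans (congrArg₂ _
          (hcomp₁ _ hi₁) (hcomp₂ fun p => (p.2 - conditionalRearrangement H p) ^ 2))
      have hright : ∫ x, (c₁ (splitFirst n x).1 + c₂ (splitFirst n x)) ∂μ =
          ∫ y, c₁ y ∂(piGaussian n).withDensity (marginalDensity H) + ∫ p, c₂ p ∂M :=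
        (integral_add (hcompi₁ _ hc₁) (hcompi₂ _ hc₂)).trans (congrArg₂ _
          (hcomp₁ _ hc₁) (hcomp₂ c₂))
      rw [hleft, hright, mul_add]
      exact add_le_add hc₁int hc₂int

theorem piGaussian_eq_withDensity (n : ℕ) :
    piGaussian n = volume.withDensity fun x => ∏ i, gaussianPDF 0 1 (x i) := by
  induction n with
  | zero =>
    simp only [Finset.univ_eq_empty, Finset.prod_empty, volume_pi, withDensity_const, one_smul]
    exact (Measure.pi_of_empty _ default).trans (Measure.pi_of_empty _ default).symm
  | succ n ih =>
    refine (splitFirst n).map_measurableEquiv_injective ?_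
    have hvol : MeasurePreserving (splitFirst n) volume (volume.prod volume) :=
      measurePreserving_splitFirst n volume
    rw [(measurePreserving_splitFirst n (gaussianReal 0 1)).map_eq,
      map_withDensity_of_measurePreserving hvol]
    change (piGaussian n).prod _ = _
    rw [ih, gaussianReal_of_var_ne_zero 0 one_ne_zero,
      prod_withDensity (by fun_prop) (measurable_gaussianPDF 0 1)]
    congr 1
    ext p
    simp [Fin.prod_univ_succ, splitFirst_symm_zero, splitFirst_symm_succ, mul_comm]

theorem measurePreserving_stdGaussian (d : ℕ) :
    MeasurePreserving (MeasurableEquiv.toLp 2 (Fin d → ℝ)).symm (_root_.stdGaussian d)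
      (piGaussian d) := by
  refine ⟨MeasurableEquiv.measurable _, ?_⟩
  rw [_root_.stdGaussian, map_withDensity_of_measurePreserving
    (EuclideanSpace.volume_preserving_symm_measurableEquiv_toLp (Fin d)),
    piGaussian_eq_withDensity]
  congr 1
  ext x
  have hconst : (2 * Real.pi) ^ (-(d : ℝ) / 2) = ((√(2 * Real.pi))⁻¹) ^ d := by
    rw [Real.sqrt_eq_rpow, ← Real.rpow_neg (by positivity), ← Real.rpow_natCast,
      ← Real.rpow_mul (by positivity)]
    congr 1
    ring
  simp only [gaussianPDF, Function.comp_apply]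
  rw [← ENNReal.ofReal_prod_of_nonneg fun i _ => gaussianPDFReal_nonneg 0 1 (x i)]
  simp only [gaussianPDFReal_zero_one]
  rw [Finset.prod_mul_distrib, ← Real.exp_sum, Finset.prod_const, Finset.card_univ,
    Fintype.card_fin, hconst, EuclideanSpace.real_norm_sq_eq, ← Finset.sum_div,
    ← Finset.sum_neg_distrib]
  rfl

theorem memLp_coord_of_integrable_norm_sq {d : ℕ} {ν : Measure (EuclideanSpace ℝ (Fin d))}
    (hν : Integrable (fun x => ‖x‖ ^ 2) ν) (i : Fin d) : MemLp (fun x => x i) 2 ν := by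
  have hm : Measurable fun x : EuclideanSpace ℝ (Fin d) => x i := by fun_prop
  refine (memLp_two_iff_integrable_sq hm.aestronglyMeasurable).2
    (hν.mono' (hm.pow_const 2).aestronglyMeasurable (Eventually.of_forall fun x => ?_))
  rw [norm_pow]
  exact pow_le_pow_left₀ (norm_nonneg _) (PiLp.norm_apply_le x i) 2

theorem W2sq_le_lintegral_of_map_eq {E : Type*} [MeasurableSpace E] [NormedAddCommGroup E]
    [BorelSpace E] [SecondCountableTopology E] {μ ν : Measure E} {T : E → E} (hT : Measurable T)
    (hTν : μ.map T = ν) : W2sq μ ν ≤ ∫⁻ x, (‖x - T x‖₊ : ℝ≥0∞) ^ 2 ∂μ := by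
  have hpair : Measurable fun x => (x, T x) := measurable_id.prodMk hT
  have hcoupling : IsCoupling (μ.map fun x => (x, T x)) μ ν := by
    refine ⟨?_, ?_⟩
    · rw [Measure.map_map measurable_fst hpair]
      exact Measure.map_id
    · rw [Measure.map_map measurable_snd hpair]
      exact hTν
  unfold W2sq
  refine (iInf₂_le (μ.map fun x => (x, T x)) hcoupling).trans_eq ?_
  rw [lintegral_map (by fun_prop) hpair]

theorem W2sq_le_of_absolutelyContinuous {d : ℕ} {ν : Measure (EuclideanSpace ℝ (Fin d))}
    [IsProbabilityMeasure ν] (hν2 : Integrable (fun x => ‖x‖ ^ 2) ν)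
    (hac : ν ≪ _root_.stdGaussian d)
    (hlog : Integrable (fun x => Real.log (ν.rnDeriv (_root_.stdGaussian d) x).toReal) ν) :
    W2sq ν (_root_.stdGaussian d) ≤
      ENNReal.ofReal (2 * ∫ x, Real.log (ν.rnDeriv (_root_.stdGaussian d) x).toReal ∂ν) := by
  have hγ := measurePreserving_stdGaussian d
  set e := (MeasurableEquiv.toLp 2 (Fin d → ℝ)).symm
  have hγprob : IsProbabilityMeasure (_root_.stdGaussian d) := by
    rw [← (hγ.symm e).map_eq]
    exact Measure.isProbabilityMeasure_map e.symm.measurable.aemeasurable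
  have := Measure.haveLebesgueDecomposition_of_sigmaFinite ν (_root_.stdGaussian d)
  set h := ν.rnDeriv (_root_.stdGaussian d)
  have hh : Measurable h := Measure.measurable_rnDeriv _ _
  have hνe : MeasurePreserving e ν ((piGaussian d).withDensity (h ∘ e.symm)) := by
    refine ⟨e.measurable, ?_⟩
    rw [← map_withDensity_of_measurePreserving hγ, Measure.withDensity_rnDeriv_eq _ _ hac]
  have hone : ∫⁻ y, (h ∘ e.symm) y ∂piGaussian d = 1 := by
    rw [← setLIntegral_univ, ← withDensity_apply _ MeasurableSet.univ,
      ← hνe.measure_preimage MeasurableSet.univ.nullMeasurableSet, preimage_univ, measure_univ]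
  have hmem : ∀ i, MemLp (fun y : Fin d → ℝ => y i) 2
      ((piGaussian d).withDensity (h ∘ e.symm)) := fun i => by
    rw [← hνe.map_eq, memLp_map_measure_iff (measurable_pi_apply i).aestronglyMeasurable
      e.measurable.aemeasurable]
    exact memLp_coord_of_integrable_norm_sq hν2 i
  obtain ⟨T, hT, hTmap, c, hc, hcle, hcost⟩ :=
    exists_transport_piGaussian d (hh.comp e.symm.measurable) hone hmem
  have hTmp : MeasurePreserving T ((piGaussian d).withDensity (h ∘ e.symm)) (piGaussian d) :=
    ⟨hT, hTmap⟩
  have hS := (hγ.symm e).comp (hTmp.comp hνe)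
  have hi : Integrable (fun y => ∑ i, (y i - T y i) ^ 2)
      ((piGaussian d).withDensity (h ∘ e.symm)) :=
    integrable_finsetSum _ fun i _ =>
      ((hmem i).sub (memLp_of_map_eq_piGaussian hT hTmap i)).integrable_sq
  have hlogint : ∫ y, Real.log ((h ∘ e.symm) y).toReal ∂(piGaussian d).withDensity (h ∘ e.symm) =
      ∫ x, Real.log (h x).toReal ∂ν := by
    rw [← hνe.integral_comp e.measurableEmbedding]
    simp
  have hlogi : Integrable (fun y => Real.log ((h ∘ e.symm) y).toReal)
      ((piGaussian d).withDensity (h ∘ e.symm)) := by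
    rw [← hνe.integrable_comp_emb e.measurableEmbedding]
    simpa [Function.comp_def] using hlog
  calc W2sq ν (_root_.stdGaussian d)
      ≤ ∫⁻ x, (‖x - e.symm (T (e x))‖₊ : ℝ≥0∞) ^ 2 ∂ν :=
        W2sq_le_lintegral_of_map_eq hS.measurable hS.map_eq
    _ = ∫⁻ x, ENNReal.ofReal (∑ i, (e x i - T (e x) i) ^ 2) ∂ν := by
        refine lintegral_congr fun x => ?_
        have hx : ‖x - e.symm (T (e x))‖ ^ 2 = ∑ i, (e x i - T (e x) i) ^ 2 :=
          EuclideanSpace.real_norm_sq_eq _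
        rw [← hx, ENNReal.ofReal_pow (norm_nonneg _), ofReal_norm]
        rfl
    _ = ∫⁻ y, ENNReal.ofReal (∑ i, (y i - T y i) ^ 2)
          ∂(piGaussian d).withDensity (h ∘ e.symm) :=
        hνe.lintegral_comp_emb e.measurableEmbedding
          fun y => ENNReal.ofReal (∑ i, (y i - T y i) ^ 2)
    _ = ENNReal.ofReal (∫ y, ∑ i, (y i - T y i) ^ 2
          ∂(piGaussian d).withDensity (h ∘ e.symm)) :=
        (ofReal_integral_eq_lintegral_ofReal hi
          (Eventually.of_forall fun y => Finset.sum_nonneg fun i _ => sq_nonneg _)).symm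
    _ ≤ ENNReal.ofReal (2 * ∫ x, Real.log (h x).toReal ∂ν) := by
        refine ENNReal.ofReal_le_ofReal (hcost.trans ?_)
        rw [← hlogint]
        exact mul_le_mul_of_nonneg_left (integral_mono_ae hc hlogi hcle) zero_le_two

end GaussianTransport

/-- **Talagrand's transport-entropy inequality** for the standard Gaussian measure `γ` on
`ℝ^d`: for every probability measure `ν` with finite second moment, `W₂(ν,γ)² ≤ 2 Ent_γ(ν)`. -/
theorem talagrand_gaussian (d : ℕ) (hd : 1 ≤ d)
    (ν : Measure (EuclideanSpace ℝ (Fin d))) [IsProbabilityMeasure ν]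
    (hν2 : Integrable (fun x => ‖x‖ ^ 2) ν) :
    W2sq ν (stdGaussian d) ≤ 2 * relEnt ν (stdGaussian d) := by
  unfold relEnt
  split_ifs with hν
  · refine (W2sq_le_of_absolutelyContinuous hν2 hν.1 hν.2).trans_eq ?_
    rw [ENNReal.ofReal_mul zero_le_two, ENNReal.ofReal_ofNat]
  · simp
end
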